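/- arXiv:1410.4887 — 3 statements merged into one kernel-verified Lean document; each statement's English description precedes it below -/
import Mathlib

section
/- Let (X,μ,S,T) be an ergodic measure preserving system with two commuting invertible measure-preserving transformations S and T. Then for any f1, f2, f3 ∈ L∞(μ), the averages (1/N²) Σ_{i=0}^{N-1} Σ_{j=0}^{N-1} f1(S^i x) · f2(T^j x) · f3(S^i T^j x) converge for μ-almost every x ∈ X as N → ∞. -/
open MeasureTheory Filter

namespace CubicAvg

/-- Average of the first `N` terms of a sequence. -/
noncomputable def avg (N : ℕ) (φ : ℕ → ℝ) : ℝ := (N : ℝ)⁻¹ * ∑ i ∈ Finset.range N, φ i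

/-- Maximal function of the Birkhoff sums, defined recursively. -/
noncomputable def maxB {X : Type*} (T : X → X) (g : X → ℝ) : ℕ → X → ℝ
  | 0 => g
  | n + 1 => fun x => g x + max 0 (maxB T g n (T x))

lemma sum_le_maxB {X : Type*} (T : X → X) (g : X → ℝ) (n : ℕ) :
    ∀ k ≤ n, ∀ x, ∑ i ∈ Finset.range (k + 1), g (T^[i] x) ≤ maxB T g n x := by
  induction n with
  | zero => intro k hk x; obtain rfl : k = 0 := by omega
            simp [maxB]
  | succ n ih =>
    intro k hk x
    rw [Finset.sum_range_succ']
    simp only [Function.iterate_succ_apply, Function.iterate_zero, id, maxB]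
    rcases k with _ | k
    · simp
    · have := ih k (by omega) (T x)
      have h2 := le_max_right 0 (maxB T g n (T x))
      linarith

lemma maxB_mono_succ {X : Type*} (T : X → X) (g : X → ℝ) (n : ℕ) :
    ∀ x, maxB T g n x ≤ maxB T g (n + 1) x := by
  induction n with
  | zero => intro x; simp [maxB]
  | succ n ih =>
    intro x
    have := ih (T x)
    have h2 := max_le_max_left 0 this
    simp only [maxB] at h2 ⊢
    linarith

lemma measurable_maxB {X : Type*} [MeasurableSpace X] {T : X → X} (hT : Measurable T)
    {g : X → ℝ} (hg : Measurable g) (n : ℕ) : Measurable (maxB T g n) := by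
  induction n with
  | zero => exact hg
  | succ n ih => exact hg.add (measurable_const.max (ih.comp hT))

lemma integrable_maxB {X : Type*} [MeasurableSpace X] {μ : Measure X} [IsProbabilityMeasure μ]
    {T : X → X} (hT : MeasurePreserving T μ μ)
    {g : X → ℝ} (hgi : Integrable g μ) (n : ℕ) : Integrable (maxB T g n) μ := by
  induction n with
  | zero => exact hgi
  | succ n ih =>
    exact hgi.add ((integrable_zero _ _ _).sup (hT.integrable_comp_of_integrable ih))

/-- The core of the maximal ergodic theorem. -/
lemma maximal_core {X : Type*} [MeasurableSpace X] (μ : Measure X) [IsProbabilityMeasure μ]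
    (T : X → X) (hT : MeasurePreserving T μ μ) (g : X → ℝ) (hg : Measurable g)
    (hgi : Integrable g μ) {A : Set X}
    (hA : MeasurableSet[MeasurableSpace.invariants T] A)
    (hAt : ∀ x ∈ A, Tendsto (fun n => maxB T g n x) atTop atTop) :
    0 ≤ ∫ x in A, g x ∂μ := by
  have hAm : MeasurableSet A := hA.1
  have hmi := integrable_maxB hT hgi
  have hlim : Tendsto (fun n => ∫ x in A, (maxB T g (n + 1) x - maxB T g n (T x)) ∂μ) atTop
      (nhds (∫ x in A, g x ∂μ)) := by
    refine tendsto_integral_of_dominated_convergence (fun x => |g x| + |g x| + |g (T x)|) ?_ ?_ ?_ ?_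
    · intro n
      exact ((measurable_maxB hT.measurable hg (n+1)).sub
        ((measurable_maxB hT.measurable hg n).comp hT.measurable)).aestronglyMeasurable
    · exact ((hgi.abs.add hgi.abs).add
        (hT.integrable_comp_of_integrable hgi).abs).integrableOn
    · intro n
      refine Eventually.of_forall fun x => ?_
      have h1 : g (T x) ≤ maxB T g n (T x) := by
        simpa using sum_le_maxB T g n 0 (by omega) (T x)
      have h0 : -|g (T x)| ≤ g (T x) := neg_abs_le _
      rw [Real.norm_eq_abs]
      simp only [maxB]
      have hgx := abs_nonneg (g x)
      have hg1 := le_abs_self (g x)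
      have hg2 := neg_abs_le (g x)
      have hgT := abs_nonneg (g (T x))
      rcases max_cases 0 (maxB T g n (T x)) with ⟨h, h'⟩ | ⟨h, h'⟩ <;> rw [h, abs_le] <;>
        constructor <;> linarith
    · refine (ae_restrict_iff' hAm).2 (Eventually.of_forall fun x hx => ?_)
      have hTx : T x ∈ A := by
        have := hA.2
        rw [← this] at hx; exact hx
      refine tendsto_const_nhds.congr' ?_
      filter_upwards [(hAt _ hTx).eventually_ge_atTop 0] with n hn
      simp [maxB, max_eq_right hn]
  refine ge_of_tendsto' hlim fun n => ?_
  have hTi : Integrable (fun x => maxB T g n (T x)) μ := hT.integrable_comp_of_integrable (hmi n)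
  rw [integral_sub (hmi _).integrableOn hTi.integrableOn]
  have : ∫ x in A, maxB T g n (T x) ∂μ = ∫ x in A, maxB T g n x ∂μ := by
    rw [← integral_indicator hAm, ← integral_indicator hAm]
    have e : (A.indicator fun x => maxB T g n (T x)) = fun x => A.indicator (maxB T g n) (T x) := by
      funext x
      have hx : T x ∈ A ↔ x ∈ A := by
        conv_rhs => rw [← hA.2]
        rfl
      by_cases h : x ∈ A
      · simp [h, hx]
      · simp [h, hx]
    rw [e]
    have := hT.map_eq
    conv_rhs => rw [← this]
    rw [integral_map hT.measurable.aemeasurable]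
    rw [this]
    exact ((measurable_maxB hT.measurable hg n).indicator hAm).aestronglyMeasurable
  rw [this, ← integral_sub (hmi _).integrableOn (hmi n).integrableOn]
  exact integral_nonneg fun x => sub_nonneg.2 (maxB_mono_succ T g n x)

lemma birkhoff_upper {X : Type*} [mX : MeasurableSpace X] (μ : Measure X) [IsProbabilityMeasure μ]
    (T : X → X) (hT : MeasurePreserving T μ μ) (g : X → ℝ) (hg : Measurable g)
    (hgi : Integrable g μ) (ε : ℝ) (hε : 0 < ε) :
    ∀ᵐ x ∂μ, ∀ᶠ N in atTop, avg N (fun i => g (T^[i] x)) ≤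
      (μ[g | MeasurableSpace.invariants T]) x + 2 * ε := by
  have hmle : MeasurableSpace.invariants T ≤ mX := MeasurableSpace.invariants_le T
  set e := μ[g | MeasurableSpace.invariants T] with he
  have hesm : StronglyMeasurable[MeasurableSpace.invariants T] e := stronglyMeasurable_condExp
  have hei : Integrable e μ := integrable_condExp
  have heT : e ∘ T = e := MeasurableSpace.comp_eq_of_measurable_invariants hesm.measurable
  have heTi : ∀ i x, e (T^[i] x) = e x := by
    intro i
    induction i with
    | zero => intro x; rfl
    | succ i ih => intro x; rw [Function.iterate_succ_apply, ih]; exact congrFun heT x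
  set g' : X → ℝ := fun x => g x - e x - ε with hg'
  have hg'm : Measurable g' := (hg.sub (hesm.measurable.mono hmle le_rfl)).sub_const ε
  have hg'i : Integrable g' μ := (hgi.sub hei).sub (integrable_const ε)
  set A : Set X := {x | ∀ K : ℕ, ∃ n, (K : ℝ) < maxB T g' n x} with hAdef
  have hmono : ∀ x, Monotone (fun n => maxB T g' n x) := fun x =>
    monotone_nat_of_le_succ fun n => maxB_mono_succ T g' n x
  have hAt : ∀ x ∈ A, Tendsto (fun n => maxB T g' n x) atTop atTop := by
    intro x hx
    refine tendsto_atTop_atTop_of_monotone (hmono x) fun b => ?_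
    obtain ⟨K, hK⟩ := exists_nat_ge b
    obtain ⟨n, hn⟩ := hx K
    exact ⟨n, by linarith⟩
  have hAm : MeasurableSet A := by
    have : A = ⋂ K : ℕ, ⋃ n : ℕ, {x | (K : ℝ) < maxB T g' n x} := by
      ext x; simp [hAdef]
    rw [this]
    exact MeasurableSet.iInter fun K => MeasurableSet.iUnion fun n =>
      measurableSet_lt measurable_const (measurable_maxB hT.measurable hg'm n)
  have hAinv : T ⁻¹' A = A := by
    ext x
    simp only [hAdef, Set.mem_preimage, Set.mem_ofPred_eq]
    constructor
    · intro h K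
      obtain ⟨L, hL⟩ := exists_nat_ge ((K : ℝ) - g' x)
      obtain ⟨n, hn⟩ := h L
      refine ⟨n + 1, ?_⟩
      simp only [maxB]
      have := le_max_right 0 (maxB T g' n (T x))
      linarith
    · intro h K
      obtain ⟨L, hL⟩ := exists_nat_ge ((K : ℝ) + |g' x|)
      obtain ⟨n, hn⟩ := h L
      refine ⟨n, ?_⟩
      have h1 : maxB T g' n x ≤ maxB T g' (n+1) x := maxB_mono_succ T g' n x
      simp only [maxB] at h1
      have h2 := le_abs_self (g' x)
      have hK : (0:ℝ) ≤ K := Nat.cast_nonneg K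
      rcases max_cases 0 (maxB T g' n (T x)) with ⟨h, h'⟩ | ⟨h, h'⟩
      · linarith
      · linarith
  have hA : MeasurableSet[MeasurableSpace.invariants T] A := ⟨hAm, hAinv⟩
  have h0 := maximal_core μ T hT g' hg'm hg'i hA hAt
  have h1 : ∫ x in A, g' x ∂μ = - ε * μ.real A := by
    have : ∫ x in A, g' x ∂μ = ∫ x in A, g x ∂μ - ∫ x in A, e x ∂μ - ∫ x in A, ε ∂μ := by
      rw [← integral_sub hgi.integrableOn hei.integrableOn]
      exact integral_sub (hgi.sub hei).integrableOn (integrable_const ε)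
    rw [this, setIntegral_condExp hmle hgi hA, setIntegral_const]
    simp; ring
  have hA0 : μ A = 0 := by
    have : μ.real A = 0 := by
      have := measureReal_nonneg (μ := μ) (s := A)
      nlinarith
    simpa [measureReal_eq_zero_iff] using this
  have : ∀ᵐ x ∂μ, x ∉ A := measure_eq_zero_iff_ae_notMem.1 hA0
  filter_upwards [this] with x hx
  simp only [hAdef, Set.mem_ofPred_eq, not_forall, not_exists, not_lt] at hx
  obtain ⟨K, hK⟩ := hx
  obtain ⟨N0, hN0⟩ := exists_nat_ge ((K : ℝ) / ε)
  filter_upwards [eventually_ge_atTop (N0 + 1)] with N hN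
  obtain ⟨k, rfl⟩ : ∃ k, N = k + 1 := ⟨N - 1, by omega⟩
  have hs := (sum_le_maxB T g' k k le_rfl x).trans (hK k)
  have hsum : ∑ i ∈ Finset.range (k+1), g' (T^[i] x)
      = ∑ i ∈ Finset.range (k+1), g (T^[i] x) - (k+1 : ℕ) * (e x + ε) := by
    simp only [hg', heTi, sub_sub]
    rw [Finset.sum_sub_distrib]
    simp
    ring
  have hpos : (0 : ℝ) < ((k + 1 : ℕ) : ℝ) := by positivity
  have hKε : (K : ℝ) ≤ (k + 1 : ℕ) * ε := by
    have : (K : ℝ) / ε ≤ (k+1 : ℕ) := hN0.trans (by exact_mod_cast (by omega))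
    rwa [div_le_iff₀ hε] at this
  unfold avg
  rw [inv_mul_le_iff₀ hpos]
  nlinarith

/-- Birkhoff's pointwise ergodic theorem. -/
theorem birkhoff {X : Type*} [MeasurableSpace X] (μ : Measure X) [IsProbabilityMeasure μ]
    (T : X → X) (hT : MeasurePreserving T μ μ) (g : X → ℝ) (hg : Measurable g)
    (hgi : Integrable g μ) :
    ∀ᵐ x ∂μ, Tendsto (fun N => avg N (fun i => g (T^[i] x))) atTop
      (nhds ((μ[g | MeasurableSpace.invariants T]) x)) := by
  have hU : ∀ᵐ x ∂μ, ∀ n : ℕ, ∀ᶠ N in atTop, avg N (fun i => g (T^[i] x)) ≤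
      (μ[g | MeasurableSpace.invariants T]) x + 2 * (1 / ((n : ℝ) + 1)) :=
    ae_all_iff.2 fun n => birkhoff_upper μ T hT g hg hgi _ Nat.one_div_pos_of_nat
  have hL : ∀ᵐ x ∂μ, ∀ n : ℕ, ∀ᶠ N in atTop, avg N (fun i => (-g) (T^[i] x)) ≤
      (μ[-g | MeasurableSpace.invariants T]) x + 2 * (1 / ((n : ℝ) + 1)) :=
    ae_all_iff.2 fun n => birkhoff_upper μ T hT (-g) hg.neg hgi.neg _ Nat.one_div_pos_of_nat
  filter_upwards [hU, hL, condExp_neg (μ := μ) g (MeasurableSpace.invariants T)] with x h1 h2 h3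
  rw [Metric.tendsto_nhds]
  intro ε hε
  obtain ⟨n, hn⟩ := exists_nat_one_div_lt (show 0 < ε / 2 by positivity)
  filter_upwards [h1 n, h2 n] with N hN1 hN2
  rw [h3] at hN2
  have : avg N (fun i => (-g) (T^[i] x)) = - avg N (fun i => g (T^[i] x)) := by
    simp [avg]
  rw [this] at hN2
  simp only [Pi.neg_apply] at hN2
  rw [Real.dist_eq, abs_lt]
  constructor <;> linarith

end CubicAvg

namespace CubicAvg

section avgLemmas

lemma avg_add (N : ℕ) (φ ψ : ℕ → ℝ) : avg N (fun i => φ i + ψ i) = avg N φ + avg N ψ := by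
  simp only [avg, Finset.sum_add_distrib, mul_add]

lemma avg_sub (N : ℕ) (φ ψ : ℕ → ℝ) : avg N (fun i => φ i - ψ i) = avg N φ - avg N ψ := by
  simp only [avg, Finset.sum_sub_distrib, mul_sub]

lemma avg_const_mul (N : ℕ) (c : ℝ) (φ : ℕ → ℝ) : avg N (fun i => c * φ i) = c * avg N φ := by
  simp only [avg, ← Finset.mul_sum]; ring

lemma avg_mul_const (N : ℕ) (c : ℝ) (φ : ℕ → ℝ) : avg N (fun i => φ i * c) = avg N φ * c := by
  simp only [avg, ← Finset.sum_mul]; ring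

lemma avg_mono {N : ℕ} {φ ψ : ℕ → ℝ} (h : ∀ i, φ i ≤ ψ i) : avg N φ ≤ avg N ψ := by
  unfold avg
  exact mul_le_mul_of_nonneg_left (Finset.sum_le_sum fun i _ => h i) (by positivity)

lemma avg_nonneg {N : ℕ} {φ : ℕ → ℝ} (h : ∀ i, 0 ≤ φ i) : 0 ≤ avg N φ := by
  unfold avg
  exact mul_nonneg (by positivity) (Finset.sum_nonneg fun i _ => h i)

lemma abs_avg_le (N : ℕ) (φ : ℕ → ℝ) : |avg N φ| ≤ avg N (fun i => |φ i|) := by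
  unfold avg
  rw [abs_mul, abs_of_nonneg (by positivity : (0:ℝ) ≤ (N:ℝ)⁻¹)]
  exact mul_le_mul_of_nonneg_left (Finset.abs_sum_le_sum_abs _ _) (by positivity)

lemma avg_const {N : ℕ} (hN : 0 < N) (c : ℝ) : avg N (fun _ => c) = c := by
  have : (N : ℝ) ≠ 0 := by positivity
  simp [avg]; field_simp

lemma avg_const_le (N : ℕ) {c : ℝ} (hc : 0 ≤ c) : avg N (fun _ => c) ≤ c := by
  rcases Nat.eq_zero_or_pos N with rfl | h
  · simpa [avg]
  · exact (avg_const h c).le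

lemma abs_avg_le_of_bound (N : ℕ) {C : ℝ} (hC : 0 ≤ C) {φ : ℕ → ℝ} (h : ∀ i, |φ i| ≤ C) :
    |avg N φ| ≤ C :=
  (abs_avg_le N φ).trans ((avg_mono h).trans (avg_const_le N hC))

lemma avg_comm (N M : ℕ) (φ : ℕ → ℕ → ℝ) :
    avg N (fun i => avg M (fun j => φ i j)) = avg M (fun j => avg N (fun i => φ i j)) := by
  simp only [avg, ← Finset.mul_sum]
  rw [Finset.sum_comm]
  ring

lemma sq_avg_le (N : ℕ) (φ : ℕ → ℝ) : (avg N φ) ^ 2 ≤ avg N (fun i => φ i ^ 2) := by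
  rcases Nat.eq_zero_or_pos N with rfl | h
  · simp [avg]
  · have hp : (0:ℝ) < N := by exact_mod_cast h
    have := sq_sum_le_card_mul_sum_sq (s := Finset.range N) (f := φ)
    simp only [Finset.card_range] at this
    unfold avg
    rw [mul_pow, inv_pow, inv_mul_le_iff₀ (by positivity)]
    calc _ ≤ _ := this
      _ = _ := by field_simp

lemma avg_shift (N h : ℕ) {C : ℝ} (hC : 0 ≤ C) {φ : ℕ → ℝ} (hφ : ∀ i, |φ i| ≤ C) :
    |avg N φ - avg N (fun i => φ (i + h))| ≤ 2 * h * C * (N : ℝ)⁻¹ := by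
  induction h with
  | zero => simp
  | succ h ih =>
    have : avg N (fun i => φ (i + h)) - avg N (fun i => φ (i + (h + 1)))
        = (N:ℝ)⁻¹ * (φ h - φ (N + h)) := by
      unfold avg
      rw [← mul_sub]
      congr 1
      have h1 := Finset.sum_range_succ (fun i => φ (i + h)) N
      have h2 := Finset.sum_range_succ' (fun i => φ (i + h)) N
      have h3 : ∀ i, φ (i + 1 + h) = φ (i + (h + 1)) := fun i => by congr 1; ring
      simp only [h3, zero_add] at h2
      linarith
    have h4 : |avg N (fun i => φ (i + h)) - avg N (fun i => φ (i + (h + 1)))|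
        ≤ (N:ℝ)⁻¹ * (2 * C) := by
      rw [this, abs_mul, abs_of_nonneg (by positivity : (0:ℝ) ≤ (N:ℝ)⁻¹)]
      refine mul_le_mul_of_nonneg_left ?_ (by positivity)
      have := abs_sub (φ h) (φ (N + h))
      linarith [hφ h, hφ (N + h)]
    have h5 := abs_add_le (avg N φ - avg N (fun i => φ (i + h)))
      (avg N (fun i => φ (i + h)) - avg N (fun i => φ (i + (h + 1))))
    rw [sub_add_sub_cancel] at h5
    push_cast
    linarith

lemma tendsto_avg (H : ℕ) {φ : ℕ → ℕ → ℝ} {ψ : ℕ → ℝ}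
    (h : ∀ i, Tendsto (fun N => φ N i) atTop (nhds (ψ i))) :
    Tendsto (fun N => avg H (φ N)) atTop (nhds (avg H ψ)) := by
  unfold avg
  exact (tendsto_finsetSum _ fun i _ => h i).const_mul _

lemma integral_avg {X : Type*} [MeasurableSpace X] {μ : Measure X} (H : ℕ) {φ : ℕ → X → ℝ}
    (h : ∀ i, Integrable (φ i) μ) :
    ∫ x, avg H (fun i => φ i x) ∂μ = avg H (fun i => ∫ x, φ i x ∂μ) := by
  unfold avg
  rw [integral_const_mul, integral_finsetSum _ fun i _ => h i]

lemma integrable_avg {X : Type*} [MeasurableSpace X] {μ : Measure X} (H : ℕ) {φ : ℕ → X → ℝ}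
    (h : ∀ i, Integrable (φ i) μ) :
    Integrable (fun x => avg H (fun i => φ i x)) μ := by
  unfold avg
  exact (integrable_finsetSum _ fun i _ => h i).const_mul _

lemma measurable_avg {X : Type*} [MeasurableSpace X] (H : ℕ) {φ : ℕ → X → ℝ}
    (h : ∀ i, Measurable (φ i)) :
    Measurable (fun x => avg H (fun i => φ i x)) := by
  unfold avg
  exact (Finset.measurable_fun_sum _ fun i _ => h i).const_mul _

/-- Finitary van der Corput type estimate. -/
lemma vdc (C : ℝ) (hC : 0 ≤ C) (a b : ℕ → ℝ) (F : ℕ → ℕ → ℝ) (ha : ∀ i, |a i| ≤ C)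
    (hb : ∀ i, |b i| ≤ C) (hF : ∀ i j, |F i j| ≤ C) (H N : ℕ) (hH : 0 < H) (δ : ℝ) (hδ : 0 < δ) :
    |avg N (fun i => avg N (fun j => a i * b j * F i j))| ≤
      2 * H * C ^ 3 * (N : ℝ)⁻¹ + (δ + C ^ 4 * avg H (fun h => avg H (fun h' =>
        avg N (fun i => |avg N (fun j => F (i + h) j * F (i + h') j)|))) / δ) := by
  set A := avg N (fun i => avg N (fun j => a i * b j * F i j)) with hA
  set A' := avg N (fun i => avg N (fun j => b j * avg H (fun h => a (i + h) * F (i + h) j))) with hA'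
  set R := avg H (fun h => avg H (fun h' =>
        avg N (fun i => |avg N (fun j => F (i + h) j * F (i + h') j)|))) with hR
  have hC3 : 0 ≤ C ^ 3 := by positivity
  have h1 : |A - A'| ≤ 2 * H * C ^ 3 * (N : ℝ)⁻¹ := by
    have e : A' = avg H (fun h => avg N (fun i => avg N (fun j => a (i + h) * b j * F (i + h) j))) := by
      rw [hA', avg_comm H N]
      congr 1; funext i
      rw [avg_comm H N]
      congr 1; funext j
      rw [← avg_const_mul]
      congr 1; funext h; ring
    have e2 : A - A' = avg H (fun h => A -
        avg N (fun i => avg N (fun j => a (i + h) * b j * F (i + h) j))) := by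
      rw [avg_sub, avg_const hH, e]
    rw [e2]
    unfold avg
    rw [abs_mul, abs_of_nonneg (by positivity : (0:ℝ) ≤ (H:ℝ)⁻¹),
      inv_mul_le_iff₀ (by positivity : (0:ℝ) < H)]
    refine (Finset.abs_sum_le_sum_abs _ _).trans ?_
    have : ∀ h ∈ Finset.range H, |A - avg N (fun i => avg N (fun j => a (i + h) * b j * F (i + h) j))|
        ≤ 2 * H * C ^ 3 * (N : ℝ)⁻¹ := by
      intro h hh
      have hb3 : ∀ i, |avg N (fun j => a i * b j * F i j)| ≤ C ^ 3 := fun i =>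
        abs_avg_le_of_bound N hC3 fun j => by
          rw [abs_mul, abs_mul]
          calc |a i| * |b j| * |F i j| ≤ C * C * C := by
                have := ha i; have := hb j; have := hF i j
                gcongr
            _ = C ^ 3 := by ring
      refine (avg_shift N h hC3 hb3).trans ?_
      have : (h : ℝ) ≤ H := by exact_mod_cast (Finset.mem_range.1 hh).le
      gcongr
    refine (Finset.sum_le_sum this).trans ?_
    simp
  have h2 : A' ^ 2 ≤ C ^ 4 * R := by
    have s1 : A' ^ 2 ≤ avg N (fun i => avg N (fun j => C ^ 2 * (avg H (fun h => a (i + h) * F (i + h) j)) ^ 2)) := by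
      refine (sq_avg_le _ _).trans (avg_mono fun i => (sq_avg_le _ _).trans (avg_mono fun j => ?_))
      rw [mul_pow]
      have : b j ^ 2 ≤ C ^ 2 := sq_le_sq' (by linarith [neg_abs_le (b j), hb j]) (by linarith [le_abs_self (b j), hb j])
      gcongr
    refine s1.trans ?_
    have s2 : ∀ i, avg N (fun j => C ^ 2 * (avg H (fun h => a (i + h) * F (i + h) j)) ^ 2)
        = C ^ 2 * avg H (fun h => avg H (fun h' => a (i + h) * a (i + h') *
            avg N (fun j => F (i + h) j * F (i + h') j))) := by
      intro i
      rw [avg_const_mul]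
      congr 1
      have : ∀ j, (avg H (fun h => a (i + h) * F (i + h) j)) ^ 2 =
          avg H (fun h => avg H (fun h' => a (i + h) * a (i + h') * (F (i + h) j * F (i + h') j))) := by
        intro j
        rw [sq, ← avg_mul_const]
        congr 1; funext h
        rw [← avg_const_mul]
        congr 1; funext h'; ring
      simp only [this]
      rw [avg_comm N H]
      congr 1; funext h
      rw [avg_comm N H]
      congr 1; funext h'
      rw [avg_const_mul]
    simp only [s2]
    have s3 : ∀ i, C ^ 2 * avg H (fun h => avg H (fun h' => a (i + h) * a (i + h') *
            avg N (fun j => F (i + h) j * F (i + h') j)))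
        ≤ C ^ 4 * avg H (fun h => avg H (fun h' => |avg N (fun j => F (i + h) j * F (i + h') j)|)) := by
      intro i
      have : C ^ 4 = C ^ 2 * C ^ 2 := by ring
      rw [this, mul_assoc]
      refine mul_le_mul_of_nonneg_left ?_ (by positivity)
      rw [← avg_const_mul]
      refine avg_mono fun h => ?_
      rw [← avg_const_mul]
      refine avg_mono fun h' => ?_
      refine (le_abs_self _).trans ?_
      rw [abs_mul, abs_mul]
      have := ha (i + h); have := ha (i + h')
      rw [sq]
      gcongr
    refine (avg_mono s3).trans (le_of_eq ?_)
    rw [avg_const_mul, hR, avg_comm N H]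
    congr 2; funext h
    rw [avg_comm N H]
  have hR0 : 0 ≤ C ^ 4 * R := (sq_nonneg _).trans h2
  have h3 : |A'| ≤ δ + C ^ 4 * R / δ := by
    have : |A'| ≤ δ + A' ^ 2 / δ := by
      rw [← sub_nonneg]
      have : δ + A' ^ 2 / δ - |A'| = ((δ - |A'|/2) ^ 2 + 3/4 * |A'| ^ 2) / δ := by
        field_simp
        rw [← sq_abs A']; ring
      rw [this]; positivity
    refine this.trans ?_
    gcongr
  have := abs_add_le (A - A') A'
  rw [sub_add_cancel] at this
  linarith

end avgLemmas

end CubicAvg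

namespace CubicAvg
open scoped ENNReal

lemma limsup_add_le' {ι : Type*} (f : Filter ι) (u v : ι → ℝ≥0∞) :
    limsup (u + v) f ≤ limsup u f + limsup v f := by
  refine ENNReal.le_of_forall_pos_le_add fun ε hε hlt => ?_
  obtain ⟨hu, hv⟩ := ENNReal.add_lt_top.1 hlt
  have hε2 : ((ε / 2 : NNReal) : ℝ≥0∞) ≠ 0 := by
    simpa using hε.ne'
  have h1 := eventually_lt_of_limsup_lt (ENNReal.lt_add_right hu.ne hε2)
  have h2 := eventually_lt_of_limsup_lt (ENNReal.lt_add_right hv.ne hε2)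
  refine limsup_le_of_le (by isBoundedDefault) ?_
  filter_upwards [h1, h2] with x hx1 hx2
  calc (u + v) x ≤ (limsup u f + (ε / 2 : NNReal)) + (limsup v f + (ε / 2 : NNReal)) :=
        add_le_add hx1.le hx2.le
    _ = limsup u f + limsup v f + ((ε / 2 + ε / 2 : NNReal) : ℝ≥0∞) := by push_cast; ring
    _ = _ := by rw [add_halves]

/-- Oscillation of a sequence at infinity. -/
noncomputable def osc (a : ℕ → ℝ) : ℝ≥0∞ :=
  limsup (fun p : ℕ × ℕ => ‖a p.1 - a p.2‖ₑ) atTop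

/-- Size of a sequence at infinity. -/
noncomputable def lsup (a : ℕ → ℝ) : ℝ≥0∞ := limsup (fun N => ‖a N‖ₑ) atTop

lemma tendsto_of_osc {a : ℕ → ℝ} (h : osc a = 0) : ∃ L, Tendsto a atTop (nhds L) := by
  refine cauchySeq_tendsto_of_complete ?_
  rw [Metric.cauchySeq_iff]
  intro ε hε
  have h1 : ∀ᶠ p : ℕ × ℕ in atTop, ‖a p.1 - a p.2‖ₑ < ENNReal.ofReal ε :=
    eventually_lt_of_limsup_lt (by unfold osc at h; rw [h]; simpa using hε)
  rw [eventually_atTop] at h1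
  obtain ⟨⟨n, m⟩, h2⟩ := h1
  refine ⟨max n m, fun p hp q hq => ?_⟩
  have := h2 (p, q) ⟨(le_max_left n m).trans hp, (le_max_right n m).trans hq⟩
  rw [← ofReal_norm, ENNReal.ofReal_lt_ofReal_iff hε] at this
  rw [dist_eq_norm]; exact this

lemma osc_add_le (a b : ℕ → ℝ) : osc (fun N => a N + b N) ≤ osc a + osc b := by
  unfold osc
  refine le_trans (limsup_le_limsup (Eventually.of_forall fun p => ?_)) (limsup_add_le' _ _ _)
  simp only [Pi.add_apply]
  calc _ = ‖(a p.1 - a p.2) + (b p.1 - b p.2)‖ₑ := by congr 1; ring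
    _ ≤ _ := enorm_add_le _ _

lemma osc_le_lsup (a : ℕ → ℝ) : osc a ≤ lsup a + lsup a := by
  have h1 : limsup (fun p : ℕ × ℕ => ‖a p.1‖ₑ) atTop ≤ lsup a := by
    unfold lsup
    rw [← prod_atTop_atTop_eq]
    have : (fun p : ℕ × ℕ => ‖a p.1‖ₑ) = (fun N => ‖a N‖ₑ) ∘ Prod.fst := rfl
    rw [this, limsup_comp]
    exact limsup_le_limsup_of_le tendsto_fst
  have h2 : limsup (fun p : ℕ × ℕ => ‖a p.2‖ₑ) atTop ≤ lsup a := by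
    unfold lsup
    rw [← prod_atTop_atTop_eq]
    have : (fun p : ℕ × ℕ => ‖a p.2‖ₑ) = (fun N => ‖a N‖ₑ) ∘ Prod.snd := rfl
    rw [this, limsup_comp]
    exact limsup_le_limsup_of_le tendsto_snd
  unfold osc
  refine le_trans (limsup_le_limsup (Eventually.of_forall fun p => ?_))
    ((limsup_add_le' _ _ _).trans (add_le_add h1 h2))
  exact enorm_sub_le

lemma osc_of_tendsto {a : ℕ → ℝ} {L : ℝ} (h : Tendsto a atTop (nhds L)) : osc a = 0 := by
  unfold osc
  refine Tendsto.limsup_eq ?_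
  have h1 : Tendsto (fun p : ℕ × ℕ => a p.1 - a p.2) atTop (nhds (L - L)) := by
    rw [← prod_atTop_atTop_eq]
    exact (h.comp tendsto_fst).sub (h.comp tendsto_snd)
  rw [sub_self] at h1
  simpa using h1.enorm

lemma lsup_le_of_tendsto {a b : ℕ → ℝ} {L : ℝ} (h : ∀ N, |a N| ≤ b N)
    (hb : Tendsto b atTop (nhds L)) : lsup a ≤ ENNReal.ofReal L := by
  unfold lsup
  have h1 : Tendsto (fun N => ENNReal.ofReal (b N)) atTop (nhds (ENNReal.ofReal L)) :=
    ENNReal.tendsto_ofReal hb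
  rw [← h1.limsup_eq]
  refine limsup_le_limsup (Eventually.of_forall fun N => ?_)
  simp only
  rw [← ofReal_norm]
  exact ENNReal.ofReal_le_ofReal (h N)

lemma tendsto_zero_of_lsup {a : ℕ → ℝ} (h : lsup a = 0) : Tendsto a atTop (nhds 0) := by
  rw [tendsto_zero_iff_enorm_tendsto_zero]
  exact tendsto_of_le_liminf_of_limsup_le (by simp) h.le

variable {X : Type*} [mX : MeasurableSpace X]

lemma measurable_lsup {a : ℕ → X → ℝ} (h : ∀ N, Measurable (a N)) :
    Measurable (fun x => lsup (fun N => a N x)) := by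
  unfold lsup
  exact Measurable.limsup fun N => (h N).enorm

lemma measurable_osc {a : ℕ → X → ℝ} (h : ∀ N, Measurable (a N)) :
    Measurable (fun x => osc (fun N => a N x)) := by
  unfold osc
  refine Measurable.limsup' (f := fun (p : ℕ × ℕ) x => ‖a p.1 x - a p.2 x‖ₑ)
    (fun p => ((h p.1).sub (h p.2)).enorm) (atTop_countable_basis (α := ℕ × ℕ)) ?_
  intro i; exact Set.to_countable _

lemma ae_tendsto_of_lintegral_osc {μ : Measure X} {a : ℕ → X → ℝ} (h : ∀ N, Measurable (a N))
    (ho : ∀ ρ : ℝ, 0 < ρ → ∫⁻ x, osc (fun N => a N x) ∂μ ≤ ENNReal.ofReal ρ) :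
    ∀ᵐ x ∂μ, ∃ L, Tendsto (fun N => a N x) atTop (nhds L) := by
  have h0 : ∫⁻ x, osc (fun N => a N x) ∂μ = 0 := by
    refine le_antisymm (ENNReal.le_of_forall_pos_le_add fun ε hε _ => ?_) bot_le
    have := ho ε hε
    simpa using this
  rw [lintegral_eq_zero_iff (measurable_osc h)] at h0
  filter_upwards [h0] with x hx
  exact tendsto_of_osc hx

lemma lintegral_osc_le {μ : Measure X} {a a' : ℕ → X → ℝ}
    (h : ∀ N, Measurable (a N)) (h' : ∀ N, Measurable (a' N))
    (hc : ∀ᵐ x ∂μ, ∃ L, Tendsto (fun N => a' N x) atTop (nhds L)) {ρ : ℝ}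
    (hρ : ∫⁻ x, lsup (fun N => a N x - a' N x) ∂μ ≤ ENNReal.ofReal ρ) :
    ∫⁻ x, osc (fun N => a N x) ∂μ ≤ 2 * ENNReal.ofReal ρ := by
  have hm : Measurable (fun x => lsup (fun N => a N x - a' N x)) :=
    measurable_lsup fun N => (h N).sub (h' N)
  calc ∫⁻ x, osc (fun N => a N x) ∂μ
      ≤ ∫⁻ x, 2 * lsup (fun N => a N x - a' N x) ∂μ := by
        refine lintegral_mono_ae ?_
        filter_upwards [hc] with x hx
        obtain ⟨L, hL⟩ := hx
        have h1 := osc_add_le (fun N => a N x - a' N x) (fun N => a' N x)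
        simp only [sub_add_cancel] at h1
        rw [osc_of_tendsto hL, add_zero] at h1
        rw [two_mul]
        exact h1.trans (osc_le_lsup _)
    _ = 2 * ∫⁻ x, lsup (fun N => a N x - a' N x) ∂μ := lintegral_const_mul _ hm
    _ ≤ _ := by gcongr

/-- Bounded measurable functions are integrable. -/
lemma integrable_bdd {μ : Measure X} [IsFiniteMeasure μ] {g : X → ℝ} (hg : Measurable g) {C : ℝ}
    (hb : ∀ x, |g x| ≤ C) : Integrable g μ :=
  Integrable.of_bound hg.aestronglyMeasurable C (Eventually.of_forall hb)

lemma maker_aux (μ : Measure X) [IsProbabilityMeasure μ] (S : X → X)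
    (hS : MeasurePreserving S μ μ) (g : ℕ → X → ℝ) (G : X → ℝ) (hg : ∀ n, Measurable (g n))
    (hG : Measurable G) (C : ℝ) (hgC : ∀ n x, |g n x| ≤ C) (hGC : ∀ x, |G x| ≤ C)
    (hlim : ∀ᵐ x ∂μ, Tendsto (fun n => g n x) atTop (nhds (G x))) :
    ∀ᵐ x ∂μ, Tendsto (fun N => avg N (fun i => g N (S^[i] x))) atTop
      (nhds ((μ[G | MeasurableSpace.invariants S]) x)) := by
  have hSi : ∀ i, Measurable (S^[i]) := fun i => hS.measurable.iterate i
  set D : ℕ → X → ℝ := fun n x => ⨆ m : ℕ, |g (n + m) x - G x| with hD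
  have hbd : ∀ n x, BddAbove (Set.range fun m : ℕ => |g (n + m) x - G x|) := by
    intro n x
    refine ⟨C + C, ?_⟩
    rintro _ ⟨m, rfl⟩
    exact (abs_sub _ _).trans (add_le_add (hgC _ _) (hGC _))
  have hDm : ∀ n, Measurable (D n) := fun n =>
    Measurable.iSup fun m => by
      simpa [Real.norm_eq_abs] using ((hg (n + m)).sub hG).norm
  have hDle : ∀ n x, D n x ≤ C + C := fun n x => ciSup_le fun m =>
    (abs_sub _ _).trans (add_le_add (hgC _ _) (hGC _))
  have hD0 : ∀ n x, 0 ≤ D n x := fun n x =>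
    (abs_nonneg _).trans (le_ciSup (hbd n x) 0)
  have hDabs : ∀ n x, |D n x| ≤ C + C := fun n x => by rw [abs_of_nonneg (hD0 n x)]; exact hDle n x
  have hDi : ∀ n, Integrable (D n) μ := fun n => integrable_bdd (hDm n) (hDabs n)
  have hDint : Tendsto (fun n => ∫ x, D n x ∂μ) atTop (nhds 0) := by
    have : Tendsto (fun n => ∫ x, D n x ∂μ) atTop (nhds (∫ _, (0:ℝ) ∂μ)) := by
      refine tendsto_integral_of_dominated_convergence (fun _ => C + C)
        (fun n => (hDm n).aestronglyMeasurable) (integrable_const _)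
        (fun n => Eventually.of_forall (hDabs n)) ?_
      filter_upwards [hlim] with x hx
      rw [Metric.tendsto_atTop] at hx ⊢
      intro ε hε
      obtain ⟨N, hN⟩ := hx (ε / 2) (by positivity)
      refine ⟨N, fun n hn => ?_⟩
      rw [Real.dist_eq, sub_zero, abs_of_nonneg (hD0 n x)]
      refine lt_of_le_of_lt (ciSup_le fun m => ?_) (half_lt_self hε)
      have := hN (n + m) (by omega)
      rw [Real.dist_eq] at this
      exact this.le
    simpa using this
  have hl0 : ∫⁻ x, lsup (fun N => avg N (fun i => g N (S^[i] x) - G (S^[i] x))) ∂μ = 0 := by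
    have hle : ∀ n, ∫⁻ x, lsup (fun N => avg N (fun i => g N (S^[i] x) - G (S^[i] x))) ∂μ
        ≤ ENNReal.ofReal (∫ x, D n x ∂μ) := by
      intro n
      have hce0 : 0 ≤ᵐ[μ] μ[D n | MeasurableSpace.invariants S] :=
        condExp_nonneg (Eventually.of_forall (hD0 n))
      rw [← integral_condExp (MeasurableSpace.invariants_le S),
        ofReal_integral_eq_lintegral_ofReal integrable_condExp hce0]
      refine lintegral_mono_ae ?_
      filter_upwards [birkhoff μ S hS (D n) (hDm n) (hDi n)] with x hx
      unfold lsup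
      have h1 := ENNReal.tendsto_ofReal hx
      rw [← h1.limsup_eq]
      refine limsup_le_limsup ?_
      filter_upwards [eventually_ge_atTop n] with N hN
      rw [← ofReal_norm]
      refine ENNReal.ofReal_le_ofReal ((abs_avg_le _ _).trans (avg_mono fun i => ?_))
      have := le_ciSup (hbd n (S^[i] x)) (N - n)
      simpa [Nat.add_sub_cancel' hN] using this
    refine le_antisymm ?_ bot_le
    refine ge_of_tendsto' (x := atTop) ?_ hle
    simpa using ENNReal.tendsto_ofReal hDint
  have hmeas : Measurable
      (fun x => lsup (fun N => avg N (fun i => g N (S^[i] x) - G (S^[i] x)))) :=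
    measurable_lsup fun N => measurable_avg N fun i => ((hg N).comp (hSi i)).sub (hG.comp (hSi i))
  rw [lintegral_eq_zero_iff hmeas] at hl0
  filter_upwards [hl0, birkhoff μ S hS G hG (integrable_bdd hG hGC)] with x hx1 hx2
  have h1 := (tendsto_zero_of_lsup hx1).add hx2
  simpa only [avg_sub, sub_add_cancel, zero_add] using h1

/-- Maker's ergodic theorem (bounded case). -/
lemma maker (μ : Measure X) [IsProbabilityMeasure μ] (S : X → X)
    (hS : MeasurePreserving S μ μ) (g : ℕ → X → ℝ) (G : X → ℝ) (hg : ∀ n, Measurable (g n))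
    (hG : Measurable G) (C : ℝ) (hgC : ∀ n x, |g n x| ≤ C)
    (hlim : ∀ᵐ x ∂μ, Tendsto (fun n => g n x) atTop (nhds (G x))) :
    ∀ᵐ x ∂μ, Tendsto (fun N => avg N (fun i => g N (S^[i] x))) atTop
      (nhds ((μ[G | MeasurableSpace.invariants S]) x)) := by
  set G' : X → ℝ := fun x => max (-C) (min C (G x)) with hG'
  have hG'm : Measurable G' := measurable_const.max (measurable_const.min hG)
  have hae : G' =ᵐ[μ] G := by
    filter_upwards [hlim] with x hx
    have h1 : G x ≤ C := le_of_tendsto' hx fun n => (le_abs_self _).trans (hgC n x)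
    have h2 : -C ≤ G x := ge_of_tendsto' hx fun n =>
      (neg_le_neg (hgC n x)).trans (neg_abs_le _)
    simp [hG', h1, h2]
  have hG'C : ∀ x, |G' x| ≤ C := by
    intro x
    have hC : 0 ≤ C := (abs_nonneg _).trans (hgC 0 x)
    rw [abs_le]
    exact ⟨le_max_left _ _, max_le (by linarith) (min_le_left _ _)⟩
  have hlim' : ∀ᵐ x ∂μ, Tendsto (fun n => g n x) atTop (nhds (G' x)) := by
    filter_upwards [hlim, hae] with x h1 h2
    rwa [h2]
  filter_upwards [maker_aux μ S hS g G' hg hG'm C hgC hG'C hlim',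
    condExp_congr_ae (m := MeasurableSpace.invariants S) hae] with x h1 h2
  rwa [h2] at h1

end CubicAvg

namespace CubicAvg
open scoped ENNReal

/-- A system with two commuting measure preserving maps. -/
structure IsSys {X : Type*} [MeasurableSpace X] (μ : Measure X) (S T : X → X) : Prop where
  mpS : MeasurePreserving S μ μ
  mpT : MeasurePreserving T μ μ
  comm : ∀ x, S (T x) = T (S x)

/-- The cubic averages. -/
noncomputable def cub {X : Type*} (S T : X → X) (f1 f2 f3 : X → ℝ) (N : ℕ) (x : X) : ℝ :=
  avg N (fun i => avg N (fun j => f1 (S^[i] x) * f2 (T^[j] x) * f3 (S^[i] (T^[j] x))))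

/-- Bounded measurable function. -/
structure BM {X : Type*} [MeasurableSpace X] (f : X → ℝ) (C : ℝ) : Prop where
  meas : Measurable f
  bound : ∀ x, |f x| ≤ C

lemma BM.integrable {X : Type*} [MeasurableSpace X] {μ : Measure X} [IsFiniteMeasure μ]
    {f : X → ℝ} {C : ℝ} (h : BM f C) : Integrable f μ := integrable_bdd h.meas h.bound

variable {X : Type*} [mX : MeasurableSpace X] {μ : Measure X} [IsProbabilityMeasure μ]
  {S T : X → X} {f1 f2 f3 : X → ℝ} {C : ℝ}

lemma IsSys.iter (h : IsSys μ S T) (i j : ℕ) (x : X) : S^[i] (T^[j] x) = T^[j] (S^[i] x) := by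
  have : Function.Commute S T := h.comm
  exact (this.iterate_iterate i j) x

lemma measurable_cub (h : IsSys μ S T) (h1 : Measurable f1) (h2 : Measurable f2)
    (h3 : Measurable f3) (N : ℕ) : Measurable (cub S T f1 f2 f3 N) := by
  have hSi : ∀ i, Measurable (S^[i]) := fun i => h.mpS.measurable.iterate i
  have hTi : ∀ i, Measurable (T^[i]) := fun i => h.mpT.measurable.iterate i
  exact measurable_avg N fun i => measurable_avg N fun j =>
    ((h1.comp (hSi i)).mul (h2.comp (hTi j))).mul (h3.comp ((hSi i).comp (hTi j)))

lemma cub_add (g g' : X → ℝ) (N : ℕ) (x : X) :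
    cub S T f1 f2 (fun x => g x + g' x) N x = cub S T f1 f2 g N x + cub S T f1 f2 g' N x := by
  simp only [cub, mul_add, avg_add]

lemma cub_sub (g g' : X → ℝ) (N : ℕ) (x : X) :
    cub S T f1 f2 (fun x => g x - g' x) N x = cub S T f1 f2 g N x - cub S T f1 f2 g' N x := by
  simp only [cub, mul_sub, avg_sub]

lemma cub_smul (c : ℝ) (g : X → ℝ) (N : ℕ) (x : X) :
    cub S T f1 f2 (fun x => c * g x) N x = c * cub S T f1 f2 g N x := by
  simp only [cub, ← avg_const_mul]
  congr 1; funext i; congr 1; funext j; ring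

/-- The trivial `L¹` bound. -/
lemma lsup_cub_le_L1 (h : IsSys μ S T) (hC : 0 ≤ C) (h1 : BM f1 C) (h2 : BM f2 C) {K : ℝ}
    (h3 : BM f3 K) :
    ∫⁻ x, lsup (fun N => cub S T f1 f2 f3 N x) ∂μ ≤ ENNReal.ofReal (C ^ 2 * ∫ x, |f3 x| ∂μ) := by
  have hSi : ∀ i, Measurable (S^[i]) := fun i => h.mpS.measurable.iterate i
  have hTi : ∀ i, Measurable (T^[i]) := fun i => h.mpT.measurable.iterate i
  set r : X → ℝ := fun x => |f3 x| with hr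
  have hrm : Measurable r := by simpa [hr, Real.norm_eq_abs] using h3.meas.norm
  have hri : Integrable r μ := h3.integrable.abs
  set g : ℕ → X → ℝ := fun N x => avg N (fun j => r (T^[j] x)) with hg
  have hgm : ∀ N, Measurable (g N) := fun N => measurable_avg N fun j => hrm.comp (hTi j)
  set q := μ[r | MeasurableSpace.invariants T] with hq
  have hqm : Measurable q :=
    (stronglyMeasurable_condExp.mono (MeasurableSpace.invariants_le T)).measurable
  have hlim := maker μ S h.mpS g q hgm hqm K
    (fun N x => abs_avg_le_of_bound N ((abs_nonneg _).trans (h3.bound x))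
      fun j => by simpa [hr] using h3.bound _) (birkhoff μ T h.mpT r hrm hri)
  have hq0 : 0 ≤ᵐ[μ] q := condExp_nonneg (Eventually.of_forall fun x => abs_nonneg _)
  have hq1 : 0 ≤ᵐ[μ] μ[q | MeasurableSpace.invariants S] := condExp_nonneg hq0
  have hInteg : ∫ x, r x ∂μ = ∫ x, (μ[q | MeasurableSpace.invariants S]) x ∂μ := by
    rw [integral_condExp (MeasurableSpace.invariants_le S), hq,
      integral_condExp (MeasurableSpace.invariants_le T)]
  rw [hInteg, ← integral_const_mul, ofReal_integral_eq_lintegral_ofReal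
    (integrable_condExp.const_mul _) (by
      filter_upwards [hq1] with x hx
      exact mul_nonneg (by positivity) hx)]
  refine lintegral_mono_ae ?_
  filter_upwards [hlim] with x hx
  refine lsup_le_of_tendsto (b := fun N => C ^ 2 * avg N (fun i => g N (S^[i] x))) ?_
    (hx.const_mul _)
  intro N
  simp only [cub, hg, ← avg_const_mul]
  refine (abs_avg_le _ _).trans (avg_mono fun i => (abs_avg_le _ _).trans (avg_mono fun j => ?_))
  rw [abs_mul, abs_mul, sq, h.iter]
  have := h1.bound (S^[i] x); have := h2.bound (T^[j] x)
  gcongr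

/-- van der Corput bound for the cubic averages. -/
lemma lsup_cub_le_vdc (h : IsSys μ S T) (hC : 0 ≤ C) (h1 : BM f1 C) (h2 : BM f2 C)
    (h3 : BM f3 C) {H : ℕ} (hH : 0 < H) {δ η : ℝ} (hδ : 0 < δ) (hη : 0 < η) :
    ∫⁻ x, lsup (fun N => cub S T f1 f2 f3 N x) ∂μ ≤
      ENNReal.ofReal (δ + C ^ 4 * (η + avg H (fun k => avg H (fun k' =>
        ∫ x, ((μ[fun x => f3 (S^[k] x) * f3 (S^[k'] x) | MeasurableSpace.invariants T]) x) ^ 2 ∂μ))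
          / η) / δ) := by
  have hSi : ∀ i, Measurable (S^[i]) := fun i => h.mpS.measurable.iterate i
  have hTi : ∀ i, Measurable (T^[i]) := fun i => h.mpT.measurable.iterate i
  set G : ℕ → ℕ → X → ℝ := fun k k' x => f3 (S^[k] x) * f3 (S^[k'] x) with hG
  have hGb : ∀ k k', BM (G k k') (C * C) := fun k k' =>
    ⟨(h3.meas.comp (hSi k)).mul (h3.meas.comp (hSi k')), fun x => by
      simp only [hG, abs_mul]
      have := h3.bound (S^[k] x); have := h3.bound (S^[k'] x)
      gcongr⟩
  set q : ℕ → ℕ → X → ℝ := fun k k' => μ[G k k' | MeasurableSpace.invariants T] with hq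
  have hqm : ∀ k k', Measurable (q k k') := fun k k' =>
    (stronglyMeasurable_condExp.mono (MeasurableSpace.invariants_le T)).measurable
  have hqam : ∀ k k', Measurable (fun x => |q k k' x|) := fun k k' => by
    simpa [Real.norm_eq_abs] using (hqm k k').norm
  have hqb : ∀ k k', ∀ᵐ x ∂μ, |q k k' x| ≤ C * C := fun k k' => by
    have hCC : 0 ≤ C * C := by positivity
    have := ae_bdd_abs_condExp_of_ae_bdd_abs (m := MeasurableSpace.invariants T) (μ := μ) (f := G k k')
      (R := C * C) (Eventually.of_forall (hGb k k').bound)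
    exact this
  have hqi : ∀ k k', Integrable (q k k') μ := fun k k' => integrable_condExp
  have hq2i : ∀ k k', Integrable (fun x => q k k' x ^ 2) μ := fun k k' => by
    refine Integrable.of_bound ((hqm k k').pow_const 2).aestronglyMeasurable ((C * C) ^ 2) ?_
    filter_upwards [hqb k k'] with x hx
    rw [Real.norm_eq_abs, abs_pow]
    gcongr
  set E : ℕ → ℕ → X → ℝ := fun k k' => μ[fun x => |q k k' x| | MeasurableSpace.invariants S] with hE
  have hlim : ∀ᵐ x ∂μ, ∀ k k', Tendsto (fun N => avg N (fun i =>
      |avg N (fun j => G k k' (T^[j] (S^[i] x)))|)) atTop (nhds (E k k' x)) := by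
    rw [ae_all_iff]; intro k
    rw [ae_all_iff]; intro k'
    refine maker μ S h.mpS (fun N x => |avg N (fun j => G k k' (T^[j] x))|) _ ?_ (hqam k k')
      (C * C) ?_ ?_
    · intro N
      simpa [Real.norm_eq_abs] using
        (measurable_avg N fun j => (hGb k k').meas.comp (hTi j)).norm
    · intro N x
      rw [abs_abs]
      exact abs_avg_le_of_bound N (by positivity) fun j => (hGb k k').bound _
    · filter_upwards [birkhoff μ T h.mpT (G k k') (hGb k k').meas (hGb k k').integrable] with x hx
      exact hx.abs
  have hE0 : ∀ᵐ x ∂μ, ∀ k k', 0 ≤ E k k' x := by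
    rw [ae_all_iff]; intro k
    rw [ae_all_iff]; intro k'
    exact condExp_nonneg (Eventually.of_forall fun x => abs_nonneg _)
  have hEint : ∀ k k', ∫ x, E k k' x ∂μ ≤ η + (∫ x, q k k' x ^ 2 ∂μ) / η := by
    intro k k'
    rw [hE, integral_condExp (MeasurableSpace.invariants_le S)]
    have : η + (∫ x, q k k' x ^ 2 ∂μ) / η = ∫ x, (η + q k k' x ^ 2 / η) ∂μ := by
      rw [integral_add (integrable_const _) ((hq2i k k').div_const _), integral_div]
      simp
    rw [this]
    refine integral_mono (hqi k k').abs ((integrable_const _).add ((hq2i k k').div_const _)) ?_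
    intro x
    simp only
    rw [← sub_nonneg]
    have : η + q k k' x ^ 2 / η - |q k k' x|
        = ((η - |q k k' x|/2) ^ 2 + 3/4 * |q k k' x| ^ 2) / η := by
      field_simp
      rw [← sq_abs (q k k' x)]; ring
    rw [this]; positivity
  have hEi : ∀ k k', Integrable (E k k') μ := fun k k' => integrable_condExp
  set B : X → ℝ := fun x => δ + C ^ 4 * avg H (fun k => avg H (fun k' => E k k' x)) / δ with hB
  have hBi0 : Integrable (fun x => avg H (fun k => avg H (fun k' => E k k' x))) μ :=
    integrable_avg H fun k => integrable_avg H fun k' => hEi k k'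
  have hBi : Integrable B μ := (integrable_const _).add ((hBi0.const_mul _).div_const _)
  have hB0 : 0 ≤ᵐ[μ] B := by
    filter_upwards [hE0] with x hx
    have : 0 ≤ avg H (fun k => avg H (fun k' => E k k' x)) :=
      avg_nonneg fun k => avg_nonneg fun k' => hx k k'
    simp only [hB, Pi.zero_apply]
    positivity
  have hBint : ∫ x, B x ∂μ ≤ δ + C ^ 4 * (η + avg H (fun k => avg H (fun k' =>
        ∫ x, (q k k' x) ^ 2 ∂μ)) / η) / δ := by
    simp only [hB]
    rw [integral_add (integrable_const _) ((hBi0.const_mul _).div_const _), integral_div,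
      integral_const_mul, integral_avg H fun k => integrable_avg H fun k' => hEi k k']
    have e1 : ∀ k, ∫ x, avg H (fun k' => E k k' x) ∂μ = avg H (fun k' => ∫ x, E k k' x ∂μ) :=
      fun k => integral_avg H fun k' => hEi k k'
    simp only [e1]
    have e2 : avg H (fun k => avg H (fun k' => ∫ x, E k k' x ∂μ)) ≤
        η + avg H (fun k => avg H (fun k' => ∫ x, (q k k' x) ^ 2 ∂μ)) / η := by
      refine (avg_mono fun k => avg_mono fun k' => hEint k k').trans (le_of_eq ?_)
      simp only [avg_add, avg_const hH, div_eq_mul_inv, avg_mul_const]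
    simp only [integral_const, probReal_univ, one_smul]
    gcongr
  refine le_trans ?_ (ENNReal.ofReal_le_ofReal hBint)
  rw [ofReal_integral_eq_lintegral_ofReal hBi hB0]
  refine lintegral_mono_ae ?_
  filter_upwards [hlim] with x hx
  refine lsup_le_of_tendsto (b := fun N => 2 * H * C ^ 3 * (N : ℝ)⁻¹ +
    (δ + C ^ 4 * avg H (fun k => avg H (fun k' =>
        avg N (fun i => |avg N (fun j => G k k' (T^[j] (S^[i] x)))|))) / δ)) ?_ ?_
  · intro N
    have := vdc C hC (fun i => f1 (S^[i] x)) (fun j => f2 (T^[j] x))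
      (fun i j => f3 (S^[i] (T^[j] x))) (fun i => h1.bound _) (fun i => h2.bound _)
      (fun i j => h3.bound _) H N hH δ hδ
    have e : ∀ i k j, S^[i + k] (T^[j] x) = S^[k] (T^[j] (S^[i] x)) := by
      intro i k j
      rw [add_comm, Function.iterate_add_apply, h.iter i j]
    simp only [e] at this
    exact this
  · have t0 : Tendsto (fun N : ℕ => 2 * H * C ^ 3 * (N : ℝ)⁻¹) atTop (nhds (2 * H * C ^ 3 * 0)) :=
      tendsto_inv_atTop_nhds_zero_nat.const_mul _
    have t1 := tendsto_avg H (φ := fun N k => avg H (fun k' =>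
        avg N (fun i => |avg N (fun j => G k k' (T^[j] (S^[i] x)))|)))
        (fun k => tendsto_avg H (fun k' => hx k k'))
    have t2 := t0.add (((t1.const_mul (C ^ 4)).div_const δ).const_add δ)
    simpa [hB] using t2

end CubicAvg

namespace CubicAvg
open scoped ENNReal

variable {X : Type*} [mX : MeasurableSpace X] {μ : Measure X} [IsProbabilityMeasure μ]
  {S T : X → X} {f1 f2 f3 : X → ℝ} {C : ℝ}

/-- Almost everywhere convergence of the cubic averages. -/
def Good {X : Type*} [MeasurableSpace X] (μ : Measure X) (S T : X → X) (f1 f2 g : X → ℝ) : Prop :=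
  ∀ᵐ x ∂μ, ∃ L, Tendsto (fun N => cub S T f1 f2 g N x) atTop (nhds L)

lemma Good.add {g g' : X → ℝ} (hg : Good μ S T f1 f2 g) (hg' : Good μ S T f1 f2 g') :
    Good μ S T f1 f2 (fun x => g x + g' x) := by
  filter_upwards [hg, hg'] with x ⟨L, hL⟩ ⟨L', hL'⟩
  exact ⟨L + L', by simpa only [cub_add] using hL.add hL'⟩

lemma Good.sub {g g' : X → ℝ} (hg : Good μ S T f1 f2 g) (hg' : Good μ S T f1 f2 g') :
    Good μ S T f1 f2 (fun x => g x - g' x) := by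
  filter_upwards [hg, hg'] with x ⟨L, hL⟩ ⟨L', hL'⟩
  exact ⟨L - L', by simpa only [cub_sub] using hL.sub hL'⟩

lemma Good.smul {g : X → ℝ} (c : ℝ) (hg : Good μ S T f1 f2 g) :
    Good μ S T f1 f2 (fun x => c * g x) := by
  filter_upwards [hg] with x ⟨L, hL⟩
  exact ⟨c * L, by simpa only [cub_smul] using hL.const_mul c⟩

lemma good_closure (h : IsSys μ S T) (hC : 0 ≤ C) (h1 : BM f1 C) (h2 : BM f2 C) {K : ℝ}
    (h3 : BM f3 K)
    (H : ∀ ρ : ℝ, 0 < ρ → ∃ g K', BM g K' ∧ Good μ S T f1 f2 g ∧ ∫ x, |f3 x - g x| ∂μ ≤ ρ) :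
    Good μ S T f1 f2 f3 := by
  refine ae_tendsto_of_lintegral_osc (measurable_cub h h1.meas h2.meas h3.meas) fun ρ hρ => ?_
  obtain ⟨g, K', hg, hgood, hInteg⟩ := H (ρ / (2 * (C ^ 2 + 1))) (by positivity)
  have hd : BM (fun x => f3 x - g x) (K + K') := ⟨h3.meas.sub hg.meas, fun x =>
    (abs_sub _ _).trans (add_le_add (h3.bound x) (hg.bound x))⟩
  have h4 := lsup_cub_le_L1 h hC h1 h2 hd
  have h5 := lintegral_osc_le (μ := μ) (measurable_cub h h1.meas h2.meas h3.meas)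
    (measurable_cub h h1.meas h2.meas hg.meas) hgood (ρ := C ^ 2 * ∫ x, |f3 x - g x| ∂μ)
    (by simpa only [cub_sub] using h4)
  refine h5.trans ?_
  rw [show (2 : ℝ≥0∞) = ENNReal.ofReal 2 by simp, ← ENNReal.ofReal_mul (by norm_num)]
  refine ENNReal.ofReal_le_ofReal ?_
  have h6 : 0 ≤ ∫ x, |f3 x - g x| ∂μ := integral_nonneg fun x => abs_nonneg _
  rw [le_div_iff₀ (by positivity)] at hInteg
  nlinarith

lemma BM_indicator {A : Set X} (hA : MeasurableSet A) : BM (A.indicator (fun _ => (1 : ℝ))) 1 :=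
  ⟨measurable_const.indicator hA, fun x => by
    by_cases hx : x ∈ A <;> simp [hx]⟩

lemma BM.mul {g g' : X → ℝ} {K K' : ℝ} (hg : BM g K) (hg' : BM g' K') :
    BM (fun x => g x * g' x) (K * K') := ⟨hg.meas.mul hg'.meas, fun x => by
  rw [abs_mul]
  have := hg.bound x; have := hg'.bound x
  have : 0 ≤ K := (abs_nonneg _).trans (hg.bound x)
  gcongr⟩

lemma mem_iterate {A : Set X} {R : X → X} (hA : R ⁻¹' A = A) (i : ℕ) (x : X) :
    R^[i] x ∈ A ↔ x ∈ A := by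
  induction i with
  | zero => simp
  | succ n ih =>
    rw [Function.iterate_succ_apply', ← ih]
    exact Set.ext_iff.1 hA (R^[n] x)

lemma good_inter (h : IsSys μ S T) (h1 : BM f1 C) (h2 : BM f2 C) {A B : Set X}
    (hA : MeasurableSet[MeasurableSpace.invariants S] A)
    (hB : MeasurableSet[MeasurableSpace.invariants T] B) :
    Good μ S T f1 f2 ((A ∩ B).indicator (fun _ => (1 : ℝ))) := by
  rw [MeasurableSpace.measurableSet_invariants] at hA hB
  have b1 := h1.mul (BM_indicator hB.1)
  have b2 := h2.mul (BM_indicator hA.1)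
  filter_upwards [birkhoff μ S h.mpS _ b1.meas b1.integrable,
    birkhoff μ T h.mpT _ b2.meas b2.integrable] with x hx1 hx2
  refine ⟨_, (hx1.mul hx2).congr fun N => ?_⟩
  simp only [cub, ← avg_mul_const]
  congr 1; funext i
  rw [← avg_const_mul]
  congr 1; funext j
  have e1 : S^[i] (T^[j] x) ∈ A ↔ T^[j] x ∈ A := mem_iterate hA.2 i _
  have e2 : S^[i] (T^[j] x) ∈ B ↔ S^[i] x ∈ B := by rw [h.iter]; exact mem_iterate hB.2 j _
  by_cases c1 : T^[j] x ∈ A <;> by_cases c2 : S^[i] x ∈ B <;>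
    simp [Set.indicator, e1, e2, c1, c2]

lemma good_set (h : IsSys μ S T) (hC : 0 ≤ C) (h1 : BM f1 C) (h2 : BM f2 C) {A : Set X}
    (hA : MeasurableSet[MeasurableSpace.invariants S ⊔ MeasurableSpace.invariants T] A) :
    Good μ S T f1 f2 (A.indicator (fun _ => (1 : ℝ))) := by
  have hle : MeasurableSpace.invariants S ⊔ MeasurableSpace.invariants T ≤ mX :=
    sup_le (MeasurableSpace.invariants_le S) (MeasurableSpace.invariants_le T)
  set π : Set (Set X) := {E | ∃ A B, MeasurableSet[MeasurableSpace.invariants S] A ∧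
    MeasurableSet[MeasurableSpace.invariants T] B ∧ E = A ∩ B} with hπ
  have hgen : MeasurableSpace.invariants S ⊔ MeasurableSpace.invariants T =
      MeasurableSpace.generateFrom π := by
    refine le_antisymm (sup_le ?_ ?_) (MeasurableSpace.generateFrom_le ?_)
    · intro A hA
      exact MeasurableSpace.measurableSet_generateFrom
        ⟨A, Set.univ, hA, MeasurableSet.univ, by simp⟩
    · intro A hA
      exact MeasurableSpace.measurableSet_generateFrom
        ⟨Set.univ, A, MeasurableSet.univ, hA, by simp⟩
    · rintro E ⟨A, B, hA, hB, rfl⟩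
      exact MeasurableSet.inter
        ((le_sup_left : MeasurableSpace.invariants S ≤ _) A hA)
        ((le_sup_right : MeasurableSpace.invariants T ≤ _) B hB)
  have hpi : IsPiSystem π := by
    rintro _ ⟨A, B, hA, hB, rfl⟩ _ ⟨A', B', hA', hB', rfl⟩ _
    exact ⟨A ∩ A', B ∩ B', hA.inter hA', hB.inter hB', by
      rw [Set.inter_inter_inter_comm]⟩
  have huniv : Good μ S T f1 f2 ((Set.univ ∩ Set.univ : Set X).indicator (fun _ => (1 : ℝ))) :=
    good_inter h h1 h2 (@MeasurableSet.univ _ (MeasurableSpace.invariants S))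
      (@MeasurableSet.univ _ (MeasurableSpace.invariants T))
  induction A, hA using MeasurableSpace.induction_on_inter hgen hpi with
  | empty =>
    have := huniv.smul 0
    simpa using this
  | basic t ht =>
    obtain ⟨A, B, hA, hB, rfl⟩ := ht
    exact good_inter h h1 h2 hA hB
  | compl t htm ih =>
    have := huniv.sub ih
    convert this using 2 with x
    by_cases hx : x ∈ t <;> simp [hx]
  | iUnion f hd hm ih =>
    have hmm : ∀ i, MeasurableSet (f i) := fun i => hle _ (hm i)
    have hfin : ∀ n : ℕ, Good μ S T f1 f2
        (fun x => ∑ i ∈ Finset.range n, (f i).indicator (fun _ => (1 : ℝ)) x) := by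
      intro n
      induction n with
      | zero => simpa using huniv.smul 0
      | succ n ihn => simpa only [Finset.sum_range_succ] using ihn.add (ih n)
    have hsum : ∀ n x, ∑ i ∈ Finset.range n, (f i).indicator (fun _ => (1 : ℝ)) x =
        (⋃ i ∈ Finset.range n, f i).indicator (fun _ => (1 : ℝ)) x := fun n x => by
      rw [Finset.indicator_biUnion _ _ (fun i _ j _ hij => hd hij)]
    have htend : Tendsto (fun n => ∫ x, |(⋃ i, f i).indicator (fun _ => (1 : ℝ)) x -
        (⋃ i ∈ Finset.range n, f i).indicator (fun _ => (1 : ℝ)) x| ∂μ) atTop (nhds 0) := by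
      have : (0 : ℝ) = ∫ x, 0 ∂μ := by simp
      rw [this]
      refine tendsto_integral_of_dominated_convergence (fun _ => 1) ?_ (integrable_const _) ?_ ?_
      · intro n
        have e1 := (BM_indicator (MeasurableSet.iUnion hmm)).meas
        have e2 := (BM_indicator
          (Finset.measurableSet_biUnion (Finset.range n) fun i _ => hmm i)).meas
        simpa [Real.norm_eq_abs] using (e1.sub e2).norm.aestronglyMeasurable (μ := μ)
      · intro n
        refine Eventually.of_forall fun x => ?_
        by_cases c1 : x ∈ ⋃ i, f i <;> by_cases c2 : x ∈ ⋃ i ∈ Finset.range n, f i <;>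
          simp only [Set.indicator_of_mem, Set.indicator_of_notMem, c1, c2, not_false_eq_true] <;>
          norm_num
      · refine Eventually.of_forall fun x => ?_
        refine tendsto_const_nhds.congr' ?_
        by_cases c1 : x ∈ ⋃ i, f i
        · obtain ⟨i, hi⟩ := Set.mem_iUnion.1 c1
          filter_upwards [eventually_gt_atTop i] with n hn
          have c2 : x ∈ ⋃ i ∈ Finset.range n, f i :=
            Set.mem_biUnion (Finset.mem_coe.2 (Finset.mem_range.2 hn)) hi
          rw [Set.indicator_of_mem c1, Set.indicator_of_mem c2]; simp
        · refine Eventually.of_forall fun n => ?_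
          have c2 : x ∉ ⋃ i ∈ Finset.range n, f i := fun hx => c1 (by
            obtain ⟨i, _, hi⟩ := Set.mem_iUnion₂.1 hx
            exact Set.mem_iUnion.2 ⟨i, hi⟩)
          simp only [Set.indicator_of_notMem c1, Set.indicator_of_notMem c2]; simp
    refine good_closure h hC h1 h2 (BM_indicator (MeasurableSet.iUnion hmm)) fun ρ hρ => ?_
    obtain ⟨n, hn⟩ := (htend.eventually (gt_mem_nhds hρ)).exists
    refine ⟨_, 1, BM_indicator (Finset.measurableSet_biUnion (Finset.range n) fun i _ => hmm i),
      ?_, hn.le⟩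
    have := hfin n
    simpa only [hsum] using this

lemma exists_approx {X : Type*} (m : MeasurableSpace X) (Q : (X → ℝ) → Prop)
    (hset : ∀ s, MeasurableSet s → ∀ c, Q (fun x => c * s.indicator (fun _ => (1 : ℝ)) x))
    (hadd : ∀ f g, Q f → Q g → Q (fun x => f x + g x)) {P : X → ℝ} (hP : Measurable P)
    {K : ℝ} (hK : 0 ≤ K) (hb : ∀ x, |P x| ≤ K) :
    ∃ g : ℕ → X → ℝ, (∀ n, Measurable (g n)) ∧ (∀ n x, |g n x| ≤ K) ∧ (∀ n, Q (g n)) ∧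
      ∀ x, Tendsto (fun n => g n x) atTop (nhds (P x)) := by
  have hsf : ∀ g : SimpleFunc X ℝ, Q g := by
    intro g
    induction g using SimpleFunc.induction with
    | const c hs =>
      rename_i s
      convert hset s hs c using 1
      ext x
      by_cases hx : x ∈ s <;> simp [hx]
    | add _ hf hg => exact hadd _ _ hf hg
  have hP' : StronglyMeasurable P := hP.stronglyMeasurable
  exact ⟨fun n => hP'.approxBounded K n, fun n => SimpleFunc.measurable _,
    fun n x => hP'.norm_approxBounded_le hK n x, fun n => hsf _,
    fun x => hP'.tendsto_approxBounded_of_norm_le (c := K) (x := x) (hb x)⟩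

/-- The structured part. -/
lemma good_struct (h : IsSys μ S T) (hC : 0 ≤ C) (h1 : BM f1 C) (h2 : BM f2 C) {P : X → ℝ}
    {K : ℝ}
    (hP : Measurable[MeasurableSpace.invariants S ⊔ MeasurableSpace.invariants T] P)
    (hK : 0 ≤ K) (hb : ∀ x, |P x| ≤ K) : Good μ S T f1 f2 P := by
  have hle : MeasurableSpace.invariants S ⊔ MeasurableSpace.invariants T ≤ mX :=
    sup_le (MeasurableSpace.invariants_le S) (MeasurableSpace.invariants_le T)
  obtain ⟨g, hgm', hgb, hgQ, hgt⟩ := exists_approx _ (Good μ S T f1 f2)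
    (fun s hs c => (good_set h hC h1 h2 hs).smul c) (fun _ _ h h' => h.add h') hP hK hb
  have hPm : Measurable P := hP.mono hle le_rfl
  have hgm : ∀ n, Measurable (g n) := fun n => (hgm' n).mono hle le_rfl
  have htend : Tendsto (fun n => ∫ x, |P x - g n x| ∂μ) atTop (nhds 0) := by
    have : (0 : ℝ) = ∫ x, 0 ∂μ := by simp
    rw [this]
    refine tendsto_integral_of_dominated_convergence (fun _ => K + K) ?_ (integrable_const _) ?_ ?_
    · intro n
      simpa [Real.norm_eq_abs] using (hPm.sub (hgm n)).norm.aestronglyMeasurable (μ := μ)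
    · intro n
      refine Eventually.of_forall fun x => ?_
      rw [Real.norm_eq_abs, abs_abs]
      exact (abs_sub _ _).trans (add_le_add (hb x) (hgb n x))
    · refine Eventually.of_forall fun x => ?_
      simpa using ((hgt x).const_sub (P x)).abs
  refine good_closure h hC h1 h2 ⟨hPm, hb⟩ fun ρ hρ => ?_
  obtain ⟨n, hn⟩ := (htend.eventually (gt_mem_nhds hρ)).exists
  exact ⟨_, K, ⟨hgm n, hgb n⟩, hgQ n, hn.le⟩

end CubicAvg

namespace CubicAvg
open scoped ENNReal
open ProbabilityTheory

lemma mp_integral {Z X : Type*} [MeasurableSpace Z] [MeasurableSpace X] {ν : Measure Z}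
    {μ : Measure X} {p : Z → X} (hp : MeasurePreserving p ν μ) {f : X → ℝ} (hf : Measurable f) :
    ∫ z, f (p z) ∂ν = ∫ x, f x ∂μ := by
  rw [← hp.map_eq, integral_map hp.measurable.aemeasurable hf.aestronglyMeasurable]

section
variable {X : Type*} [mX : MeasurableSpace X] {μ : Measure X} [IsProbabilityMeasure μ]
  {S T : X → X} {C : ℝ}

lemma integrable_mul_bdd {f g : X → ℝ} {K : ℝ} (hf : Measurable f) (hg : Measurable g)
    (hfb : ∀ᵐ x ∂μ, |f x| ≤ C) (hgb : ∀ᵐ x ∂μ, |g x| ≤ K) :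
    Integrable (fun x => f x * g x) μ := by
  refine Integrable.of_bound (hf.mul hg).aestronglyMeasurable (C * K) ?_
  filter_upwards [hfb, hgb] with x h1 h2
  rw [Real.norm_eq_abs, abs_mul]
  have : 0 ≤ C := (abs_nonneg _).trans h1
  gcongr

end

section
variable {X : Type*} (m : MeasurableSpace X) [mX : MeasurableSpace X] {μ : Measure X}
  [IsProbabilityMeasure μ] {C : ℝ}

lemma condExp_bdd {f : X → ℝ} (hf : BM f C) :
    ∀ᵐ x ∂μ, |(μ[f | m]) x| ≤ C :=
  ae_bdd_abs_condExp_of_ae_bdd_abs (Eventually.of_forall hf.bound)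

lemma condExp_meas (hm : m ≤ mX) (f : X → ℝ) : Measurable (μ[f | m]) :=
  (stronglyMeasurable_condExp.mono hm).measurable

/-- Pull out. -/
lemma integral_mul_condExp' (hm : m ≤ mX) {f g : X → ℝ} {K : ℝ}
    (hg : Measurable[m] g) (hgb : ∀ᵐ x ∂μ, |g x| ≤ K) (hf : BM f C) :
    ∫ x, g x * f x ∂μ = ∫ x, g x * (μ[f | m]) x ∂μ := by
  have hgm : Measurable g := hg.mono hm le_rfl
  have h1 := condExp_mul_of_stronglyMeasurable_left (μ := μ) (m := m) (f := g) (g := f)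
    hg.stronglyMeasurable
    (integrable_mul_bdd hgm hf.meas hgb (Eventually.of_forall hf.bound)) hf.integrable
  calc ∫ x, g x * f x ∂μ = ∫ x, (g * f) x ∂μ := rfl
    _ = ∫ x, (μ[g * f | m]) x ∂μ := (integral_condExp hm).symm
    _ = ∫ x, g x * (μ[f | m]) x ∂μ := integral_congr_ae h1

end

section
variable {X : Type*} [mX : MeasurableSpace X] {μ : Measure X} [IsProbabilityMeasure μ]
  {S T : X → X} {C : ℝ}

lemma condExp_comp (hT : MeasurePreserving T μ μ) {R : X → X} (hR : MeasurePreserving R μ μ)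
    (hc : ∀ x, R (T x) = T (R x)) {b : X → ℝ} (hb : BM b C) :
    ∀ᵐ x ∂μ, (μ[fun x => b (R x) | MeasurableSpace.invariants T]) x =
      (μ[b | MeasurableSpace.invariants T]) (R x) := by
  have h1 := birkhoff μ T hT (fun x => b (R x)) (hb.meas.comp hR.measurable)
    (BM.integrable (C := C) ⟨hb.meas.comp hR.measurable, fun x => hb.bound _⟩)
  have h2 := hR.quasiMeasurePreserving.ae (birkhoff μ T hT b hb.meas hb.integrable)
  filter_upwards [h1, h2] with x hx1 hx2
  refine tendsto_nhds_unique hx1 (hx2.congr fun N => ?_)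
  congr 1; funext i
  have : Function.Commute R T := hc
  rw [(this.iterate_right i) x]

end

section
variable {X : Type*} [mX : MeasurableSpace X] [StandardBorelSpace X] (μ : Measure X)
  [IsProbabilityMeasure μ] (T : X → X)

/-- relatively independent self-joining over the `T`-invariant factor. -/
noncomputable def extM : Measure (X × X) :=
  μ ⊗ₘ ((condExpKernel μ (MeasurableSpace.invariants T)).comap id
    (measurable_id'' (MeasurableSpace.invariants_le T)))

instance : IsProbabilityMeasure (extM μ T) := by
  unfold extM; infer_instance

variable {μ T} {C K : ℝ}

lemma integral_extM {a b : X → ℝ} (ha : BM a C) (hb : BM b K) :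
    ∫ z, a z.1 * b z.2 ∂(extM μ T) =
      ∫ x, a x * (μ[b | MeasurableSpace.invariants T]) x ∂μ := by
  have hInteg : Integrable (fun z : X × X => a z.1 * b z.2) (extM μ T) :=
    integrable_mul_bdd (ha.meas.comp measurable_fst) (hb.meas.comp measurable_snd)
      (Eventually.of_forall fun z => ha.bound _) (Eventually.of_forall fun z => hb.bound _)
  unfold extM at hInteg ⊢
  rw [Measure.integral_compProd hInteg]
  refine integral_congr_ae ?_
  filter_upwards [condExp_ae_eq_integral_condExpKernel (MeasurableSpace.invariants_le T)
    (hb.integrable (μ := μ))] with x hx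
  rw [hx, integral_const_mul]
  rfl

lemma extM_rect {A B : Set X} (hA : MeasurableSet A) (hB : MeasurableSet B) :
    (extM μ T).real (A ×ˢ B) = ∫ x, A.indicator (fun _ => (1 : ℝ)) x *
      (μ[B.indicator (fun _ => (1 : ℝ)) | MeasurableSpace.invariants T]) x ∂μ := by
  rw [← integral_extM (BM_indicator hA) (BM_indicator hB), ← integral_indicator_one (hA.prod hB)]
  congr 1; funext z
  by_cases h1 : z.1 ∈ A <;> by_cases h2 : z.2 ∈ B <;> simp [Set.indicator, h1, h2]

lemma mp_ext {R1 R2 : X → X} (h1 : Measurable R1) (h2 : Measurable R2)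
    (H : ∀ a b : X → ℝ, BM a 1 → BM b 1 →
      ∫ x, a (R1 x) * (μ[fun x => b (R2 x) | MeasurableSpace.invariants T]) x ∂μ =
      ∫ x, a x * (μ[b | MeasurableSpace.invariants T]) x ∂μ) :
    MeasurePreserving (Prod.map R1 R2) (extM μ T) (extM μ T) := by
  refine ⟨h1.prodMap h2, ?_⟩
  symm
  refine Measure.ext_prod fun {A B} hA hB => ?_
  rw [Measure.map_apply (h1.prodMap h2) (hA.prod hB)]
  have e : Prod.map R1 R2 ⁻¹' (A ×ˢ B) = (R1 ⁻¹' A) ×ˢ (R2 ⁻¹' B) := by ext z; simp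
  rw [e]
  have := H _ _ (BM_indicator hA) (BM_indicator hB)
  have h3 := extM_rect (μ := μ) (T := T) hA hB
  have h4 := extM_rect (μ := μ) (T := T) (h1 hA) (h2 hB)
  rw [← h3] at this
  have h5 : (extM μ T).real (A ×ˢ B) = (extM μ T).real ((R1 ⁻¹' A) ×ˢ (R2 ⁻¹' B)) := by
    rw [h4, ← this]; rfl
  rw [measureReal_def, measureReal_def, ENNReal.toReal_eq_toReal_iff' (by simp) (by simp)] at h5
  exact h5

lemma isSys_ext {S : X → X} (h : IsSys μ S T) :
    IsSys (extM μ T) (Prod.map S S) (Prod.map id T) := by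
  refine ⟨mp_ext h.mpS.measurable h.mpS.measurable ?_, mp_ext measurable_id h.mpT.measurable ?_, ?_⟩
  · intro a b ha hb
    have hm : Measurable (fun x => a x * (μ[b | MeasurableSpace.invariants T]) x) :=
      ha.meas.mul (condExp_meas _ (MeasurableSpace.invariants_le T) _)
    rw [← mp_integral h.mpS hm]
    refine integral_congr_ae ?_
    filter_upwards [condExp_comp h.mpT h.mpS h.comm hb] with x hx
    rw [hx]
  · intro a b ha hb
    refine integral_congr_ae ?_
    filter_upwards [condExp_comp h.mpT h.mpT (fun x => rfl) hb] with x hx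
    rw [hx]
    have := MeasurableSpace.comp_eq_of_measurable_invariants (f := T)
      (stronglyMeasurable_condExp (μ := μ) (f := b) (m := MeasurableSpace.invariants T)).measurable
    rw [id, ← congrFun this x]; rfl
  · rintro ⟨x, y⟩
    simp [h.comm]

lemma mp_snd : MeasurePreserving Prod.snd (extM μ T) μ := by
  refine ⟨measurable_snd, ?_⟩
  ext B hB
  rw [Measure.map_apply measurable_snd hB]
  have h3 := extM_rect (μ := μ) (T := T) MeasurableSet.univ hB
  have e : (Set.univ ×ˢ B : Set (X × X)) = Prod.snd ⁻¹' B := by ext z; simp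
  have h5 : (extM μ T).real (Prod.snd ⁻¹' B) = μ.real B := by
    rw [← e, h3]
    simp only [Set.indicator_univ, one_mul]
    rw [integral_condExp (MeasurableSpace.invariants_le T)]
    exact integral_indicator_one hB
  rw [measureReal_def, measureReal_def, ENNReal.toReal_eq_toReal_iff' (by simp) (by simp)] at h5
  exact h5

end

end CubicAvg

namespace CubicAvg
open scoped ENNReal
open ProbabilityTheory

/-- The sigma-algebra generated by the `S`-invariant and the `T`-invariant sets. -/
abbrev msup {X : Type*} [MeasurableSpace X] (S T : X → X) : MeasurableSpace X :=
  MeasurableSpace.invariants S ⊔ MeasurableSpace.invariants T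

lemma msup_le {X : Type*} [mX : MeasurableSpace X] (S T : X → X) : msup S T ≤ mX :=
  sup_le (MeasurableSpace.invariants_le S) (MeasurableSpace.invariants_le T)

/-- Energy. -/
noncomputable def energy {X : Type*} [MeasurableSpace X] (μ : Measure X) (S T : X → X)
    (f : X → ℝ) : ℝ := ∫ x, ((μ[f | msup S T]) x) ^ 2 ∂μ

variable {X : Type*} [mX : MeasurableSpace X] [StandardBorelSpace X] {μ : Measure X}
  [IsProbabilityMeasure μ] {S T : X → X} {C : ℝ}

lemma key (h : IsSys μ S T) (hC : 0 ≤ C) {F : X → ℝ} (hF : BM F C) :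
    ∃ κ : ℝ, Tendsto (fun H => avg H (fun k => avg H (fun k' =>
        ∫ x, ((μ[fun x => F (S^[k] x) * F (S^[k'] x) | MeasurableSpace.invariants T]) x) ^ 2 ∂μ)))
        atTop (nhds κ) ∧
      κ ≤ C ^ 3 * ∫ z, |((extM μ T)[fun z : X × X => F z.2 |
        msup (Prod.map S S) (Prod.map id T)]) z| ∂(extM μ T) := by
  have hs := isSys_ext h
  set ν := extM μ T with hν
  set S' : X × X → X × X := Prod.map S S with hS'
  set T' : X × X → X × X := Prod.map id T with hT'
  have hSi : ∀ i, Measurable (S^[i]) := fun i => h.mpS.measurable.iterate i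
  have hSi' : ∀ i, Measurable (S'^[i]) := fun i => hs.mpS.measurable.iterate i
  set W : X × X → ℝ := fun z => F z.1 * F z.2 with hW
  have hF1 : BM (fun z : X × X => F z.1) C := ⟨hF.meas.comp measurable_fst, fun z => hF.bound _⟩
  have hF2 : BM (fun z : X × X => F z.2) C := ⟨hF.meas.comp measurable_snd, fun z => hF.bound _⟩
  have hWb : BM W (C * C) := hF1.mul hF2
  have hWi : ∀ k, BM (fun z => W (S'^[k] z)) (C * C) := fun k =>
    ⟨hWb.meas.comp (hSi' k), fun z => hWb.bound _⟩
  set Φ := ν[W | MeasurableSpace.invariants S'] with hΦ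
  have hΦm : Measurable Φ := condExp_meas _ (MeasurableSpace.invariants_le S') _
  have hΦm' : Measurable[MeasurableSpace.invariants S'] Φ := stronglyMeasurable_condExp.measurable
  have hΦb : ∀ᵐ z ∂ν, |Φ z| ≤ C * C := condExp_bdd _ hWb
  have step1 : ∀ k k', ∫ x, ((μ[fun x => F (S^[k] x) * F (S^[k'] x) |
      MeasurableSpace.invariants T]) x) ^ 2 ∂μ = ∫ z, W (S'^[k] z) * W (S'^[k'] z) ∂ν := by
    intro k k'
    have hG : BM (fun x => F (S^[k] x) * F (S^[k'] x)) (C * C) :=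
      BM.mul ⟨hF.meas.comp (hSi k), fun z => hF.bound _⟩
        ⟨hF.meas.comp (hSi k'), fun z => hF.bound _⟩
    have e1 := integral_extM (μ := μ) (T := T) hG hG
    have e2 := integral_mul_condExp' (μ := μ) _ (MeasurableSpace.invariants_le T)
      stronglyMeasurable_condExp.measurable (condExp_bdd (MeasurableSpace.invariants T) hG) hG
    calc _ = ∫ x, (μ[fun x => F (S^[k] x) * F (S^[k'] x) | MeasurableSpace.invariants T]) x *
          (μ[fun x => F (S^[k] x) * F (S^[k'] x) | MeasurableSpace.invariants T]) x ∂μ := by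
            simp only [sq]
      _ = _ := e2.symm
      _ = _ := by
        simp only [mul_comm ((μ[fun x => F (S^[k] x) * F (S^[k'] x) |
          MeasurableSpace.invariants T]) _)]
        exact e1.symm
      _ = _ := by
        congr 1; funext z
        simp only [hW, hS', Prod.map_iterate, Prod.map_fst, Prod.map_snd]
        ring
  have step2 : ∀ H, avg H (fun k => avg H (fun k' => ∫ x, ((μ[fun x => F (S^[k] x) * F (S^[k'] x) |
      MeasurableSpace.invariants T]) x) ^ 2 ∂μ)) = ∫ z, (avg H (fun k => W (S'^[k] z))) ^ 2 ∂ν := by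
    intro H
    simp only [step1]
    have hi : ∀ k k', Integrable (fun z => W (S'^[k] z) * W (S'^[k'] z)) ν := fun k k' =>
      ((hWi k).mul (hWi k')).integrable
    have : ∀ k, avg H (fun k' => ∫ z, W (S'^[k] z) * W (S'^[k'] z) ∂ν) =
        ∫ z, avg H (fun k' => W (S'^[k] z) * W (S'^[k'] z)) ∂ν := fun k =>
      (integral_avg H (hi k)).symm
    simp only [this]
    rw [← integral_avg H (fun k => integrable_avg H (hi k))]
    simp only [avg_const_mul, avg_mul_const, sq]
  refine ⟨∫ z, Φ z ^ 2 ∂ν, ?_, ?_⟩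
  · simp only [step2]
    refine tendsto_integral_of_dominated_convergence (fun _ => (C * C) ^ 2) ?_
      (integrable_const _) ?_ ?_
    · intro H
      exact ((measurable_avg H fun k => (hWi k).meas).pow_const 2).aestronglyMeasurable
    · intro H
      refine Eventually.of_forall fun z => ?_
      rw [Real.norm_eq_abs, abs_pow]
      have := abs_avg_le_of_bound H (by positivity) fun k => (hWi k).bound z
      gcongr
    · filter_upwards [birkhoff ν S' hs.mpS W hWb.meas hWb.integrable] with z hz
      exact hz.pow 2
  · have e1 : ∫ z, Φ z ^ 2 ∂ν = ∫ z, Φ z * W z ∂ν := by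
      rw [integral_mul_condExp' _ (MeasurableSpace.invariants_le S') hΦm' hΦb hWb]
      simp only [sq, hΦ]
    have hinv : Measurable[MeasurableSpace.invariants T'] (fun z : X × X => F z.1) := by
      rw [MeasurableSpace.measurable_invariants_dom]
      exact ⟨hF1.meas, fun s _ => rfl⟩
    have hg : Measurable[msup S' T'] (fun z => Φ z * F z.1) :=
      Measurable.mul (hΦm'.mono le_sup_left le_rfl) (hinv.mono le_sup_right le_rfl)
    have hgb : ∀ᵐ z ∂ν, |Φ z * F z.1| ≤ C ^ 3 := by
      filter_upwards [hΦb] with z hz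
      rw [abs_mul, show C ^ 3 = (C * C) * C by ring]
      have := hF1.bound z
      gcongr
    have e2 : ∫ z, Φ z * W z ∂ν = ∫ z, (Φ z * F z.1) * F z.2 ∂ν := by
      simp only [hW, mul_assoc]
    rw [e1, e2, integral_mul_condExp' _ (msup_le S' T') hg hgb hF2, ← integral_const_mul]
    have hqm : Measurable (ν[fun z : X × X => F z.2 | msup S' T']) :=
      condExp_meas _ (msup_le S' T') _
    have hqb := condExp_bdd (μ := ν) (msup S' T') hF2
    refine integral_mono_ae ?_ (integrable_condExp.abs.const_mul _) ?_
    · exact integrable_mul_bdd (hg.mono (msup_le _ _) le_rfl) hqm hgb hqb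
    · filter_upwards [hgb] with z hz
      refine (le_abs_self _).trans ?_
      rw [abs_mul]
      gcongr

lemma measurable_snd_msup : Measurable[msup (Prod.map S S) (Prod.map id T), msup S T]
    (Prod.snd : X × X → X) := by
  rw [measurable_iff_comap_le, MeasurableSpace.comap_sup]
  refine sup_le_sup ?_ ?_
  · rw [← measurable_iff_comap_le]
    exact MeasurableSpace.measurable_invariants_of_semiconj measurable_snd fun z => rfl
  · rw [← measurable_iff_comap_le]
    exact MeasurableSpace.measurable_invariants_of_semiconj measurable_snd fun z => rfl

lemma energy_step (hC : 0 ≤ C) {f : X → ℝ} (hf : BM f C) :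
    ∃ P : X → ℝ, Measurable[msup S T] P ∧ (∀ x, |P x| ≤ C) ∧
      ∫ z, (((extM μ T)[fun z : X × X => f z.2 - P z.2 |
        msup (Prod.map S S) (Prod.map id T)]) z) ^ 2 ∂(extM μ T) =
      energy (extM μ T) (Prod.map S S) (Prod.map id T) (fun z => f z.2) - energy μ S T f := by
  set ν := extM μ T with hν
  set S' : X × X → X × X := Prod.map S S with hS'
  set T' : X × X → X × X := Prod.map id T with hT'
  have hp : MeasurePreserving Prod.snd ν μ := mp_snd
  set P : X → ℝ := fun x => max (-C) (min C ((μ[f | msup S T]) x)) with hP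
  have hPm : Measurable[msup S T] P :=
    measurable_const.max (measurable_const.min stronglyMeasurable_condExp.measurable)
  have hPb : ∀ x, |P x| ≤ C := fun x => abs_le.2
    ⟨le_max_left _ _, max_le (by linarith) (min_le_left _ _)⟩
  have hPM : BM P C := ⟨hPm.mono (msup_le _ _) le_rfl, hPb⟩
  have hPe : ∀ᵐ x ∂μ, P x = (μ[f | msup S T]) x := by
    filter_upwards [condExp_bdd (μ := μ) (msup S T) hf] with x hx
    obtain ⟨h1, h2⟩ := abs_le.1 hx
    simp only [hP]
    rw [min_eq_right h2, max_eq_right h1]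
  refine ⟨P, hPm, hPb, ?_⟩
  have hf2 : BM (fun z : X × X => f z.2) C := ⟨hf.meas.comp measurable_snd, fun z => hf.bound _⟩
  have hP2 : BM (fun z : X × X => P z.2) C := ⟨hPM.meas.comp measurable_snd, fun z => hPb _⟩
  have hP2m : Measurable[msup S' T'] (fun z : X × X => P z.2) := hPm.comp measurable_snd_msup
  set q := ν[fun z : X × X => f z.2 | msup S' T'] with hq
  have hqm : Measurable q := condExp_meas _ (msup_le S' T') _
  have hqb : ∀ᵐ z ∂ν, |q z| ≤ C := condExp_bdd _ hf2
  have e1 : ν[fun z : X × X => f z.2 - P z.2 | msup S' T'] =ᵐ[ν] fun z => q z - P z.2 := by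
    have h1 := condExp_sub (μ := ν) (hf2.integrable (μ := ν)) (hP2.integrable (μ := ν))
      (msup S' T')
    have h2 := condExp_of_stronglyMeasurable (μ := ν) (msup_le S' T') hP2m.stronglyMeasurable
      (hP2.integrable (μ := ν))
    rw [h2] at h1
    exact h1
  have e2 : ∫ z, P z.2 * q z ∂ν = ∫ z, P z.2 * f z.2 ∂ν :=
    (integral_mul_condExp' _ (msup_le S' T') hP2m (Eventually.of_forall hP2.bound) hf2).symm
  have e3 : ∫ z, P z.2 * f z.2 ∂ν = ∫ x, P x * f x ∂μ :=
    mp_integral hp (f := fun x => P x * f x) (hPM.meas.mul hf.meas)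
  have e4 : ∫ x, P x * f x ∂μ = ∫ x, P x ^ 2 ∂μ := by
    rw [integral_mul_condExp' _ (msup_le S T) hPm (Eventually.of_forall hPb) hf]
    refine integral_congr_ae ?_
    filter_upwards [hPe] with x hx
    rw [← hx, sq]
  have e5 : ∫ z, P z.2 ^ 2 ∂ν = ∫ x, P x ^ 2 ∂μ :=
    mp_integral hp (f := fun x => P x ^ 2) (hPM.meas.pow_const 2)
  have e6 : energy μ S T f = ∫ x, P x ^ 2 ∂μ := by
    unfold energy
    refine integral_congr_ae ?_
    filter_upwards [hPe] with x hx
    rw [← hx]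
  have i1 : Integrable (fun z => q z ^ 2) ν := by
    simpa only [sq] using integrable_mul_bdd hqm hqm hqb hqb
  have i2 : Integrable (fun z => P z.2 * q z) ν :=
    integrable_mul_bdd hP2.meas hqm (Eventually.of_forall hP2.bound) hqb
  have i3 : Integrable (fun z : X × X => P z.2 ^ 2) ν := by
    simpa only [sq] using (hP2.mul hP2).integrable
  have i4 : Integrable (fun z => q z ^ 2 - 2 * (P z.2 * q z)) ν := i1.sub (i2.const_mul 2)
  have e7 : ∫ z, (q z - P z.2) ^ 2 ∂ν =
      ∫ z, q z ^ 2 ∂ν - 2 * ∫ z, P z.2 * q z ∂ν + ∫ z, P z.2 ^ 2 ∂ν := by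
    rw [← integral_const_mul, ← integral_sub i1 (i2.const_mul 2),
      ← integral_add i4 i3]
    congr 1; funext z; ring
  have e8 : ∫ z, ((ν[fun z : X × X => f z.2 - P z.2 | msup S' T']) z) ^ 2 ∂ν =
      ∫ z, (q z - P z.2) ^ 2 ∂ν := by
    refine integral_congr_ae ?_
    filter_upwards [e1] with z hz
    rw [hz]
  rw [e8, e7, e2, e3, e4, e5, e6]
  unfold energy
  ring

end CubicAvg

namespace CubicAvg
open scoped ENNReal
open ProbabilityTheory

section
universe u
variable {X : Type u} [mX : MeasurableSpace X] [StandardBorelSpace X] {μ : Measure X}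
  [IsProbabilityMeasure μ] {S T : X → X} {C : ℝ} {f1 f2 f3 : X → ℝ}

lemma integral_abs_le {g : X → ℝ} {K τ : ℝ} (hτ : 0 < τ) (hg : Measurable g)
    (hb : ∀ᵐ x ∂μ, |g x| ≤ K) : ∫ x, |g x| ∂μ ≤ τ + (∫ x, g x ^ 2 ∂μ) / τ := by
  have i1 : Integrable (fun x => g x ^ 2) μ := by
    simpa only [sq] using integrable_mul_bdd hg hg hb hb
  have i2 : Integrable g μ := Integrable.of_bound hg.aestronglyMeasurable K hb
  have : τ + (∫ x, g x ^ 2 ∂μ) / τ = ∫ x, (τ + g x ^ 2 / τ) ∂μ := by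
    rw [integral_add (integrable_const _) (i1.div_const _), integral_div]; simp
  rw [this]
  refine integral_mono i2.abs ((integrable_const _).add (i1.div_const _)) fun x => ?_
  show |g x| ≤ τ + g x ^ 2 / τ
  rw [← sub_le_iff_le_add', le_div_iff₀ hτ, ← sq_abs]
  nlinarith [sq_nonneg (|g x| - τ), abs_nonneg (g x)]

lemma osc_of_small_increment (h : IsSys μ S T) (hC : 0 ≤ C) (h1 : BM f1 C) (h2 : BM f2 C)
    (h3 : BM f3 C) {ρ η : ℝ} (hρ : 0 < ρ) (hη : 0 < η)
    (hηρ : ((2 * C) ^ 4 * (1 + 2 * (2 * C) ^ 3)) * η ≤ ρ ^ 2 / 4)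
    (hE : energy (extM μ T) (Prod.map S S) (Prod.map id T) (fun z => f3 z.2) - energy μ S T f3
      ≤ η ^ 4) :
    ∫⁻ x, osc (fun N => cub S T f1 f2 f3 N x) ∂μ ≤ 2 * ENNReal.ofReal ρ := by
  obtain ⟨P, hPm, hPb, hPE⟩ := energy_step (μ := μ) (S := S) (T := T) hC h3
  have hPM : BM P C := ⟨hPm.mono (msup_le _ _) le_rfl, hPb⟩
  set D := 2 * C with hD
  have hD0 : 0 ≤ D := by positivity
  set F : X → ℝ := fun x => f3 x - P x with hF
  have hFb : BM F D := ⟨h3.meas.sub hPM.meas, fun x =>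
    (abs_sub _ _).trans (by have := h3.bound x; have := hPb x; linarith)⟩
  have h1' : BM f1 D := ⟨h1.meas, fun x => (h1.bound x).trans (by linarith)⟩
  have h2' : BM f2 D := ⟨h2.meas, fun x => (h2.bound x).trans (by linarith)⟩
  obtain ⟨κ, hκ, hκle⟩ := key h hD0 hFb
  have hF2 : BM (fun z : X × X => F z.2) D :=
    ⟨hFb.meas.comp measurable_snd, fun z => hFb.bound _⟩
  have hg := integral_abs_le (X := X × X) (μ := extM μ T) (τ := η ^ 2) (by positivity)
    (condExp_meas _ (msup_le (Prod.map S S) (Prod.map id T)) _)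
    (condExp_bdd (msup (Prod.map S S) (Prod.map id T)) hF2)
  have hκ2 : κ ≤ D ^ 3 * (2 * η ^ 2) := by
    refine hκle.trans (mul_le_mul_of_nonneg_left (hg.trans ?_) (by positivity))
    rw [hPE]
    have : (energy (extM μ T) (Prod.map S S) (Prod.map id T) (fun z => f3 z.2) - energy μ S T f3)
      / η ^ 2 ≤ η ^ 2 := by
      rw [div_le_iff₀ (by positivity)]
      calc _ ≤ η ^ 4 := hE
        _ = _ := by ring
    linarith
  have hδ : 0 < ρ / 2 := by positivity
  have hv : ∫⁻ x, lsup (fun N => cub S T f1 f2 F N x) ∂μ ≤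
      ENNReal.ofReal (ρ / 2 + D ^ 4 * (η + κ / η) / (ρ / 2)) := by
    refine ge_of_tendsto (ENNReal.tendsto_ofReal ((((hκ.div_const η).const_add η).const_mul
      (D ^ 4)).div_const (ρ / 2) |>.const_add (ρ / 2))) ?_
    filter_upwards [eventually_gt_atTop 0] with H hH
    exact lsup_cub_le_vdc h hD0 h1' h2' hFb hH hδ hη
  have hnum : ρ / 2 + D ^ 4 * (η + κ / η) / (ρ / 2) ≤ ρ := by
    have a1 : κ / η ≤ D ^ 3 * 2 * η := by
      rw [div_le_iff₀ hη]; calc _ ≤ _ := hκ2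
        _ = _ := by ring
    have a2 : D ^ 4 * (η + κ / η) ≤ ρ ^ 2 / 4 := by
      refine le_trans ?_ hηρ
      calc D ^ 4 * (η + κ / η) ≤ D ^ 4 * (η + D ^ 3 * 2 * η) := by gcongr
        _ = _ := by ring
    have a3 : D ^ 4 * (η + κ / η) / (ρ / 2) ≤ ρ / 2 := by
      rw [div_le_iff₀ hδ]; calc _ ≤ _ := a2
        _ = _ := by ring
    linarith
  refine lintegral_osc_le (measurable_cub h h1.meas h2.meas h3.meas)
    (measurable_cub h h1.meas h2.meas hPM.meas) (good_struct h hC h1 h2 hPm hC hPb) ?_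
  refine le_trans ?_ (hv.trans (ENNReal.ofReal_le_ofReal hnum))
  simp only [hF, cub_sub]
  exact le_rfl

/-- Energies of extensions. -/
def energies (μ : Measure X) (S T : X → X) (f : X → ℝ) : Set ℝ :=
  {e | ∃ (Z : Type u) (_ : MeasurableSpace Z) (_ : StandardBorelSpace Z) (ν : Measure Z)
    (_ : IsProbabilityMeasure ν) (S' T' : Z → Z) (p : Z → X), IsSys ν S' T' ∧
    MeasurePreserving p ν μ ∧ Function.Semiconj p S' S ∧ Function.Semiconj p T' T ∧
    e = energy ν S' T' (fun z => f (p z))}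

lemma energy_le {Z : Type*} [MeasurableSpace Z] {ν : Measure Z} [IsProbabilityMeasure ν]
    {S' T' : Z → Z} {f : Z → ℝ} (hf : BM f C) : energy ν S' T' f ≤ C ^ 2 := by
  have hm : Measurable (ν[f | msup S' T']) := condExp_meas _ (msup_le S' T') _
  have hb := condExp_bdd (μ := ν) (msup S' T') hf
  have : C ^ 2 = ∫ z, C ^ 2 ∂ν := by simp
  unfold energy
  rw [this]
  refine integral_mono_ae ?_ (integrable_const _) ?_
  · simpa only [sq] using integrable_mul_bdd hm hm hb hb
  · filter_upwards [hb] with z hz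
    exact sq_le_sq' (abs_le.1 hz).1 (abs_le.1 hz).2

lemma main_std (h : IsSys μ S T) (hC : 0 ≤ C) (h1 : BM f1 C) (h2 : BM f2 C) (h3 : BM f3 C) :
    Good μ S T f1 f2 f3 := by
  refine ae_tendsto_of_lintegral_osc (measurable_cub h h1.meas h2.meas h3.meas) fun ρ hρ => ?_
  set M := (2 * C) ^ 4 * (1 + 2 * (2 * C) ^ 3) with hM
  have hM0 : 0 ≤ M := by positivity
  set η := (ρ / 2) ^ 2 / 4 / (M + 1) with hη
  have hη0 : 0 < η := by positivity
  have hMη : M * η ≤ (ρ / 2) ^ 2 / 4 := by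
    have : (M + 1) * η = (ρ / 2) ^ 2 / 4 := by rw [hη]; field_simp
    linarith
  have hbdd : BddAbove (energies μ S T f3) := by
    refine ⟨C ^ 2, ?_⟩
    rintro e ⟨Z, _, _, ν, _, S', T', p, hs, hp, -, -, rfl⟩
    exact energy_le ⟨h3.meas.comp hp.measurable, fun z => h3.bound _⟩
  have hne : (energies μ S T f3).Nonempty :=
    ⟨_, X, mX, inferInstance, μ, inferInstance, S, T, id, h, MeasurePreserving.id μ,
      fun _ => rfl, fun _ => rfl, rfl⟩
  have hη4 : 0 < η ^ 4 := by positivity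
  obtain ⟨e, ⟨Z, mZ, hZ, ν, hν, S', T', p, hs, hp, hpS, hpT, rfl⟩, he⟩ :=
    exists_lt_of_lt_csSup hne (sub_lt_self (sSup (energies μ S T f3)) hη4)
  have hplus : energy (extM ν T') (Prod.map S' S') (Prod.map id T') (fun z => f3 (p z.2)) ∈
      energies μ S T f3 :=
    ⟨Z × Z, inferInstance, inferInstance, extM ν T', inferInstance, Prod.map S' S',
      Prod.map id T', fun z => p z.2, isSys_ext hs, hp.comp mp_snd,
      fun z => hpS z.2, fun z => hpT z.2, rfl⟩
  have hle := le_csSup hbdd hplus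
  have b : ∀ f : X → ℝ, BM f C → BM (fun z => f (p z)) C := fun f hf =>
    ⟨hf.meas.comp hp.measurable, fun z => hf.bound _⟩
  have hfin := osc_of_small_increment hs hC (b f1 h1) (b f2 h2) (b f3 h3) (ρ := ρ / 2)
    (by positivity) hη0 hMη (by linarith)
  have hcub : ∀ N z, cub S' T' (fun z => f1 (p z)) (fun z => f2 (p z)) (fun z => f3 (p z)) N z =
      cub S T f1 f2 f3 N (p z) := by
    intro N z
    have e1 : ∀ i z, p (S'^[i] z) = S^[i] (p z) := fun i z => (hpS.iterate_right i) z
    have e2 : ∀ i z, p (T'^[i] z) = T^[i] (p z) := fun i z => (hpT.iterate_right i) z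
    simp only [cub, e1, e2]
  simp only [hcub] at hfin
  rw [hp.lintegral_comp (f := fun x => osc (fun N => cub S T f1 f2 f3 N x))
    (measurable_osc (measurable_cub h h1.meas h2.meas h3.meas))] at hfin
  refine hfin.trans (le_of_eq ?_)
  rw [show (2 : ℝ≥0∞) = ENNReal.ofReal 2 by simp, ← ENNReal.ofReal_mul (by norm_num)]
  congr 1; ring

end

section
variable {X : Type*} [mX : MeasurableSpace X] {μ : Measure X} [IsProbabilityMeasure μ]
  {S T : X → X} {C : ℝ} {f1 f2 f3 : X → ℝ}

/-- The coding map to a standard Borel space. -/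
def code (S T : X → X) (f1 f2 f3 : X → ℝ) (x : X) : ℕ × ℕ → ℝ × ℝ × ℝ := fun p =>
  (f1 (S^[p.1] (T^[p.2] x)), f2 (S^[p.1] (T^[p.2] x)), f3 (S^[p.1] (T^[p.2] x)))

/-- Clipping. -/
noncomputable def clip (C t : ℝ) : ℝ := max (-C) (min C t)

lemma clip_eq {t : ℝ} (ht : |t| ≤ C) : clip C t = t := by
  obtain ⟨h1, h2⟩ := abs_le.1 ht
  rw [clip, min_eq_right h2, max_eq_right h1]

lemma clip_BM {Y : Type*} [MeasurableSpace Y] (hC : 0 ≤ C) {g : Y → ℝ} (hg : Measurable g) :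
    BM (fun y => clip C (g y)) C :=
  ⟨measurable_const.max (measurable_const.min hg), fun y => abs_le.2
    ⟨le_max_left _ _, max_le (by linarith) (min_le_left _ _)⟩⟩

lemma main_gen (h : IsSys μ S T) (hC : 0 ≤ C) (h1 : BM f1 C) (h2 : BM f2 C) (h3 : BM f3 C) :
    Good μ S T f1 f2 f3 := by
  set Y := ℕ × ℕ → ℝ × ℝ × ℝ with hY
  set π : X → Y := code S T f1 f2 f3 with hπ
  have hSi : ∀ i, Measurable (S^[i]) := fun i => h.mpS.measurable.iterate i
  have hTi : ∀ i, Measurable (T^[i]) := fun i => h.mpT.measurable.iterate i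
  have hπm : Measurable π := by
    refine measurable_pi_lambda _ fun q => ?_
    have := (hSi q.1).comp (hTi q.2)
    exact (h1.meas.comp this).prodMk ((h2.meas.comp this).prodMk (h3.meas.comp this))
  set SY : Y → Y := fun y q => y (q.1 + 1, q.2) with hSY
  set TY : Y → Y := fun y q => y (q.1, q.2 + 1) with hTY
  have hSYm : Measurable SY := measurable_pi_lambda _ fun q => measurable_pi_apply _
  have hTYm : Measurable TY := measurable_pi_lambda _ fun q => measurable_pi_apply _
  have cS : ∀ x, π (S x) = SY (π x) := by
    intro x; funext q
    have : S^[q.1] (T^[q.2] (S x)) = S^[q.1 + 1] (T^[q.2] x) := by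
      rw [Function.iterate_succ_apply]
      congr 1
      exact (h.iter 1 q.2 x).symm
    simp only [hπ, code, hSY, this]
  have cT : ∀ x, π (T x) = TY (π x) := by
    intro x; funext q
    simp only [hπ, code, hTY, Function.iterate_succ_apply]
  set ν : Measure Y := μ.map π with hν
  have hp : MeasurePreserving π μ ν := ⟨hπm, rfl⟩
  haveI : IsProbabilityMeasure ν := Measure.isProbabilityMeasure_map hπm.aemeasurable
  have mp : ∀ (R : X → X) (RY : Y → Y), MeasurePreserving R μ μ → Measurable RY →
      (∀ x, π (R x) = RY (π x)) → MeasurePreserving RY ν ν := by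
    intro R RY hR hRY hc
    refine ⟨hRY, ?_⟩
    rw [hν, Measure.map_map hRY hπm]
    have : RY ∘ π = π ∘ R := by funext x; exact (hc x).symm
    rw [this, ← Measure.map_map hπm hR.measurable, hR.map_eq]
  have hs : IsSys ν SY TY := ⟨mp S SY h.mpS hSYm cS, mp T TY h.mpT hTYm cT, fun y => rfl⟩
  have m1 : Measurable (fun y : Y => (y (0, 0)).1) := (measurable_pi_apply _).fst
  have m2 : Measurable (fun y : Y => (y (0, 0)).2.1) := (measurable_pi_apply _).snd.fst
  have m3 : Measurable (fun y : Y => (y (0, 0)).2.2) := (measurable_pi_apply _).snd.snd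
  have hgood := main_std hs hC (clip_BM hC m1) (clip_BM hC m2) (clip_BM hC m3)
  have := ae_of_ae_map hπm.aemeasurable hgood
  filter_upwards [this] with x ⟨L, hL⟩
  refine ⟨L, hL.congr fun N => ?_⟩
  have e1 : ∀ i x, SY^[i] (π x) = π (S^[i] x) := fun i x =>
    ((Function.Semiconj.iterate_right (f := π) (ga := S) (gb := SY) cS i) x).symm
  have e2 : ∀ i x, TY^[i] (π x) = π (T^[i] x) := fun i x =>
    ((Function.Semiconj.iterate_right (f := π) (ga := T) (gb := TY) cT i) x).symm
  have k1 : ∀ x, clip C ((π x) (0, 0)).1 = f1 x := fun x => clip_eq (h1.bound x)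
  have k2 : ∀ x, clip C ((π x) (0, 0)).2.1 = f2 x := fun x => clip_eq (h2.bound x)
  have k3 : ∀ x, clip C ((π x) (0, 0)).2.2 = f3 x := fun x => clip_eq (h3.bound x)
  simp only [cub, e1, e2, k1, k2, k3]

end

end CubicAvg

/-- pointwise convergence of the cubic average
`(1/N²) Σ_{i,j=0}^{N-1} f1(S^i x) f2(T^j x) f3(S^i T^j x)` for an ergodic system with
two commuting invertible measure-preserving transformations. -/
theorem pointwise_cubic_average {X : Type*} [MeasurableSpace X]
    (μ : Measure X) [IsProbabilityMeasure μ]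
    (S T : X ≃ᵐ X) (hS : MeasurePreserving S μ μ) (hT : MeasurePreserving T μ μ)
    (hcomm : ∀ x, S (T x) = T (S x))
    (herg : ∀ s : Set X, MeasurableSet s → ⇑S ⁻¹' s = s → ⇑T ⁻¹' s = s → μ s = 0 ∨ μ s = 1)
    (f1 f2 f3 : X → ℝ) (hf1 : Measurable f1) (hf2 : Measurable f2) (hf3 : Measurable f3)
    (hb1 : ∃ C, ∀ x, |f1 x| ≤ C) (hb2 : ∃ C, ∀ x, |f2 x| ≤ C) (hb3 : ∃ C, ∀ x, |f3 x| ≤ C) :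
    ∀ᵐ x ∂μ, ∃ L : ℝ, Tendsto (fun N : ℕ =>
      ((N : ℝ) ^ 2)⁻¹ * ∑ i ∈ Finset.range N, ∑ j ∈ Finset.range N,
        f1 ((⇑S)^[i] x) * f2 ((⇑T)^[j] x) * f3 ((⇑S)^[i] ((⇑T)^[j] x)))
      atTop (nhds L) := by
  obtain ⟨C1, h1⟩ := hb1
  obtain ⟨C2, h2⟩ := hb2
  obtain ⟨C3, h3⟩ := hb3
  have key : ∀ f : X → ℝ, ∀ c, Measurable f → (∀ x, |f x| ≤ c) → c ≤ |C1| + |C2| + |C3| →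
      CubicAvg.BM f (|C1| + |C2| + |C3|) := fun f c hf hb hc => ⟨hf, fun x => (hb x).trans hc⟩
  have a1 := le_abs_self C1
  have a2 := le_abs_self C2
  have a3 := le_abs_self C3
  have b1 := abs_nonneg C1
  have b2 := abs_nonneg C2
  have b3 := abs_nonneg C3
  have hgood := CubicAvg.main_gen (μ := μ) (S := S) (T := T) ⟨hS, hT, hcomm⟩
    (by linarith : 0 ≤ |C1| + |C2| + |C3|) (key f1 C1 hf1 h1 (by linarith))
    (key f2 C2 hf2 h2 (by linarith)) (key f3 C3 hf3 h3 (by linarith))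
  filter_upwards [hgood] with x ⟨L, hL⟩
  refine ⟨L, hL.congr fun N => ?_⟩
  simp only [CubicAvg.cub, CubicAvg.avg, ← Finset.mul_sum]
  rw [← mul_assoc, sq, mul_inv]
end

section
/- Let (X,μ,S,T) be a free magic ergodic measure preserving system with commuting transformations S and T, and let W = I_S ∨ I_T. Then the σ-algebra of (T×T)-invariant sets of (X², μ_S) is measurable with respect to W ⊗ W; equivalently, for all f0, f1 ∈ L∞(μ), E(f0 ⊗ f1 | I_{T×T}) = E(E(f0|W) ⊗ E(f1|W) | I_{T×T}) holds μ_S-almost everywhere. -/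
open MeasureTheory Filter
open scoped symmDiff

/-- The σ-algebra of `R`-invariant measurable sets. -/
def invSigma {X : Type*} [MeasurableSpace X] (R : X → X) : MeasurableSpace X where
  MeasurableSet' s := MeasurableSet s ∧ R ⁻¹' s = s
  measurableSet_empty := ⟨MeasurableSet.empty, rfl⟩
  measurableSet_compl s hs := ⟨hs.1.compl, by rw [Set.preimage_compl, hs.2]⟩
  measurableSet_iUnion f hf := ⟨MeasurableSet.iUnion fun i => (hf i).1, by
    rw [Set.preimage_iUnion]; exact Set.iUnion_congr fun i => (hf i).2⟩

/-- `μ2` is the relatively independent self-joining of `μ` over `I_R`. -/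
def IsRelIndJoining {X : Type*} [MeasurableSpace X] (μ : Measure X) (R : X → X)
    (μ2 : Measure (X × X)) : Prop :=
  ∀ f0 f1 : X → ℝ, Measurable f0 → Measurable f1 →
    (∃ C, ∀ x, |f0 x| ≤ C) → (∃ C, ∀ x, |f1 x| ≤ C) →
    ∫ p, f0 p.1 * f1 p.2 ∂μ2 =
      ∫ x, (μ[f0 | invSigma R]) x * (μ[f1 | invSigma R]) x ∂μ

/-- `μ4` is the relatively independent self-joining of `μ2` over `I_{T×T}`. -/
def IsHostJoining {X : Type*} [MeasurableSpace X] (μ2 : Measure (X × X)) (T : X → X)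
    (μ4 : Measure (X × X × X × X)) : Prop :=
  ∀ f0 f1 f2 f3 : X → ℝ, Measurable f0 → Measurable f1 → Measurable f2 → Measurable f3 →
    (∃ C, ∀ x, |f0 x| ≤ C) → (∃ C, ∀ x, |f1 x| ≤ C) →
    (∃ C, ∀ x, |f2 x| ≤ C) → (∃ C, ∀ x, |f3 x| ≤ C) →
    ∫ p, f0 p.1 * f1 p.2.1 * f2 p.2.2.1 * f3 p.2.2.2 ∂μ4 =
      ∫ q, (μ2[(fun r => f0 r.1 * f1 r.2) | invSigma (Prod.map T T)]) q *
           (μ2[(fun r => f2 r.1 * f3 r.2) | invSigma (Prod.map T T)]) q ∂μ2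

/-- The Host seminorm `|||f|||_{μ,S,T}` of `f`, computed from the Host measure `μ_{S,T}`. -/
noncomputable def hostSeminorm {X : Type*} [MeasurableSpace X]
    (μ4 : Measure (X × X × X × X)) (f : X → ℝ) : ℝ :=
  (∫ p, f p.1 * f p.2.1 * f p.2.2.1 * f p.2.2.2 ∂μ4) ^ ((1 : ℝ) / 4)

theorem invSigma_le' {Y : Type*} [m0 : MeasurableSpace Y] (R : Y → Y) : invSigma R ≤ m0 :=
  fun _ hs => hs.1

theorem aesm_inv {Y : Type*} [MeasurableSpace Y] {ν : Measure Y} {R : Y → Y}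
    (hR : MeasurePreserving R ν ν) {g : Y → ℝ} (hg : AEStronglyMeasurable g ν)
    (hinv : g ∘ R =ᵐ[ν] g) : AEStronglyMeasurable[invSigma R] g ν := by
  set g' := hg.mk g with hg'
  have hgm : Measurable g' := hg.stronglyMeasurable_mk.measurable
  have hgg : g =ᵐ[ν] g' := hg.ae_eq_mk
  have hinv' : g' ∘ R =ᵐ[ν] g' :=
    ((hR.quasiMeasurePreserving.ae_eq_comp hgg).symm.trans hinv).trans hgg
  have hn : ∀ n : ℕ, g' ∘ R^[n] =ᵐ[ν] g' := by
    intro n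
    induction n with
    | zero => simp
    | succ k ih =>
      rw [Function.iterate_succ, ← Function.comp_assoc]
      exact (hR.quasiMeasurePreserving.ae_eq_comp ih).trans hinv'
  let p : Y → ℝ := fun x => limsup (fun n => g' (R^[n] x)) atTop
  have hpm : Measurable p :=
    Measurable.limsup (fun n => hgm.comp (hR.measurable.iterate n))
  have hpR : ∀ x, p (R x) = p x := by
    intro x
    have := Filter.limsup_nat_add (fun n => g' (R^[n] x)) 1
    simpa [p, Function.iterate_succ_apply] using this
  have hpm' : Measurable[invSigma R] p := by
    intro B hB
    refine ⟨hpm hB, ?_⟩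
    ext x
    simp [hpR]
  refine ⟨p, hpm'.stronglyMeasurable, ?_⟩
  refine hgg.trans ?_
  filter_upwards [ae_all_iff.2 hn] with x hx
  have : (fun n => g' (R^[n] x)) = fun _ => g' x := by
    funext n; exact hx n
  simp [p, this]

theorem mean_erg {Y : Type*} [MeasurableSpace Y] {ν : Measure Y} [IsProbabilityMeasure ν]
    {R : Y → Y} (hR : MeasurePreserving R ν ν) {F : Y → ℝ} (hF : MemLp F 2 ν) :
    Tendsto (fun N : ℕ => (N : ℝ)⁻¹ * ∑ n ∈ Finset.range N, ∫ y, F (R^[n] y) * F y ∂ν) atTop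
      (nhds (∫ y, (ν[F | invSigma R]) y ^ 2 ∂ν)) := by
  let U : Lp ℝ 2 ν →L[ℝ] Lp ℝ 2 ν :=
    (Lp.compMeasurePreservingₗᵢ ℝ R hR).toContinuousLinearMap
  have hU : ‖U‖ ≤ 1 := LinearIsometry.norm_toContinuousLinearMap_le _
  have hconv := U.tendsto_birkhoffAverage_orthogonalProjection hU (hF.toLp F)
  set K := U.eqLocus (1 : Lp ℝ 2 ν →L[ℝ] Lp ℝ 2 ν) with hK
  set P : Lp ℝ 2 ν := (K.orthogonalProjectionOnto (hF.toLp F) : Lp ℝ 2 ν) with hP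
  have hUcoe : ∀ g : Lp ℝ 2 ν, U g =ᵐ[ν] g ∘ R := fun g =>
    Lp.coeFn_compMeasurePreserving g hR
  have hPK : P ∈ K := (K.orthogonalProjectionOnto (hF.toLp F)).2
  have hPinv : P ∘ R =ᵐ[ν] P := by
    have h1 : U P = P := by
      have := hPK
      rw [hK] at this
      simpa using this
    have := hUcoe P
    rw [h1] at this
    exact this.symm
  have hPm : AEStronglyMeasurable[invSigma R] P ν :=
    aesm_inv hR (Lp.aestronglyMeasurable P) hPinv
  have horth : ∀ g ∈ K, inner ℝ g (hF.toLp F) = inner ℝ g P := by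
    intro g hg
    have := K.inner_right_of_mem_orthogonal hg
      (K.sub_starProjection_mem_orthogonal (hF.toLp F))
    rw [inner_sub_right, sub_eq_zero] at this
    exact this
  have hPE : P =ᵐ[ν] ν[F | invSigma R] := by
    refine ae_eq_condExp_of_forall_setIntegral_eq (invSigma_le' R)
      (hF.integrable (by norm_num)) ?_ ?_ hPm
    · intro s _ _
      exact ((Lp.memLp P).integrable (by norm_num)).integrableOn
    · intro s hs _
      have hmem : indicatorConstLp 2 hs.1 (measure_ne_top ν s) (1 : ℝ) ∈ K := by
        have : U (indicatorConstLp 2 hs.1 (measure_ne_top ν s) (1 : ℝ)) =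
            indicatorConstLp 2 hs.1 (measure_ne_top ν s) (1 : ℝ) := by
          refine (Lp.indicatorConstLp_compMeasurePreserving hs.1 (measure_ne_top ν s) 1 hR).trans ?_
          congr 1
          exact hs.2
        rw [hK]
        simpa using this
      have h2 := horth _ hmem
      rw [L2.inner_indicatorConstLp_one, L2.inner_indicatorConstLp_one] at h2
      rw [← h2]
      exact setIntegral_congr_ae hs.1 (hF.coeFn_toLp.mono fun x hx _ => hx)
  have hlim : inner ℝ P (hF.toLp F) = ∫ y, (ν[F | invSigma R]) y ^ 2 ∂ν := by
    rw [horth P hPK, L2.inner_def]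
    refine integral_congr_ae ?_
    filter_upwards [hPE] with x hx
    rw [hx]
    simp [sq]
  rw [← hlim]
  have hit : ∀ n : ℕ, (U^[n] (hF.toLp F)) =ᵐ[ν] F ∘ R^[n] := by
    intro n
    induction n with
    | zero => simpa using hF.coeFn_toLp
    | succ k ih =>
      rw [Function.iterate_succ_apply', Function.iterate_succ, ← Function.comp_assoc]
      exact (hUcoe _).trans (hR.quasiMeasurePreserving.ae_eq_comp ih)
  have h3 := hconv.inner (tendsto_const_nhds (x := hF.toLp F)) (𝕜 := ℝ)
  refine h3.congr fun N => ?_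
  simp only [birkhoffAverage, birkhoffSum, real_inner_smul_left, sum_inner, _root_.id]
  congr 1
  refine Finset.sum_congr rfl fun n _ => ?_
  rw [L2.inner_def]
  refine integral_congr_ae ?_
  filter_upwards [hit n, hF.coeFn_toLp] with x h1 h2
  rw [h1, h2]
  simp [mul_comm]

theorem condExp_comp_equiv {Y : Type*} {m m0 : MeasurableSpace Y} {ν : Measure Y}
    [IsProbabilityMeasure ν] (hm : m ≤ m0) (φ : Y ≃ᵐ Y) (hφ : MeasurePreserving φ ν ν)
    (h1 : Measurable[m, m] φ) (h2 : Measurable[m, m] φ.symm) {f : Y → ℝ} (hf : Integrable f ν) :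
    ν[f ∘ φ | m] =ᵐ[ν] ν[f | m] ∘ φ := by
  symm
  refine ae_eq_condExp_of_forall_setIntegral_eq hm
      (hφ.integrable_comp_of_integrable hf) ?_ ?_ ?_
  · intro s _ _
    exact (hφ.integrable_comp_of_integrable integrable_condExp).integrableOn
  · intro s hs _
    have hs' : MeasurableSet[m] (φ.symm ⁻¹' s) := h2 hs
    have e : s = φ ⁻¹' (φ.symm ⁻¹' s) := by
      ext x; simp
    rw [e]
    simp only [Function.comp_apply]
    rw [hφ.setIntegral_preimage_emb φ.measurableEmbedding,
      hφ.setIntegral_preimage_emb φ.measurableEmbedding]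
    exact setIntegral_condExp hm hf hs'
  · exact (stronglyMeasurable_condExp.comp_measurable h1).aestronglyMeasurable

theorem bdd_memLp {Y : Type*} [MeasurableSpace Y] {ν : Measure Y} [IsFiniteMeasure ν]
    {f : Y → ℝ} (hf : Measurable f) (hb : ∃ C, ∀ x, |f x| ≤ C) : MemLp f 2 ν := by
  obtain ⟨C, hC⟩ := hb
  exact MemLp.of_bound hf.aestronglyMeasurable C (Eventually.of_forall hC)

theorem bdd_mul {Y : Type*} {f g : Y → ℝ} (hf : ∃ C, ∀ x, |f x| ≤ C)
    (hg : ∃ C, ∀ x, |g x| ≤ C) : ∃ C, ∀ x, |f x * g x| ≤ C := by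
  obtain ⟨C, hC⟩ := hf
  obtain ⟨D, hD⟩ := hg
  refine ⟨C * D, fun x => ?_⟩
  rw [abs_mul]
  exact mul_le_mul (hC x) (hD x) (abs_nonneg _) ((abs_nonneg _).trans (hC x))

theorem bdd_tensor {Y : Type*} {f g : Y → ℝ} (hf : ∃ C, ∀ x, |f x| ≤ C)
    (hg : ∃ C, ∀ x, |g x| ≤ C) : ∃ C, ∀ r : Y × Y, |f r.1 * g r.2| ≤ C :=
  bdd_mul (f := fun r : Y × Y => f r.1) (g := fun r : Y × Y => g r.2)
    (hf.imp fun _ h r => h r.1) (hg.imp fun _ h r => h r.2)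

theorem bdd_sub {Y : Type*} {f g : Y → ℝ} (hf : ∃ C, ∀ x, |f x| ≤ C)
    (hg : ∃ C, ∀ x, |g x| ≤ C) : ∃ C, ∀ x, |f x - g x| ≤ C := by
  obtain ⟨C, hC⟩ := hf
  obtain ⟨D, hD⟩ := hg
  exact ⟨C + D, fun x => (abs_sub _ _).trans (add_le_add (hC x) (hD x))⟩

theorem bdd_indicator {Y : Type*} (s : Set Y) :
    ∃ C, ∀ x, |s.indicator (fun _ => (1 : ℝ)) x| ≤ C := by
  refine ⟨1, fun x => ?_⟩
  by_cases h : x ∈ s <;> simp [h]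

section joining
variable {X : Type*} [MeasurableSpace X] {μ : Measure X} [IsProbabilityMeasure μ]
    {S : X → X} {μS : Measure (X × X)}

theorem joining_prob (h : IsRelIndJoining μ S μS) : IsProbabilityMeasure μS := by
  have h1 := h (fun _ => 1) (fun _ => 1) measurable_const measurable_const
    ⟨1, by simp⟩ ⟨1, by simp⟩
  rw [condExp_const (invSigma_le' S)] at h1
  simp at h1
  constructor
  rw [Measure.real, ENNReal.toReal_eq_one_iff] at h1
  exact h1

theorem indicator_tensor {Y : Type*} (s t : Set Y) :
    (fun p : Y × Y => s.indicator (fun _ => (1 : ℝ)) p.1 * t.indicator (fun _ => (1 : ℝ)) p.2) =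
      (s ×ˢ t).indicator (fun _ => (1 : ℝ)) := by
  funext p
  by_cases h1 : p.1 ∈ s <;> by_cases h2 : p.2 ∈ t <;> simp [Set.indicator, h1, h2]

theorem joining_rect (h : IsRelIndJoining μ S μS) {s t : Set X} (hs : MeasurableSet s)
    (ht : MeasurableSet t) : μS.real (s ×ˢ t) =
      ∫ x, (μ[s.indicator (fun _ => (1 : ℝ)) | invSigma S]) x *
        (μ[t.indicator (fun _ => (1 : ℝ)) | invSigma S]) x ∂μ := by
  rw [← h _ _ (measurable_const.indicator hs) (measurable_const.indicator ht)
    (bdd_indicator s) (bdd_indicator t), indicator_tensor]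
  rw [integral_indicator_const _ (hs.prod ht)]
  simp

theorem joining_fst (h : IsRelIndJoining μ S μS) : MeasurePreserving Prod.fst μS μ := by
  have := joining_prob h
  refine ⟨measurable_fst, ?_⟩
  ext s hs
  rw [Measure.map_apply measurable_fst hs, ← Set.prod_univ,
    ← measureReal_eq_measureReal_iff, joining_rect h hs .univ]
  rw [Set.indicator_univ, condExp_const (invSigma_le' S)]
  simp only [mul_one]
  rw [integral_condExp (invSigma_le' S), integral_indicator_const _ hs]
  simp

theorem joining_snd (h : IsRelIndJoining μ S μS) : MeasurePreserving Prod.snd μS μ := by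
  have := joining_prob h
  refine ⟨measurable_snd, ?_⟩
  ext s hs
  rw [Measure.map_apply measurable_snd hs, ← Set.univ_prod,
    ← measureReal_eq_measureReal_iff, joining_rect h .univ hs]
  rw [Set.indicator_univ, condExp_const (invSigma_le' S)]
  simp only [one_mul]
  rw [integral_condExp (invSigma_le' S), integral_indicator_const _ hs]
  simp

theorem invSigma_meas_comm {S T : X → X} (hT : Measurable T) (hc : ∀ x, S (T x) = T (S x)) :
    Measurable[invSigma S, invSigma S] T := by
  intro s hs
  refine ⟨hT hs.1, ?_⟩
  ext x
  have h2 : ∀ y, S y ∈ s ↔ y ∈ s := fun y => by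
    conv_rhs => rw [← hs.2]
    rfl
  simp only [Set.mem_preimage]
  rw [← hc, h2]

theorem joining_map {T : X ≃ᵐ X} (h : IsRelIndJoining μ S μS) (hT : MeasurePreserving T μ μ)
    (hcomm : ∀ x, S (T x) = T (S x)) : MeasurePreserving (Prod.map T T) μS μS := by
  have := joining_prob h
  have hmeas : Measurable (Prod.map T T) := T.measurable.prodMap T.measurable
  have hcomm' : ∀ x, S (T.symm x) = T.symm (S x) := fun x => by
    apply T.injective
    rw [← hcomm]; simp
  have hint : ∀ s : Set X, MeasurableSet s →
      Integrable (s.indicator (fun _ => (1 : ℝ))) μ := fun s hs =>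
    (integrable_const 1).indicator hs
  have key : ∀ s : Set X, MeasurableSet s →
      μ[(T ⁻¹' s).indicator (fun _ => (1 : ℝ)) | invSigma S] =ᵐ[μ]
        μ[s.indicator (fun _ => (1 : ℝ)) | invSigma S] ∘ T := fun s hs =>
    condExp_comp_equiv (invSigma_le' S) T hT
      (invSigma_meas_comm T.measurable hcomm) (invSigma_meas_comm T.symm.measurable hcomm')
      (hint s hs)
  refine ⟨hmeas, ?_⟩
  have : IsProbabilityMeasure (Measure.map (Prod.map T T) μS) :=
    Measure.isProbabilityMeasure_map hmeas.aemeasurable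
  refine Measure.ext_prod fun {s t} hs ht => ?_
  rw [Measure.map_apply hmeas (hs.prod ht)]
  have e : Prod.map T T ⁻¹' (s ×ˢ t) = (T ⁻¹' s) ×ˢ (T ⁻¹' t) := rfl
  rw [e, ← measureReal_eq_measureReal_iff,
    joining_rect h (T.measurable hs) (T.measurable ht), joining_rect h hs ht]
  rw [← hT.integral_comp T.measurableEmbedding (fun x =>
    (μ[s.indicator (fun _ => (1 : ℝ)) | invSigma S]) x *
        (μ[t.indicator (fun _ => (1 : ℝ)) | invSigma S]) x)]
  refine integral_congr_ae ?_
  filter_upwards [key s hs, key t ht] with x h1 h2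
  rw [h1, h2]
  rfl

theorem cs_ineq {T : X ≃ᵐ X} (h : IsRelIndJoining μ S μS) (hT : MeasurePreserving T μ μ)
    (hcomm : ∀ x, S (T x) = T (S x)) {f g : X → ℝ} (hf : Measurable f) (hg : Measurable g)
    (bf : ∃ C, ∀ x, |f x| ≤ C) (bg : ∃ C, ∀ x, |g x| ≤ C) (t : ℝ) (ht : 0 < t) :
    2 * ∫ q, (μS[(fun r => f r.1 * g r.2) | invSigma (Prod.map T T)]) q ^ 2 ∂μS ≤
      t * ∫ q, (μS[(fun r => f r.1 * f r.2) | invSigma (Prod.map T T)]) q ^ 2 ∂μS +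
      t⁻¹ * ∫ q, (μS[(fun r => g r.1 * g r.2) | invSigma (Prod.map T T)]) q ^ 2 ∂μS := by
  have := joining_prob h
  have hR := joining_map h hT hcomm
  have me : ∀ u v : X → ℝ, Measurable u → Measurable v → (∃ C, ∀ x, |u x| ≤ C) →
      (∃ C, ∀ x, |v x| ≤ C) →
      Tendsto (fun N : ℕ => (N : ℝ)⁻¹ * ∑ n ∈ Finset.range N,
        ∫ x, (μ[fun x => u (T^[n] x) * u x | invSigma S]) x *
          (μ[fun x => v (T^[n] x) * v x | invSigma S]) x ∂μ) atTop
        (nhds (∫ q, (μS[(fun r => u r.1 * v r.2) | invSigma (Prod.map T T)]) q ^ 2 ∂μS)) := by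
    intro u v hu hv bu bv
    have hm : Measurable (fun r : X × X => u r.1 * v r.2) :=
      (hu.comp measurable_fst).mul (hv.comp measurable_snd)
    refine (mean_erg hR (bdd_memLp hm (bdd_tensor bu bv))).congr fun N => ?_
    congr 1
    refine Finset.sum_congr rfl fun n _ => ?_
    have hTn : Measurable (T^[n]) := T.measurable.iterate n
    rw [← h (fun x => u (T^[n] x) * u x) (fun x => v (T^[n] x) * v x)
      ((hu.comp hTn).mul hu) ((hv.comp hTn).mul hv)
      (bdd_mul (bu.imp fun _ h x => h _) bu) (bdd_mul (bv.imp fun _ h x => h _) bv)]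
    refine integral_congr_ae (Eventually.of_forall fun p => ?_)
    simp only [Prod.map_iterate, Prod.map_fst, Prod.map_snd]
    ring
  have lhs := (me f g hf hg bf bg).const_mul 2
  have rhs := ((me f f hf hf bf bf).const_mul t).add ((me g g hg hg bg bg).const_mul t⁻¹)
  refine le_of_tendsto_of_tendsto' lhs rhs fun N => ?_
  have hterm : ∀ n : ℕ,
      2 * ∫ x, (μ[fun x => f (T^[n] x) * f x | invSigma S]) x *
          (μ[fun x => g (T^[n] x) * g x | invSigma S]) x ∂μ ≤
      t * ∫ x, (μ[fun x => f (T^[n] x) * f x | invSigma S]) x *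
          (μ[fun x => f (T^[n] x) * f x | invSigma S]) x ∂μ +
      t⁻¹ * ∫ x, (μ[fun x => g (T^[n] x) * g x | invSigma S]) x *
          (μ[fun x => g (T^[n] x) * g x | invSigma S]) x ∂μ := by
    intro n
    have hTn : Measurable (T^[n]) := T.measurable.iterate n
    have la : MemLp (μ[fun x => f (T^[n] x) * f x | invSigma S]) 2 μ :=
      (bdd_memLp ((hf.comp hTn).mul hf) (bdd_mul (bf.imp fun _ h x => h _) bf)).condExp (by norm_num)
    have lb : MemLp (μ[fun x => g (T^[n] x) * g x | invSigma S]) 2 μ :=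
      (bdd_memLp ((hg.comp hTn).mul hg) (bdd_mul (bg.imp fun _ h x => h _) bg)).condExp (by norm_num)
    generalize (μ[fun x => f (T^[n] x) * f x | invSigma S]) = a at la ⊢
    generalize (μ[fun x => g (T^[n] x) * g x | invSigma S]) = b at lb ⊢
    have iaa : Integrable (fun x => a x * a x) μ := la.integrable_mul la
    have iab : Integrable (fun x => a x * b x) μ := la.integrable_mul lb
    have ibb : Integrable (fun x => b x * b x) μ := lb.integrable_mul lb
    rw [← integral_const_mul, ← integral_const_mul, ← integral_const_mul,
      ← integral_add (iaa.const_mul t) (ibb.const_mul t⁻¹)]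
    refine integral_mono (iab.const_mul 2) ((iaa.const_mul t).add (ibb.const_mul t⁻¹)) fun x => ?_
    have e : t * (a x * a x) + t⁻¹ * (b x * b x) - 2 * (a x * b x) =
        t⁻¹ * (t * a x - b x) ^ 2 := by
      field_simp
      ring
    have : 0 ≤ t⁻¹ * (t * a x - b x) ^ 2 := by positivity
    change 2 * (a x * b x) ≤ t * (a x * a x) + t⁻¹ * (b x * b x)
    linarith
  have hs := Finset.sum_le_sum (s := Finset.range N) fun n _ => hterm n
  rw [Finset.sum_add_distrib, ← Finset.mul_sum, ← Finset.mul_sum, ← Finset.mul_sum] at hs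
  have hN : (0 : ℝ) ≤ (N : ℝ)⁻¹ := by positivity
  have := mul_le_mul_of_nonneg_left hs hN
  linarith

theorem cs_zero {T : X ≃ᵐ X} (h : IsRelIndJoining μ S μS) (hT : MeasurePreserving T μ μ)
    (hcomm : ∀ x, S (T x) = T (S x)) {f g : X → ℝ} (hf : Measurable f) (hg : Measurable g)
    (bf : ∃ C, ∀ x, |f x| ≤ C) (bg : ∃ C, ∀ x, |g x| ≤ C)
    (hz : ∫ q, (μS[(fun r => f r.1 * f r.2) | invSigma (Prod.map T T)]) q ^ 2 ∂μS = 0) :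
    (μS[(fun r => f r.1 * g r.2) | invSigma (Prod.map T T)]) =ᵐ[μS] 0 ∧
    (μS[(fun r => g r.1 * f r.2) | invSigma (Prod.map T T)]) =ᵐ[μS] 0 := by
  have := joining_prob h
  have small : ∀ A B : ℝ, 0 ≤ A → (∀ t : ℝ, 0 < t → 2 * A ≤ t * B) → A = 0 := by
    intro A B hA hAB
    by_contra hne
    have hpos : 0 < A := lt_of_le_of_ne hA (Ne.symm hne)
    have h1 := hAB 1 one_pos
    have hB : 0 < B := by linarith
    have h2 := hAB (A / B) (by positivity)
    rw [div_mul_cancel₀ _ hB.ne'] at h2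
    linarith
  have fin : ∀ u v : X → ℝ, Measurable u → Measurable v → (∃ C, ∀ x, |u x| ≤ C) →
      (∃ C, ∀ x, |v x| ≤ C) →
      ∫ q, (μS[(fun r => u r.1 * v r.2) | invSigma (Prod.map T T)]) q ^ 2 ∂μS = 0 →
      (μS[(fun r => u r.1 * v r.2) | invSigma (Prod.map T T)]) =ᵐ[μS] 0 := by
    intro u v hu hv bu bv h0
    have hm : Measurable (fun r : X × X => u r.1 * v r.2) :=
      (hu.comp measurable_fst).mul (hv.comp measurable_snd)
    have hl : MemLp (μS[(fun r => u r.1 * v r.2) | invSigma (Prod.map T T)]) 2 μS :=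
      (bdd_memLp hm (bdd_tensor bu bv)).condExp (by norm_num)
    rw [integral_eq_zero_iff_of_nonneg (fun q => sq_nonneg _) hl.integrable_sq] at h0
    filter_upwards [h0] with q hq
    exact pow_eq_zero_iff (two_ne_zero) |>.1 hq
  constructor
  · refine fin f g hf hg bf bg (small _
      (∫ q, (μS[(fun r => g r.1 * g r.2) | invSigma (Prod.map T T)]) q ^ 2 ∂μS) (integral_nonneg fun q => sq_nonneg _) fun t ht => ?_)
    have := cs_ineq h hT hcomm hf hg bf bg t⁻¹ (by positivity)
    rw [hz, inv_inv, mul_zero, zero_add] at this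
    exact this
  · refine fin g f hg hf bg bf (small _
      (∫ q, (μS[(fun r => g r.1 * g r.2) | invSigma (Prod.map T T)]) q ^ 2 ∂μS) (integral_nonneg fun q => sq_nonneg _) fun t ht => ?_)
    have := cs_ineq h hT hcomm hg hf bg bf t ht
    rw [hz, mul_zero, add_zero] at this
    exact this

end joining

theorem prodMap_meas {X : Type*} {W : MeasurableSpace X} {T : X → X} (hT : Measurable T) :
    Measurable (Prod.map T T) := hT.prodMap hT

theorem meas_sup {X : Type*} {m1 m2 : MeasurableSpace X} {T : X → X}
    (h1 : Measurable[m1, m1] T) (h2 : Measurable[m2, m2] T) :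
    Measurable[m1 ⊔ m2, m1 ⊔ m2] T := by
  rw [measurable_iff_comap_le, MeasurableSpace.comap_sup]
  exact sup_le_sup h1.comap_le h2.comap_le

/-- in a free ergodic magic system, the σ-algebra of `(T×T)`-invariant sets of
`(X², μ_S)` is measurable with respect to `W ⊗ W`, where `W = I_S ∨ I_T`; equivalently,
`E(f0 ⊗ f1 | I_{T×T}) = E(E(f0|W) ⊗ E(f1|W) | I_{T×T})` μ_S-a.e. -/
theorem invariant_sets_measurable_wrt_W {X : Type*} [MeasurableSpace X]
    (μ : Measure X) [IsProbabilityMeasure μ]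
    (S T : X ≃ᵐ X) (hS : MeasurePreserving S μ μ) (hT : MeasurePreserving T μ μ)
    (hcomm : ∀ x, S (T x) = T (S x))
    (herg : ∀ s : Set X, MeasurableSet s → ⇑S ⁻¹' s = s → ⇑T ⁻¹' s = s → μ s = 0 ∨ μ s = 1)
    (hfree : ∀ i j : ℤ, ¬(i = 0 ∧ j = 0) →
      μ {x | (S.toEquiv ^ i) ((T.toEquiv ^ j) x) = x} = 0)
    (μS : Measure (X × X)) (hμS : IsRelIndJoining μ ⇑S μS)
    (μST : Measure (X × X × X × X)) (hμST : IsHostJoining μS ⇑T μST)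
    (hmagic : ∀ f : X → ℝ, Measurable f → (∃ C, ∀ x, |f x| ≤ C) →
      ((μ[f | invSigma ⇑S ⊔ invSigma ⇑T]) =ᵐ[μ] 0 ↔ hostSeminorm μST f = 0)) :
    (∀ s : Set (X × X), MeasurableSet[invSigma (Prod.map ⇑T ⇑T)] s →
      ∃ s' : Set (X × X),
        MeasurableSet[(invSigma ⇑S ⊔ invSigma ⇑T).prod (invSigma ⇑S ⊔ invSigma ⇑T)] s' ∧
        μS (s ∆ s') = 0) ∧
    (∀ f0 f1 : X → ℝ, Measurable f0 → Measurable f1 →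
      (∃ C, ∀ x, |f0 x| ≤ C) → (∃ C, ∀ x, |f1 x| ≤ C) →
      (μS[(fun r => f0 r.1 * f1 r.2) | invSigma (Prod.map ⇑T ⇑T)]) =ᵐ[μS]
      (μS[(fun r => (μ[f0 | invSigma ⇑S ⊔ invSigma ⇑T]) r.1 *
            (μ[f1 | invSigma ⇑S ⊔ invSigma ⇑T]) r.2) | invSigma (Prod.map ⇑T ⇑T)])) := by
  have := joining_prob hμS
  have hW : (invSigma ⇑S ⊔ invSigma ⇑T) ≤ ‹MeasurableSpace X› := sup_le (invSigma_le' _) (invSigma_le' _)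
  have hfst := joining_fst hμS
  have hsnd := joining_snd hμS
  have hR := joining_map hμS hT hcomm
  have hI : (invSigma (Prod.map ⇑T ⇑T)) ≤ Prod.instMeasurableSpace := invSigma_le' _
  have dec : ∀ f : X → ℝ, Measurable f → (∃ C, ∀ x, |f x| ≤ C) →
      ∃ w : X → ℝ, Measurable[(invSigma ⇑S ⊔ invSigma ⇑T)] w ∧ (∃ C, ∀ x, |w x| ≤ C) ∧ w =ᵐ[μ] μ[f | (invSigma ⇑S ⊔ invSigma ⇑T)] ∧
        ∫ q, (μS[(fun r => (f r.1 - w r.1) * (f r.2 - w r.2)) | (invSigma (Prod.map ⇑T ⇑T))]) q ^ 2 ∂μS = 0 := by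
    intro f hf bf
    obtain ⟨C, hC⟩ := id bf
    have hmeas : Measurable[(invSigma ⇑S ⊔ invSigma ⇑T)] (μ[f | (invSigma ⇑S ⊔ invSigma ⇑T)]) := stronglyMeasurable_condExp.measurable
    have hwm : Measurable[(invSigma ⇑S ⊔ invSigma ⇑T)] (fun x => max (-|C|) (min |C| ((μ[f | (invSigma ⇑S ⊔ invSigma ⇑T)]) x))) :=
      measurable_const.max (measurable_const.min hmeas)
    set w : X → ℝ := fun x => max (-|C|) (min |C| ((μ[f | (invSigma ⇑S ⊔ invSigma ⇑T)]) x)) with hw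
    have bw : ∃ C, ∀ x, |w x| ≤ C := by
      refine ⟨|C|, fun x => ?_⟩
      rw [abs_le]
      exact ⟨le_max_left _ _, max_le (by linarith [abs_nonneg C]) (min_le_left _ _)⟩
    have hwe : w =ᵐ[μ] μ[f | (invSigma ⇑S ⊔ invSigma ⇑T)] := by
      have := ae_bdd_condExp_of_ae_bdd (m := (invSigma ⇑S ⊔ invSigma ⇑T)) (μ := μ) (R := ⟨|C|, abs_nonneg C⟩) (f := f)
        (Eventually.of_forall fun x => (hC x).trans (le_abs_self C))
      filter_upwards [this] with x hx
      have hx' := abs_le.1 hx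
      change -|C| ≤ _ ∧ _ ≤ |C| at hx'
      simp only [hw]
      rw [min_eq_right hx'.2, max_eq_right hx'.1]
    refine ⟨w, hwm, bw, hwe, ?_⟩
    have hwm0 : Measurable w := hwm.mono hW le_rfl
    have intf : Integrable f μ := (bdd_memLp hf bf).integrable (by norm_num)
    have intw : Integrable w μ := (bdd_memLp hwm0 bw).integrable (by norm_num)
    have hz : μ[(fun x => f x - w x) | (invSigma ⇑S ⊔ invSigma ⇑T)] =ᵐ[μ] 0 := by
      have h1 := condExp_sub intf intw (invSigma ⇑S ⊔ invSigma ⇑T)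
      have h2 : μ[w | (invSigma ⇑S ⊔ invSigma ⇑T)] = w := condExp_of_stronglyMeasurable hW hwm.stronglyMeasurable intw
      rw [h2] at h1
      refine h1.trans ?_
      filter_upwards [hwe] with x hx
      simp [hx]
    have hdm : Measurable (fun x => f x - w x) := hf.sub hwm0
    have bd := bdd_sub bf bw
    have h0 := (hmagic _ hdm bd).1 hz
    unfold hostSeminorm at h0
    rw [hμST _ _ _ _ hdm hdm hdm hdm bd bd bd bd] at h0
    rw [Real.rpow_eq_zero (integral_nonneg fun q => mul_self_nonneg _) (by norm_num)] at h0
    rw [← h0]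
    refine integral_congr_ae (Eventually.of_forall fun q => ?_)
    exact sq _
  have eqw : ∀ f0 f1 w0 w1 : X → ℝ, Measurable f0 → Measurable f1 → Measurable w0 → Measurable w1 →
      (∃ C, ∀ x, |f0 x| ≤ C) → (∃ C, ∀ x, |f1 x| ≤ C) →
      (∃ C, ∀ x, |w0 x| ≤ C) → (∃ C, ∀ x, |w1 x| ≤ C) →
      ∫ q, (μS[(fun r => (f0 r.1 - w0 r.1) * (f0 r.2 - w0 r.2)) | (invSigma (Prod.map ⇑T ⇑T))]) q ^ 2 ∂μS = 0 →
      ∫ q, (μS[(fun r => (f1 r.1 - w1 r.1) * (f1 r.2 - w1 r.2)) | (invSigma (Prod.map ⇑T ⇑T))]) q ^ 2 ∂μS = 0 →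
      μS[(fun r => f0 r.1 * f1 r.2) | (invSigma (Prod.map ⇑T ⇑T))] =ᵐ[μS] μS[(fun r => w0 r.1 * w1 r.2) | (invSigma (Prod.map ⇑T ⇑T))] := by
    intro f0 f1 w0 w1 hf0 hf1 hw0 hw1 bf0 bf1 bw0 bw1 z0 z1
    have bd0 := bdd_sub bf0 bw0
    have bd1 := bdd_sub bf1 bw1
    have hd0 : Measurable (fun x => f0 x - w0 x) := hf0.sub hw0
    have hd1 : Measurable (fun x => f1 x - w1 x) := hf1.sub hw1
    have c0 := (cs_zero hμS hT hcomm hd0 hf1 bd0 bf1 z0).1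
    have c1 := (cs_zero hμS hT hcomm hd1 hw0 bd1 bw0 z1).2
    have ten : ∀ u v : X → ℝ, Measurable u → Measurable v → (∃ C, ∀ x, |u x| ≤ C) →
        (∃ C, ∀ x, |v x| ≤ C) → Integrable (fun r : X × X => u r.1 * v r.2) μS := by
      intro u v hu hv bu bv
      have hm : Measurable (fun r : X × X => u r.1 * v r.2) :=
        (hu.comp measurable_fst).mul (hv.comp measurable_snd)
      exact (bdd_memLp hm (bdd_tensor bu bv)).integrable (by norm_num)
    have i0 := ten _ _ hd0 hf1 bd0 bf1
    have i1 := ten _ _ hw0 hd1 bw0 bd1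
    have i2 := ten _ _ hw0 hw1 bw0 bw1
    have e : (fun r : X × X => f0 r.1 * f1 r.2) =
        ((fun r : X × X => (f0 r.1 - w0 r.1) * f1 r.2) +
          (fun r : X × X => w0 r.1 * (f1 r.2 - w1 r.2))) + (fun r : X × X => w0 r.1 * w1 r.2) := by
      funext r
      simp only [Pi.add_apply]
      ring
    rw [e]
    refine (condExp_add (i0.add i1) i2 (invSigma (Prod.map ⇑T ⇑T))).trans ?_
    filter_upwards [condExp_add i0 i1 (invSigma (Prod.map ⇑T ⇑T)), c0, c1] with r h1 h2 h3
    simp only [Pi.add_apply, Pi.zero_apply] at *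
    rw [h1, h2, h3]
    ring
  refine ⟨?_, ?_⟩
  · intro s hs
    have hWW : (MeasurableSpace.prod (invSigma ⇑S ⊔ invSigma ⇑T) (invSigma ⇑S ⊔ invSigma ⇑T)) ≤ Prod.instMeasurableSpace :=
      sup_le_sup (MeasurableSpace.comap_mono hW) (MeasurableSpace.comap_mono hW)
    have hsm : MeasurableSet s := hs.1
    set o : X × X → ℝ := s.indicator (fun _ => (1 : ℝ)) with ho
    have ho_m : Measurable o := measurable_const.indicator hsm
    have ho_b : ∃ C, ∀ x, |o x| ≤ C := bdd_indicator s
    have ho_i : Integrable o μS := (bdd_memLp ho_m ho_b).integrable (by norm_num)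
    set h := μS[o | (MeasurableSpace.prod (invSigma ⇑S ⊔ invSigma ⇑T) (invSigma ⇑S ⊔ invSigma ⇑T))] with hh
    have hh_i : Integrable h μS := integrable_condExp
    have hh_2 : MemLp h 2 μS := (bdd_memLp ho_m ho_b).condExp (by norm_num)
    have ho_I : StronglyMeasurable[(invSigma (Prod.map ⇑T ⇑T))] o :=
      (measurable_const.indicator hs : Measurable[(invSigma (Prod.map ⇑T ⇑T))] o).stronglyMeasurable
    have hTW : Measurable[(invSigma ⇑S ⊔ invSigma ⇑T), (invSigma ⇑S ⊔ invSigma ⇑T)] T := by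
      have hc : ∀ x, T (T x) = T (T x) := fun _ => rfl
      exact meas_sup
        (invSigma_meas_comm T.measurable hcomm) (invSigma_meas_comm T.measurable hc)
    have hTW' : Measurable[(invSigma ⇑S ⊔ invSigma ⇑T), (invSigma ⇑S ⊔ invSigma ⇑T)] T.symm := by
      have hc : ∀ x, T (T.symm x) = T.symm (T x) := fun _ => by simp
      have hc' : ∀ x, S (T.symm x) = T.symm (S x) := fun x => by
        apply T.injective
        rw [← hcomm]; simp
      exact meas_sup
        (invSigma_meas_comm T.symm.measurable hc') (invSigma_meas_comm T.symm.measurable hc)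
    have hinv : h ∘ Prod.map T T =ᵐ[μS] h := by
      have := condExp_comp_equiv hWW (T.prodCongr T) hR
        (prodMap_meas hTW) (prodMap_meas hTW') ho_i
      have e : o ∘ (T.prodCongr T) = o := by
        have := hs.2
        funext p
        have h2 : (Prod.map T T p) ∈ s ↔ p ∈ s := by
          conv_rhs => rw [← hs.2]
          rfl
        change o (Prod.map T T p) = o p
        by_cases hp : p ∈ s
        · simp [ho, hp, h2.2 hp]
        · have h3 : Prod.map T T p ∉ s := fun h3 => hp (h2.1 h3)
          rw [ho, Set.indicator_of_notMem hp, Set.indicator_of_notMem h3]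
      rw [e] at this
      exact this.symm
    have hh_I : AEStronglyMeasurable[(invSigma (Prod.map ⇑T ⇑T))] h μS := aesm_inv hR hh_i.aestronglyMeasurable hinv
    have pull : ∀ (k u : X × X → ℝ) (m : MeasurableSpace (X × X)) (hm : m ≤ Prod.instMeasurableSpace),
        AEStronglyMeasurable[m] k μS → MemLp k 2 μS → MemLp u 2 μS →
        ∫ q, k q * u q ∂μS = ∫ q, k q * (μS[u | m]) q ∂μS := by
      intro k u m hm hk hk2 hu2
      have h1 := condExp_mul_of_aestronglyMeasurable_left hk (hk2.integrable_mul hu2)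
        (hu2.integrable (by norm_num))
      rw [← integral_condExp hm]
      exact integral_congr_ae h1
    have rect : ∀ A B : Set X, MeasurableSet A → MeasurableSet B →
        ∫ q in A ×ˢ B, o q ∂μS = ∫ q in A ×ˢ B, h q ∂μS := by
      intro A B hA hB
      have mA : Measurable (A.indicator (fun _ => (1 : ℝ))) := measurable_const.indicator hA
      have mB : Measurable (B.indicator (fun _ => (1 : ℝ))) := measurable_const.indicator hB
      have bA := bdd_indicator A
      have bB := bdd_indicator B
      obtain ⟨w0, hw0, bw0, _, z0⟩ := dec _ mA bA
      obtain ⟨w1, hw1, bw1, _, z1⟩ := dec _ mB bB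
      have hw0' : Measurable w0 := hw0.mono hW le_rfl
      have hw1' : Measurable w1 := hw1.mono hW le_rfl
      have he := eqw _ _ w0 w1 mA mB hw0' hw1' bA bB bw0 bw1 z0 z1
      rw [indicator_tensor] at he
      set v : X × X → ℝ := fun r => w0 r.1 * w1 r.2 with hv
      have hvW : Measurable[(MeasurableSpace.prod (invSigma ⇑S ⊔ invSigma ⇑T) (invSigma ⇑S ⊔ invSigma ⇑T))] v :=
        (hw0.comp (@measurable_fst X X (invSigma ⇑S ⊔ invSigma ⇑T) (invSigma ⇑S ⊔ invSigma ⇑T))).mul (hw1.comp (@measurable_snd X X (invSigma ⇑S ⊔ invSigma ⇑T) (invSigma ⇑S ⊔ invSigma ⇑T)))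
      have hv2 : MemLp v 2 μS := bdd_memLp (hvW.mono hWW le_rfl) (bdd_tensor bw0 bw1)
      have hu2 : MemLp ((A ×ˢ B).indicator (fun _ => (1 : ℝ))) 2 μS :=
        bdd_memLp (measurable_const.indicator (hA.prod hB)) (bdd_indicator _)
      have ho2 : MemLp o 2 μS := bdd_memLp ho_m ho_b
      have ind : ∀ k : X × X → ℝ, ∫ q in A ×ˢ B, k q ∂μS =
          ∫ q, k q * (A ×ˢ B).indicator (fun _ => (1 : ℝ)) q ∂μS := by
        intro k
        rw [← integral_indicator (hA.prod hB)]
        congr 1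
        funext q
        by_cases hq : q ∈ A ×ˢ B <;> simp [Set.indicator, hq]
      have step : ∀ k : X × X → ℝ, AEStronglyMeasurable[(invSigma (Prod.map ⇑T ⇑T))] k μS → MemLp k 2 μS →
          ∫ q in A ×ˢ B, k q ∂μS = ∫ q, k q * v q ∂μS := by
        intro k hk hk2
        rw [ind, pull k _ (invSigma (Prod.map ⇑T ⇑T)) hI hk hk2 hu2, pull k v (invSigma (Prod.map ⇑T ⇑T)) hI hk hk2 hv2]
        refine integral_congr_ae ?_
        filter_upwards [he] with q hq
        rw [hq]
      rw [step o ho_I.aestronglyMeasurable ho2, step h hh_I hh_2]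
      have := pull v o (MeasurableSpace.prod (invSigma ⇑S ⊔ invSigma ⇑T) (invSigma ⇑S ⊔ invSigma ⇑T)) hWW hvW.stronglyMeasurable.aestronglyMeasurable hv2 ho2
      calc ∫ q, o q * v q ∂μS = ∫ q, v q * o q ∂μS := by simp_rw [mul_comm]
        _ = ∫ q, v q * h q ∂μS := this
        _ = ∫ q, h q * v q ∂μS := by simp_rw [mul_comm]
    have all : ∀ D : Set (X × X), MeasurableSet D → ∫ q in D, o q ∂μS = ∫ q in D, h q ∂μS := by
      have huniv : ∫ q, o q ∂μS = ∫ q, h q ∂μS := by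
        have := rect Set.univ Set.univ .univ .univ
        simpa using this
      intro D hD
      induction D, hD using MeasurableSpace.induction_on_inter generateFrom_prod.symm isPiSystem_prod with
      | empty => simp
      | basic D hD =>
        obtain ⟨A, hA, B, hB, rfl⟩ := hD
        exact rect A B hA hB
      | compl D hD ih =>
        have h1 := integral_add_compl hD ho_i
        have h2 := integral_add_compl hD hh_i
        linarith
      | iUnion D hd hD ih =>
        rw [integral_iUnion hD hd ho_i.integrableOn, integral_iUnion hD hd hh_i.integrableOn]
        exact tsum_congr ih
    have hoh : o =ᵐ[μS] h :=
      ho_i.ae_eq_of_forall_setIntegral_eq o h hh_i fun D hD _ => all D hD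
    refine ⟨h ⁻¹' {1}, (stronglyMeasurable_condExp.measurable : Measurable[(MeasurableSpace.prod (invSigma ⇑S ⊔ invSigma ⇑T) (invSigma ⇑S ⊔ invSigma ⇑T))] h)
      (measurableSet_singleton 1), ?_⟩
    refine measure_mono_null ?_ (ae_iff.1 hoh)
    intro q hq hne
    rcases hq with ⟨h1, h2⟩ | ⟨h1, h2⟩
    · apply h2
      rw [Set.mem_preimage, ← hne]
      simp [ho, h1]
    · rw [Set.mem_preimage, ← hne] at h1
      simp [ho, h2] at h1
  · intro f0 f1 hf0 hf1 bf0 bf1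
    obtain ⟨w0, hw0, bw0, e0, z0⟩ := dec _ hf0 bf0
    obtain ⟨w1, hw1, bw1, e1, z1⟩ := dec _ hf1 bf1
    refine (eqw f0 f1 w0 w1 hf0 hf1 (hw0.mono hW le_rfl) (hw1.mono hW le_rfl)
      bf0 bf1 bw0 bw1 z0 z1).trans ?_
    refine condExp_congr_ae ?_
    filter_upwards [hfst.quasiMeasurePreserving.ae_eq_comp e0,
      hsnd.quasiMeasurePreserving.ae_eq_comp e1] with r h0 h1
    simp only [Function.comp_apply] at h0 h1
    rw [h0, h1]
end

section
/- Let (Y,σ) and (W,τ) be two strictly ergodic topological dynamical systems with unique invariant measures ρ_Y and ρ_W, and consider the system (Y × W, σ × id, id × τ). Then Q_{σ×id, id×τ}(Y × W) equals {((y,w),(y′,w),(y,w′),(y′,w′)) : y,y′ ∈ Y, w,w′ ∈ W}, the system (Q_{σ×id, id×τ}(Y × W), G_{σ×id, id×τ}) is uniquely ergodic with unique invariant measure ν_{σ×id, id×τ} where ν = ρ_Y ⊗ ρ_W, and under the homeomorphism ((y,w),(y′,w),(y,w′),(y′,w′)) ↦ (y,y′,w,w′) onto Y × Y × W × W this unique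 measure corresponds to ρ_Y ⊗ ρ_Y ⊗ ρ_W ⊗ ρ_W. -/
open MeasureTheory Topology

/-- The dynamical cube `Q_{S,T}(X)`. -/
def cubeQ {X : Type*} [TopologicalSpace X] (S T : X ≃ₜ X) : Set (X × X × X × X) :=
  closure {p | ∃ (x : X) (i j : ℤ),
    p = (x, (S.toEquiv ^ i) x, (T.toEquiv ^ j) x, (S.toEquiv ^ i) ((T.toEquiv ^ j) x))}

/-- The permutation `id × S × id × S` of `X⁴`. -/
def sideS {X : Type*} (S : X ≃ X) : Equiv.Perm (X × X × X × X) :=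
  (Equiv.refl X).prodCongr (S.prodCongr ((Equiv.refl X).prodCongr S))

/-- The permutation `id × id × T × T` of `X⁴`. -/
def sideT {X : Type*} (T : X ≃ X) : Equiv.Perm (X × X × X × X) :=
  (Equiv.refl X).prodCongr ((Equiv.refl X).prodCongr (T.prodCongr T))

/-- The diagonal permutation `g × g × g × g` of `X⁴`. -/
def diag4 {X : Type*} (g : X ≃ X) : Equiv.Perm (X × X × X × X) :=
  g.prodCongr (g.prodCongr (g.prodCongr g))

/-- The group `G_{S,T}`. -/
def GST {X : Type*} (S T : X ≃ X) : Subgroup (Equiv.Perm (X × X × X × X)) :=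
  Subgroup.closure ({sideS S, sideT T} ∪
    {d | ∃ g ∈ Subgroup.closure {S, T}, d = diag4 g})

section helpers
variable {X Z V : Type*} [MeasurableSpace X] [MeasurableSpace Z] [MeasurableSpace V]

lemma aux_invSigma_le (R : X → X) : invSigma R ≤ (inferInstance : MeasurableSpace X) :=
  fun _ hs => hs.1

lemma aux_measurable_inv (R : X → X) (g : X → ℝ) (hg : Measurable g) (h : ∀ x, g (R x) = g x) :
    Measurable[invSigma R] g := by
  intro s hs
  refine ⟨hg hs, ?_⟩
  ext x
  simp [h]

lemma aux_integrable (μ : Measure X) [IsFiniteMeasure μ] {f : X → ℝ} (hf : Measurable f)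
    (hb : ∃ C, ∀ x, |f x| ≤ C) : Integrable f μ := by
  obtain ⟨C, hC⟩ := hb
  exact Integrable.of_bound hf.aestronglyMeasurable C (Filter.Eventually.of_forall hC)

lemma aux_zero_one (ρ : Measure V) [IsProbabilityMeasure ρ] (θ : V → V) 
    (hθ : MeasurePreserving θ ρ ρ)
    (huniq : ∀ ν : Measure V, IsProbabilityMeasure ν → MeasurePreserving θ ν ν → ν = ρ)
    (A : Set V) (hA : MeasurableSet A) (hinv : θ ⁻¹' A = A) : ρ A = 0 ∨ ρ Aᶜ = 0 := by
  by_cases h : ρ A = 0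
  · exact Or.inl h
  right
  have h1 : IsProbabilityMeasure (ProbabilityTheory.cond ρ A) :=
    ProbabilityTheory.cond_isProbabilityMeasure h
  have h2 := huniq _ h1 ⟨hθ.measurable, by
    ext s hs
    rw [Measure.map_apply hθ.measurable hs, ProbabilityTheory.cond_apply hA,
      ProbabilityTheory.cond_apply hA]
    congr 1
    rw [← hθ.measure_preimage (hA.inter hs).nullMeasurableSet, Set.preimage_inter, hinv]⟩
  rw [← h2, ProbabilityTheory.cond_apply hA]
  simp

lemma aux_bdd_integral (ρ : Measure V) [IsProbabilityMeasure ρ] {g : V → ℝ} {C : ℝ}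
    (h : ∀ v, |g v| ≤ C) : |∫ v, g v ∂ρ| ≤ C := by
  have := norm_integral_le_of_norm_le_const (μ := ρ) (f := g) (C := C)
    (Filter.Eventually.of_forall h)
  simpa using this

lemma aux_condExp (m : Measure Z) [IsProbabilityMeasure m] (ρ : Measure V) [IsProbabilityMeasure ρ]
    (θ : V → V)
    (herg : ∀ A : Set V, MeasurableSet A → θ ⁻¹' A = A → ρ A = 0 ∨ ρ Aᶜ = 0)
    (π : Z × V → X) (hπ : Measurable π) (p : X → Z) (hp : Measurable p) (R : X → X)
    (hpR : ∀ x, p (R x) = p x) (hpπ : ∀ z v, p (π (z, v)) = z)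
    (hRπ : ∀ z v, R (π (z, v)) = π (z, θ v))
    (F : X → ℝ) (hF : Measurable F) (hb : ∃ C, ∀ x, |F x| ≤ C) :
    ((m.prod ρ).map π)[F | invSigma R] =ᵐ[(m.prod ρ).map π]
      fun x => ∫ v, F (π (p x, v)) ∂ρ := by
  have hprob : IsProbabilityMeasure ((m.prod ρ).map π) :=
    Measure.isProbabilityMeasure_map hπ.aemeasurable
  have hg : Measurable (fun x => ∫ v, F (π (p x, v)) ∂ρ) := by
    have : StronglyMeasurable (fun q : X × V => F (π (p q.1, q.2))) :=
      (hF.comp (hπ.comp (by fun_prop))).stronglyMeasurable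
    exact this.integral_prod_right.measurable
  have hgb : ∃ C, ∀ x, |∫ v, F (π (p x, v)) ∂ρ| ≤ C := by
    obtain ⟨C, hC⟩ := hb
    exact ⟨C, fun x => aux_bdd_integral ρ fun v => hC _⟩
  symm
  refine ae_eq_condExp_of_forall_setIntegral_eq (aux_invSigma_le R) (aux_integrable _ hF hb)
    (fun s _ _ => (aux_integrable _ hg hgb).integrableOn) ?_ ?_
  · intro s hs _
    have key : ∀ G : X → ℝ, Measurable G → (∃ C, ∀ x, |G x| ≤ C) →
        ∫ x in s, G x ∂((m.prod ρ).map π) =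
          ∫ z, ∫ v in {v | π (z, v) ∈ s}, G (π (z, v)) ∂ρ ∂m := by
      intro G hG hGb
      have hm : Measurable (s.indicator G) := hG.indicator hs.1
      rw [← integral_indicator hs.1, integral_map hπ.aemeasurable hm.aestronglyMeasurable,
        integral_prod]
      · refine integral_congr_ae (Filter.Eventually.of_forall fun z => ?_)
        have hD : MeasurableSet {v | π (z, v) ∈ s} := 
          (hπ.comp (by fun_prop : Measurable fun v : V => (z, v))) hs.1
        simp only
        rw [← integral_indicator hD]
        rfl
      · refine aux_integrable _ (hm.comp hπ) ?_
        obtain ⟨C, hC⟩ := hGb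
        refine ⟨C, fun x => ?_⟩
        by_cases hx : π x ∈ s
        · simpa [hx] using hC _
        · simpa [hx] using (abs_nonneg _).trans (hC (π x))
    rw [key _ hg hgb, key F hF hb]
    refine integral_congr_ae (Filter.Eventually.of_forall fun z => ?_)
    have hD : MeasurableSet {v | π (z, v) ∈ s} := 
      (hπ.comp (by fun_prop : Measurable fun v : V => (z, v))) hs.1
    simp only [hpπ]
    rcases herg _ hD (by
      ext v
      have : π (z, v) ∈ R ⁻¹' s ↔ π (z, v) ∈ s := by rw [hs.2]
      simpa [hRπ] using this) with h | h
    · rw [Measure.restrict_eq_zero.2 h]; simp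
    · rw [Measure.restrict_eq_self_of_ae_mem (by rwa [ae_iff])]; simp
  · have := aux_measurable_inv R _ hg (fun x => by simp only [hpR])
    exact (this.stronglyMeasurable).aestronglyMeasurable

lemma aux_joining (m : Measure Z) [IsProbabilityMeasure m] (ρ : Measure V) [IsProbabilityMeasure ρ]
    (θ : V → V)
    (herg : ∀ A : Set V, MeasurableSet A → θ ⁻¹' A = A → ρ A = 0 ∨ ρ Aᶜ = 0)
    (π : Z × V → X) (hπ : Measurable π) (p : X → Z) (hp : Measurable p) (R : X → X)
    (hpR : ∀ x, p (R x) = p x) (hpπ : ∀ z v, p (π (z, v)) = z)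
    (hRπ : ∀ z v, R (π (z, v)) = π (z, θ v))
    (F : X → ℝ) (hF : Measurable F) (hb : ∃ C, ∀ x, |F x| ≤ C)
    (G : X → ℝ) (hG : Measurable G) (hGb : ∃ C, ∀ x, |G x| ≤ C) (μ : Measure X)
    (hμ : μ = (m.prod ρ).map π) :
    ∫ x, (μ[F | invSigma R]) x * (μ[G | invSigma R]) x ∂μ =
      ∫ q : Z × V × V, F (π (q.1, q.2.1)) * G (π (q.1, q.2.2)) ∂(m.prod (ρ.prod ρ)) := by
  have hg : ∀ F : X → ℝ, Measurable F → Measurable (fun x => ∫ v, F (π (p x, v)) ∂ρ) := by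
    intro F hF
    have : StronglyMeasurable (fun q : X × V => F (π (p q.1, q.2))) :=
      (hF.comp (hπ.comp (by fun_prop))).stronglyMeasurable
    exact this.integral_prod_right.measurable
  subst hμ
  have h1 := aux_condExp m ρ θ herg π hπ p hp R hpR hpπ hRπ F hF hb
  have h2 := aux_condExp m ρ θ herg π hπ p hp R hpR hpπ hRπ G hG hGb
  have e : ∀ {a b a' b' : X → ℝ} {ν : Measure X}, a =ᵐ[ν] a' → b =ᵐ[ν] b' →
    ∫ x, a x * b x ∂ν = ∫ x, a' x * b' x ∂ν := fun h h' => integral_congr_ae (h.mul h')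
  rw [e h1 h2, integral_map hπ.aemeasurable
    (by exact ((hg F hF).mul (hg G hG)).aestronglyMeasurable)]
  have hFc : ∃ C, ∀ x, |∫ v, F (π (p x, v)) ∂ρ| ≤ C := by
    obtain ⟨C, hC⟩ := hb
    exact ⟨C, fun x => aux_bdd_integral ρ fun v => hC _⟩
  have hGc : ∃ C, ∀ x, |∫ v, G (π (p x, v)) ∂ρ| ≤ C := by
    obtain ⟨C, hC⟩ := hGb
    exact ⟨C, fun x => aux_bdd_integral ρ fun v => hC _⟩
  have mulb : ∀ a b : ℝ, ∀ C D, |a| ≤ C → |b| ≤ D → |a * b| ≤ C * D := by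
    intro a b C D h h'
    rw [abs_mul]
    exact mul_le_mul h h' (abs_nonneg _) ((abs_nonneg _).trans h)
  rw [integral_prod, integral_prod]
  · refine integral_congr_ae (Filter.Eventually.of_forall fun z => ?_)
    simp only [hpπ]
    rw [integral_prod_mul (fun v => F (π (z, v))) (fun v => G (π (z, v)))]
    simp
  · refine aux_integrable _ ((hF.comp (hπ.comp (by fun_prop))).mul
      (hG.comp (hπ.comp (by fun_prop)))) ?_
    obtain ⟨C, hC⟩ := hb
    obtain ⟨D, hD⟩ := hGb
    exact ⟨C * D, fun q => mulb _ _ _ _ (hC _) (hD _)⟩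
  · refine aux_integrable _ (((hg F hF).mul (hg G hG)).comp hπ) ?_
    obtain ⟨C, hC⟩ := hFc
    obtain ⟨D, hD⟩ := hGc
    exact ⟨C * D, fun q => mulb _ _ _ _ (hC _) (hD _)⟩

lemma aux_isProb (μ : Measure X) (h : ∫ _x, (1 : ℝ) ∂μ = 1) : IsProbabilityMeasure μ := by
  constructor
  simp only [integral_const, smul_eq_mul, mul_one, Measure.real] at h
  exact (ENNReal.toReal_eq_one_iff _).1 h

lemma aux_ext4 (μ ν : Measure (X × X × X × X)) [IsFiniteMeasure μ] [IsFiniteMeasure ν]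
    (h : ∀ f0 f1 f2 f3 : X → ℝ, Measurable f0 → Measurable f1 → Measurable f2 → Measurable f3 →
      (∃ C, ∀ x, |f0 x| ≤ C) → (∃ C, ∀ x, |f1 x| ≤ C) →
      (∃ C, ∀ x, |f2 x| ≤ C) → (∃ C, ∀ x, |f3 x| ≤ C) →
      ∫ p, f0 p.1 * f1 p.2.1 * f2 p.2.2.1 * f3 p.2.2.2 ∂μ =
      ∫ p, f0 p.1 * f1 p.2.1 * f2 p.2.2.1 * f3 p.2.2.2 ∂ν) : μ = ν := by
  have hrect : ∀ a b c d : Set X, MeasurableSet a → MeasurableSet b → MeasurableSet c →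
      MeasurableSet d → μ (a ×ˢ b ×ˢ c ×ˢ d) = ν (a ×ˢ b ×ˢ c ×ˢ d) := by
    intro a b c d ha hb hc hd
    have bd : ∀ s : Set X, ∃ C, ∀ x, |s.indicator (fun _ => (1 : ℝ)) x| ≤ C := fun s =>
      ⟨1, fun x => by by_cases hx : x ∈ s <;> simp [hx]⟩
    have := h (a.indicator fun _ => 1) (b.indicator fun _ => 1) (c.indicator fun _ => 1)
      (d.indicator fun _ => 1) (measurable_const.indicator ha) (measurable_const.indicator hb)
      (measurable_const.indicator hc) (measurable_const.indicator hd) (bd _) (bd _) (bd _) (bd _)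
    have e : (fun p : X × X × X × X => a.indicator (fun _ => (1 : ℝ)) p.1 *
        b.indicator (fun _ => (1 : ℝ)) p.2.1 *
        c.indicator (fun _ => (1 : ℝ)) p.2.2.1 * d.indicator (fun _ => (1 : ℝ)) p.2.2.2) =
        (a ×ˢ b ×ˢ c ×ˢ d).indicator (fun _ => (1 : ℝ)) := by
      ext ⟨x, y, z, w⟩
      by_cases h1 : x ∈ a <;> by_cases h2 : y ∈ b <;> by_cases h3 : z ∈ c <;>
        by_cases h4 : w ∈ d <;> simp [h1, h2, h3, h4]
    have hm : MeasurableSet (a ×ˢ b ×ˢ c ×ˢ d) := ha.prod (hb.prod (hc.prod hd))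
    rw [e, integral_indicator_const _ hm, integral_indicator_const _ hm] at this
    simp only [smul_eq_mul, mul_one] at this
    exact (measureReal_eq_measureReal_iff).1 this
  have hP : ∀ a : Set X, MeasurableSet a → ∀ t : Set (X × X × X), MeasurableSet t →
      μ (a ×ˢ t) = ν (a ×ˢ t) := by
    intro a ha t ht
    have : ((μ.restrict (a ×ˢ Set.univ)).map Prod.snd) =
        ((ν.restrict (a ×ˢ Set.univ)).map Prod.snd) := by
      refine Measure.ext_prod₃ ?_
      intro b c d hb hc hd
      have hm := hb.prod (hc.prod hd)
      rw [Measure.map_apply measurable_snd hm, Measure.map_apply measurable_snd hm,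
        Measure.restrict_apply (measurable_snd hm), Measure.restrict_apply (measurable_snd hm)]
      have e : Prod.snd ⁻¹' (b ×ˢ c ×ˢ d) ∩ a ×ˢ Set.univ = a ×ˢ b ×ˢ c ×ˢ d := by
        ext ⟨x, y⟩; simp; tauto
      rw [e]
      exact hrect a b c d ha hb hc hd
    have h2 := congrArg (fun κ => κ t) this

    rw [Measure.map_apply measurable_snd ht, Measure.map_apply measurable_snd ht,
      Measure.restrict_apply (measurable_snd ht), Measure.restrict_apply (measurable_snd ht)] at h2
    have e : Prod.snd ⁻¹' t ∩ a ×ˢ Set.univ = a ×ˢ t := by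
      ext ⟨x, y⟩; simp; tauto
    rwa [e] at h2
  exact Measure.ext_prod fun hs ht => hP _ hs _ ht

lemma aux_ext2 (μ ν : Measure (X × X)) [IsFiniteMeasure μ] [IsFiniteMeasure ν]
    (h : ∀ f0 f1 : X → ℝ, Measurable f0 → Measurable f1 →
      (∃ C, ∀ x, |f0 x| ≤ C) → (∃ C, ∀ x, |f1 x| ≤ C) →
      ∫ p, f0 p.1 * f1 p.2 ∂μ = ∫ p, f0 p.1 * f1 p.2 ∂ν) : μ = ν := by
  refine Measure.ext_prod ?_
  intro a b ha hb
  have bd : ∀ s : Set X, ∃ C, ∀ x, |s.indicator (fun _ => (1 : ℝ)) x| ≤ C := fun s =>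
    ⟨1, fun x => by by_cases hx : x ∈ s <;> simp [hx]⟩
  have := h (a.indicator fun _ => 1) (b.indicator fun _ => 1)
    (measurable_const.indicator ha) (measurable_const.indicator hb) (bd _) (bd _)
  have e : (fun p : X × X => a.indicator (fun _ => (1 : ℝ)) p.1 *
      b.indicator (fun _ => (1 : ℝ)) p.2) = (a ×ˢ b).indicator (fun _ => (1 : ℝ)) := by
    ext ⟨x, y⟩
    by_cases h1 : x ∈ a <;> by_cases h2 : y ∈ b <;> simp [h1, h2]
  have hm : MeasurableSet (a ×ˢ b) := ha.prod hb
  rw [e, integral_indicator_const _ hm, integral_indicator_const _ hm] at this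
  simp only [smul_eq_mul, mul_one] at this
  exact (measureReal_eq_measureReal_iff).1 this

/-- A measure on `V × Z` invariant under `θ × id` with `θ` uniquely ergodic splits. -/
lemma aux_split (ρ : Measure V) [IsProbabilityMeasure ρ] (θ : V → V) (hθ : Measurable θ)
    (huniq : ∀ ν : Measure V, IsProbabilityMeasure ν → MeasurePreserving θ ν ν → ν = ρ)
    (κ : Measure (V × Z)) [IsProbabilityMeasure κ]
    (hκ : κ.map (Prod.map θ id) = κ) : κ = ρ.prod (κ.map Prod.snd) := by
  have : IsProbabilityMeasure (κ.map Prod.snd) :=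
    Measure.isProbabilityMeasure_map measurable_snd.aemeasurable
  refine Measure.ext_prod ?_
  intro a b ha hb
  rw [Measure.prod_prod, Measure.map_apply measurable_snd hb]
  set B : Set (V × Z) := Prod.snd ⁻¹' b with hB
  have hBm : MeasurableSet B := measurable_snd hb
  have e : a ×ˢ b = B ∩ Prod.fst ⁻¹' a := by
    ext ⟨x, y⟩; simp [hB]; tauto
  by_cases h0 : κ B = 0
  · rw [h0, mul_zero, e]
    exact measure_mono_null Set.inter_subset_left h0
  have h1 : IsProbabilityMeasure (ProbabilityTheory.cond κ B) :=
    ProbabilityTheory.cond_isProbabilityMeasure h0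
  have h2 : IsProbabilityMeasure ((ProbabilityTheory.cond κ B).map Prod.fst) :=
    Measure.isProbabilityMeasure_map measurable_fst.aemeasurable
  have h3 := huniq _ h2 ⟨hθ, by
    ext s hs
    rw [Measure.map_apply hθ hs, Measure.map_apply measurable_fst (hθ hs),
      Measure.map_apply measurable_fst hs, ProbabilityTheory.cond_apply hBm,
      ProbabilityTheory.cond_apply hBm]
    congr 1
    conv_rhs => rw [← hκ]
    rw [Measure.map_apply (by fun_prop) (hBm.inter (measurable_fst hs))]
    rfl⟩
  have h4 : ρ a = (κ B)⁻¹ * κ (B ∩ Prod.fst ⁻¹' a) := by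
    rw [← h3, Measure.map_apply measurable_fst ha, ProbabilityTheory.cond_apply hBm]
  rw [h4, e, mul_comm, ← mul_assoc, ENNReal.mul_inv_cancel h0 (measure_ne_top _ _), one_mul]

end helpers

section helpers2
variable {X : Type*} [MeasurableSpace X]

/-- Permutations preserving a measure, with measurable inverse. -/
def auxPres (ν : Measure X) : Subgroup (Equiv.Perm X) where
  carrier := {e | MeasurePreserving (⇑e) ν ν ∧ Measurable ⇑e⁻¹}
  one_mem' := ⟨MeasurePreserving.id ν, measurable_id⟩
  mul_mem' := by
    rintro a b ⟨ha, ha'⟩ ⟨hb, hb'⟩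
    refine ⟨ha.comp hb, ?_⟩
    rw [mul_inv_rev]
    exact hb'.comp ha'
  inv_mem' := by
    rintro a ⟨ha, ha'⟩
    refine ⟨⟨ha', ?_⟩, by simpa using ha.measurable⟩
    conv_lhs => rw [← ha.map_eq]
    rw [Measure.map_map ha' ha.measurable]
    have : (⇑a⁻¹ ∘ ⇑a) = id := by ext x; simp
    rw [this, Measure.map_id]

lemma aux_mem_pres {K : Type*} [MeasurableSpace K] (κ : Measure K) (Φ : K → X) (hΦ : Measurable Φ)
    (e : Equiv.Perm X) (he : Measurable e) (he' : Measurable ⇑e⁻¹) (h : K → K)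
    (hh : MeasurePreserving h κ κ) (hc : ∀ k, e (Φ k) = Φ (h k)) : e ∈ auxPres (κ.map Φ) := by
  refine ⟨⟨he, ?_⟩, he'⟩
  conv_rhs => rw [← hh.map_eq]
  rw [Measure.map_map he hΦ, Measure.map_map hΦ hh.measurable]
  congr 1
  ext k
  exact hc k

lemma aux_diag_mem (ν : Measure (X × X × X × X)) (S T : Equiv.Perm X)
    (hS : diag4 S ∈ auxPres ν) (hT : diag4 T ∈ auxPres ν) (g : Equiv.Perm X)
    (hg : g ∈ Subgroup.closure {S, T}) : diag4 g ∈ auxPres ν := by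
  induction hg using Subgroup.closure_induction with
  | mem x hx =>
    rcases hx with rfl | hx
    · exact hS
    · rw [Set.mem_singleton_iff] at hx; subst hx; exact hT
  | one => exact (auxPres ν).one_mem
  | mul x y _ _ hx hy => exact (auxPres ν).mul_mem hx hy
  | inv x _ hx => exact (auxPres ν).inv_mem hx

lemma aux_GST_le (ν : Measure (X × X × X × X)) (S T : Equiv.Perm X)
    (h1 : sideS S ∈ auxPres ν) (h2 : sideT T ∈ auxPres ν)
    (hS : diag4 S ∈ auxPres ν) (hT : diag4 T ∈ auxPres ν) : GST S T ≤ auxPres ν := by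
  unfold GST
  rw [Subgroup.closure_le]
  rintro d ((rfl | hd) | ⟨g, hg, rfl⟩)
  · exact h1
  · rw [Set.mem_singleton_iff] at hd; subst hd; exact h2
  · exact aux_diag_mem ν S T hS hT g hg

end helpers2

section helpers3
variable {Y W : Type*}

/-- The parametrization of parallelograms. -/
def auxPhi (q : Y × Y × W × W) : (Y × W) × (Y × W) × (Y × W) × (Y × W) :=
  ((q.1, q.2.2.1), (q.2.1, q.2.2.1), (q.1, q.2.2.2), (q.2.1, q.2.2.2))

/-- The coordinates of parallelograms. -/
def auxPr (q : (Y × W) × (Y × W) × (Y × W) × (Y × W)) : Y × Y × W × W :=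
  (q.1.1, q.2.1.1, q.1.2, q.2.2.1.2)

lemma aux_pow1 [TopologicalSpace Y] [TopologicalSpace W] (σ : Y ≃ₜ Y) (i : ℤ) (y : Y) (w : W) :
    (((σ.prodCongr (Homeomorph.refl W)).toEquiv : Equiv.Perm (Y × W)) ^ i) (y, w) =
      (((σ.toEquiv : Equiv.Perm Y) ^ i) y, w) := by
  have hn : ∀ (n : ℕ) (y : Y),
      (((σ.prodCongr (Homeomorph.refl W)).toEquiv : Equiv.Perm (Y × W)) ^ n) (y, w) =
      (((σ.toEquiv : Equiv.Perm Y) ^ n) y, w) := by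
    intro n
    induction n with
    | zero => intro y; rfl
    | succ n ih => intro y; rw [pow_succ, pow_succ]; exact ih (σ y)
  cases i with
  | ofNat n => exact hn n y
  | negSucc n =>
    rw [zpow_negSucc, zpow_negSucc, Equiv.Perm.inv_eq_iff_eq, hn]
    simp

lemma aux_pow2 [TopologicalSpace Y] [TopologicalSpace W] (τ : W ≃ₜ W) (i : ℤ) (y : Y) (w : W) :
    ((((Homeomorph.refl Y).prodCongr τ).toEquiv : Equiv.Perm (Y × W)) ^ i) (y, w) =
      (y, ((τ.toEquiv : Equiv.Perm W) ^ i) w) := by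
  have hn : ∀ (n : ℕ) (w : W),
      ((((Homeomorph.refl Y).prodCongr τ).toEquiv : Equiv.Perm (Y × W)) ^ n) (y, w) =
      (y, ((τ.toEquiv : Equiv.Perm W) ^ n) w) := by
    intro n
    induction n with
    | zero => intro w; rfl
    | succ n ih => intro w; rw [pow_succ, pow_succ]; exact ih (τ w)
  cases i with
  | ofNat n => exact hn n w
  | negSucc n =>
    rw [zpow_negSucc, zpow_negSucc, Equiv.Perm.inv_eq_iff_eq, hn]
    simp

lemma aux_cube [TopologicalSpace Y] [TopologicalSpace W] [T2Space Y] [T2Space W]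
    (σ : Y ≃ₜ Y) (τ : W ≃ₜ W)
    (hYmin : ∀ y y' : Y, y' ∈ closure {z | ∃ i : ℤ, z = (σ.toEquiv ^ i) y})
    (hWmin : ∀ w w' : W, w' ∈ closure {z | ∃ j : ℤ, z = (τ.toEquiv ^ j) w}) :
    cubeQ (σ.prodCongr (Homeomorph.refl W)) ((Homeomorph.refl Y).prodCongr τ) =
      {q : (Y × W) × (Y × W) × (Y × W) × (Y × W) | ∃ (y y' : Y) (w w' : W),
        q = ((y, w), (y', w), (y, w'), (y', w'))} := by
  apply Set.Subset.antisymm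
  · refine closure_minimal ?_ ?_
    · rintro p ⟨⟨y, w⟩, i, j, rfl⟩
      refine ⟨y, (σ.toEquiv ^ i) y, w, (τ.toEquiv ^ j) w, ?_⟩
      rw [aux_pow2, aux_pow1, aux_pow1]
    · have : {q : (Y × W) × (Y × W) × (Y × W) × (Y × W) | ∃ (y y' : Y) (w w' : W),
          q = ((y, w), (y', w), (y, w'), (y', w'))} = {q | auxPhi (auxPr q) = q} := by
        ext q
        constructor
        · rintro ⟨y, y', w, w', rfl⟩; rfl
        · intro h; exact ⟨_, _, _, _, h.symm⟩
      rw [this]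
      apply isClosed_eq
      · unfold auxPhi auxPr; fun_prop
      · fun_prop
  · rintro q ⟨y, y', w, w', rfl⟩
    have hc : Continuous (fun r : Y × W => (((y, w), (r.1, w), (y, r.2), (r.1, r.2)) :
      (Y × W) × (Y × W) × (Y × W) × (Y × W))) := by fun_prop
    have hm : ((y', w') : Y × W) ∈ closure ({z | ∃ i : ℤ, z = (σ.toEquiv ^ i) y} ×ˢ
        {z | ∃ j : ℤ, z = (τ.toEquiv ^ j) w}) := by
      rw [closure_prod_eq]; exact ⟨hYmin y y', hWmin w w'⟩
    refine map_mem_closure (f := fun r : Y × W => (((y, w), (r.1, w), (y, r.2), (r.1, r.2)) :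
      (Y × W) × (Y × W) × (Y × W) × (Y × W))) hc hm ?_
    rintro ⟨_, _⟩ ⟨⟨i, rfl⟩, ⟨j, rfl⟩⟩
    refine ⟨(y, w), i, j, ?_⟩
    rw [aux_pow2, aux_pow1, aux_pow1]

variable [MeasurableSpace Y] [MeasurableSpace W]

lemma aux_meas_Phi : Measurable (auxPhi : Y × Y × W × W → _) := by
  unfold auxPhi; fun_prop

lemma aux_meas_Pr : Measurable (auxPr : (Y × W) × (Y × W) × (Y × W) × (Y × W) → _) := by
  unfold auxPr; fun_prop

lemma aux_nuS (σ : Y → Y) (ρY : Measure Y) (ρW : Measure W)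
    [IsProbabilityMeasure ρY] [IsProbabilityMeasure ρW]
    (hσ : ∀ A : Set Y, MeasurableSet A → σ ⁻¹' A = A → ρY A = 0 ∨ ρY Aᶜ = 0)
    (R : Y × W → Y × W) (hR : ∀ y w, R (y, w) = (σ y, w))
    (νS : Measure ((Y × W) × (Y × W)))
    (hνS : IsRelIndJoining (ρY.prod ρW) R νS) :
    νS = ((ρY.prod ρY).prod ρW).map
      (fun q : (Y × Y) × W => ((q.1.1, q.2), (q.1.2, q.2))) := by
  have key : ∀ f0 f1 : Y × W → ℝ, Measurable f0 → Measurable f1 →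
      (∃ C, ∀ x, |f0 x| ≤ C) → (∃ C, ∀ x, |f1 x| ≤ C) →
      ∫ p, f0 p.1 * f1 p.2 ∂νS = ∫ q : W × Y × Y, f0 (q.2.1, q.1) * f1 (q.2.2, q.1)
        ∂(ρW.prod (ρY.prod ρY)) := by
    intro f0 f1 h0 h1 b0 b1
    rw [hνS f0 f1 h0 h1 b0 b1]
    exact aux_joining ρW ρY σ hσ Prod.swap measurable_swap Prod.snd measurable_snd R
      (fun x => by rcases x with ⟨y, w⟩; rw [hR]) (fun _ _ => rfl)
      (fun z v => hR v z) f0 h0 b0 f1 h1 b1 _ Measure.prod_swap.symm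
  have hp : IsProbabilityMeasure νS := by
    apply aux_isProb
    have := key (fun _ => 1) (fun _ => 1) measurable_const measurable_const
      ⟨1, by simp⟩ ⟨1, by simp⟩
    simpa using this
  have hm : Measurable (fun q : (Y × Y) × W => ((q.1.1, q.2), (q.1.2, q.2))) := by fun_prop
  have := Measure.isProbabilityMeasure_map (μ := (ρY.prod ρY).prod ρW) hm.aemeasurable
  apply aux_ext2
  intro f0 f1 h0 h1 b0 b1
  have hmm : Measurable (fun p : (Y × W) × (Y × W) => f0 p.1 * f1 p.2) := by fun_prop
  rw [key f0 f1 h0 h1 b0 b1, integral_map hm.aemeasurable hmm.aestronglyMeasurable,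
    ← Measure.prod_swap, integral_map measurable_swap.aemeasurable
      (Measurable.aestronglyMeasurable (by fun_prop))]
  rfl

lemma aux_nuST (τ : W → W) (ρY : Measure Y) (ρW : Measure W)
    [IsProbabilityMeasure ρY] [IsProbabilityMeasure ρW]
    (hτ : ∀ A : Set W, MeasurableSet A → τ ⁻¹' A = A → ρW A = 0 ∨ ρW Aᶜ = 0)
    (R : Y × W → Y × W) (hR : ∀ y w, R (y, w) = (y, τ w))
    (νS : Measure ((Y × W) × (Y × W)))
    (hνS : νS = ((ρY.prod ρY).prod ρW).map
      (fun q : (Y × Y) × W => ((q.1.1, q.2), (q.1.2, q.2))))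
    (νST : Measure ((Y × W) × (Y × W) × (Y × W) × (Y × W)))
    (hνST : IsHostJoining νS R νST) :
    νST = (ρY.prod (ρY.prod (ρW.prod ρW))).map auxPhi := by
  have hm : Measurable (fun q : (Y × Y) × W => ((q.1.1, q.2), (q.1.2, q.2))) := by fun_prop
  have mulb : ∀ a b : ℝ, ∀ C D, |a| ≤ C → |b| ≤ D → |a * b| ≤ C * D := by
    intro a b C D h h'
    rw [abs_mul]
    exact mul_le_mul h h' (abs_nonneg _) ((abs_nonneg _).trans h)
  have mulb2 : ∀ f0 f1 : Y × W → ℝ, (∃ C, ∀ x, |f0 x| ≤ C) → (∃ C, ∀ x, |f1 x| ≤ C) →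
      ∃ C, ∀ r : (Y × W) × (Y × W), |f0 r.1 * f1 r.2| ≤ C := by
    rintro f0 f1 ⟨C, hC⟩ ⟨D, hD⟩
    exact ⟨C * D, fun r => mulb _ _ _ _ (hC _) (hD _)⟩
  have key : ∀ f0 f1 f2 f3 : Y × W → ℝ, Measurable f0 → Measurable f1 → Measurable f2 →
      Measurable f3 → (∃ C, ∀ x, |f0 x| ≤ C) → (∃ C, ∀ x, |f1 x| ≤ C) →
      (∃ C, ∀ x, |f2 x| ≤ C) → (∃ C, ∀ x, |f3 x| ≤ C) →
      ∫ p, f0 p.1 * f1 p.2.1 * f2 p.2.2.1 * f3 p.2.2.2 ∂νST =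
      ∫ q : (Y × Y) × W × W, (f0 (q.1.1, q.2.1) * f1 (q.1.2, q.2.1)) *
        (f2 (q.1.1, q.2.2) * f3 (q.1.2, q.2.2)) ∂((ρY.prod ρY).prod (ρW.prod ρW)) := by
    intro f0 f1 f2 f3 h0 h1 h2 h3 b0 b1 b2 b3
    rw [hνST f0 f1 f2 f3 h0 h1 h2 h3 b0 b1 b2 b3]
    exact aux_joining (ρY.prod ρY) ρW τ hτ _ hm (fun r => (r.1.1, r.2.1)) (by fun_prop)
      (Prod.map R R)
      (fun x => by rcases x with ⟨⟨y, w⟩, ⟨y', w'⟩⟩; simp [hR]) (fun _ _ => rfl)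
      (fun z v => by simp [hR]) (fun r => f0 r.1 * f1 r.2) (by fun_prop) (mulb2 _ _ b0 b1)
      (fun r => f2 r.1 * f3 r.2) (by fun_prop) (mulb2 _ _ b2 b3) _ hνS
  have hp : IsProbabilityMeasure νST := by
    apply aux_isProb
    have := key (fun _ => 1) (fun _ => 1) (fun _ => 1) (fun _ => 1) measurable_const
      measurable_const measurable_const measurable_const
      ⟨1, by simp⟩ ⟨1, by simp⟩ ⟨1, by simp⟩ ⟨1, by simp⟩
    simpa using this
  have := Measure.isProbabilityMeasure_map (μ := ρY.prod (ρY.prod (ρW.prod ρW)))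
    (aux_meas_Phi (Y := Y) (W := W)).aemeasurable
  apply aux_ext4
  intro f0 f1 f2 f3 h0 h1 h2 h3 b0 b1 b2 b3
  have hmm : Measurable (fun p : (Y × W) × (Y × W) × (Y × W) × (Y × W) =>
    f0 p.1 * f1 p.2.1 * f2 p.2.2.1 * f3 p.2.2.2) := by fun_prop
  rw [key f0 f1 f2 f3 h0 h1 h2 h3 b0 b1 b2 b3,
    integral_map aux_meas_Phi.aemeasurable hmm.aestronglyMeasurable,
    ← Measure.prodAssoc_prod (μ := ρY) (ν := ρY), integral_map MeasurableEquiv.prodAssoc.measurable.aemeasurable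
      (by exact (hmm.comp aux_meas_Phi).aestronglyMeasurable)]
  refine integral_congr_ae (Filter.Eventually.of_forall fun q => ?_)
  rcases q with ⟨⟨y, y'⟩, w, w'⟩
  simp [auxPhi, MeasurableEquiv.prodAssoc, mul_assoc]

/-- A fully invariant measure on `Y × Y × W × W` is the product measure. -/
lemma aux_unique4 (σ : Y → Y) (τ : W → W) (ρY : Measure Y) (ρW : Measure W)
    [IsProbabilityMeasure ρY] [IsProbabilityMeasure ρW]
    (hσ : Measurable σ) (hτ : Measurable τ)
    (hY : ∀ ν : Measure Y, IsProbabilityMeasure ν → MeasurePreserving σ ν ν → ν = ρY)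
    (hW : ∀ ν : Measure W, IsProbabilityMeasure ν → MeasurePreserving τ ν ν → ν = ρW)
    (κ : Measure (Y × Y × W × W)) [IsProbabilityMeasure κ]
    (h1 : κ.map (Prod.map σ id) = κ)
    (h2 : κ.map (Prod.map id (Prod.map σ id)) = κ)
    (h3 : κ.map (Prod.map id (Prod.map id (Prod.map τ id))) = κ)
    (h4 : κ.map (Prod.map id (Prod.map id (Prod.map id τ))) = κ) :
    κ = ρY.prod (ρY.prod (ρW.prod ρW)) := by
  have p1 : IsProbabilityMeasure (κ.map Prod.snd) :=
    Measure.isProbabilityMeasure_map measurable_snd.aemeasurable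
  have p2 : IsProbabilityMeasure ((κ.map Prod.snd).map Prod.snd) :=
    Measure.isProbabilityMeasure_map measurable_snd.aemeasurable
  have p3 : IsProbabilityMeasure (((κ.map Prod.snd).map Prod.snd).map Prod.snd) :=
    Measure.isProbabilityMeasure_map measurable_snd.aemeasurable
  have e2 : (κ.map Prod.snd).map (Prod.map σ id) = κ.map Prod.snd := by
    conv_rhs => rw [← h2]
    rw [Measure.map_map (by fun_prop) (by fun_prop), Measure.map_map (by fun_prop) (by fun_prop)]
    rfl
  have e3 : ((κ.map Prod.snd).map Prod.snd).map (Prod.map τ id) =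
      (κ.map Prod.snd).map Prod.snd := by
    conv_rhs => rw [← h3]
    simp only [Measure.map_map (by fun_prop : Measurable (Prod.snd : Y × Y × W × W → _))
      (by fun_prop : Measurable (Prod.map (id : Y → Y) (Prod.map (id : Y → Y)
        (Prod.map τ (id : W → W)))))]
    rw [Measure.map_map (by fun_prop) (by fun_prop), Measure.map_map (by fun_prop) (by fun_prop),
      Measure.map_map (by fun_prop) (by fun_prop)]
    rfl
  have e4 : (((κ.map Prod.snd).map Prod.snd).map Prod.snd).map τ =
      ((κ.map Prod.snd).map Prod.snd).map Prod.snd := by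
    conv_rhs => rw [← h4]
    rw [Measure.map_map (by fun_prop) (by fun_prop), Measure.map_map (by fun_prop) (by fun_prop),
      Measure.map_map (by fun_prop) (by fun_prop), Measure.map_map (by fun_prop) (by fun_prop),
      Measure.map_map (by fun_prop) (by fun_prop), Measure.map_map (by fun_prop) (by fun_prop)]
    rfl
  rw [aux_split ρY σ hσ hY κ h1, aux_split ρY σ hσ hY _ e2, aux_split ρW τ hτ hW _ e3,
    hW _ p3 ⟨hτ, e4⟩]

end helpers3

/-- for the product of two strictly ergodic systems, the cube
`Q_{σ×id, id×τ}(Y × W)` is the explicit set of parallelograms, the cube system is uniquely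
ergodic with unique invariant measure `ν_{σ×id, id×τ}` (where `ν = ρ_Y ⊗ ρ_W`), and under
`((y,w),(y′,w),(y,w′),(y′,w′)) ↦ (y,y′,w,w′)` that measure corresponds to
`ρ_Y ⊗ ρ_Y ⊗ ρ_W ⊗ ρ_W`. -/
theorem cube_of_product_uniquely_ergodic
    {Y : Type*} [MetricSpace Y] [CompactSpace Y] [MeasurableSpace Y] [BorelSpace Y]
    {W : Type*} [MetricSpace W] [CompactSpace W] [MeasurableSpace W] [BorelSpace W]
    (σ : Y ≃ₜ Y) (τ : W ≃ₜ W)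
    (ρY : Measure Y) (ρW : Measure W)
    (hYmin : ∀ y y' : Y, y' ∈ closure {z | ∃ i : ℤ, z = (σ.toEquiv ^ i) y})
    (hρY : IsProbabilityMeasure ρY) (hρYinv : MeasurePreserving ⇑σ ρY ρY)
    (hYuniq : ∀ ν : Measure Y, IsProbabilityMeasure ν → MeasurePreserving ⇑σ ν ν → ν = ρY)
    (hWmin : ∀ w w' : W, w' ∈ closure {z | ∃ j : ℤ, z = (τ.toEquiv ^ j) w})
    (hρW : IsProbabilityMeasure ρW) (hρWinv : MeasurePreserving ⇑τ ρW ρW)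
    (hWuniq : ∀ ν : Measure W, IsProbabilityMeasure ν → MeasurePreserving ⇑τ ν ν → ν = ρW)
    -- ν_{σ×id} and ν_{σ×id, id×τ}, the joinings of ν = ρY ⊗ ρW
    (νS : Measure ((Y × W) × (Y × W)))
    (hνS : IsRelIndJoining (ρY.prod ρW) ⇑(σ.prodCongr (Homeomorph.refl W)) νS)
    (νST : Measure ((Y × W) × (Y × W) × (Y × W) × (Y × W)))
    (hνST : IsHostJoining νS ⇑((Homeomorph.refl Y).prodCongr τ) νST) :
    -- the cube is the set of parallelograms
    cubeQ (σ.prodCongr (Homeomorph.refl W)) ((Homeomorph.refl Y).prodCongr τ) =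
      {q : (Y × W) × (Y × W) × (Y × W) × (Y × W) | ∃ (y y' : Y) (w w' : W),
        q = ((y, w), (y', w), (y, w'), (y', w'))} ∧
    -- the cube system is uniquely ergodic with unique invariant measure ν_{σ×id, id×τ}
    IsProbabilityMeasure νST ∧
    νST (cubeQ (σ.prodCongr (Homeomorph.refl W)) ((Homeomorph.refl Y).prodCongr τ))ᶜ = 0 ∧
    (∀ g ∈ GST (σ.prodCongr (Homeomorph.refl W)).toEquiv
        ((Homeomorph.refl Y).prodCongr τ).toEquiv,
      ∀ s : Set ((Y × W) × (Y × W) × (Y × W) × (Y × W)),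
        MeasurableSet s → νST (⇑g ⁻¹' s) = νST s) ∧
    (∀ lam : Measure ((Y × W) × (Y × W) × (Y × W) × (Y × W)),
      IsProbabilityMeasure lam →
      lam (cubeQ (σ.prodCongr (Homeomorph.refl W)) ((Homeomorph.refl Y).prodCongr τ))ᶜ = 0 →
      (∀ g ∈ GST (σ.prodCongr (Homeomorph.refl W)).toEquiv
          ((Homeomorph.refl Y).prodCongr τ).toEquiv,
        ∀ s : Set ((Y × W) × (Y × W) × (Y × W) × (Y × W)),
          MeasurableSet s → lam (⇑g ⁻¹' s) = lam s) →
      lam = νST) ∧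
    -- under (y,y',w,w') coordinates the unique measure is ρY ⊗ ρY ⊗ ρW ⊗ ρW
    Measure.map (fun q : (Y × W) × (Y × W) × (Y × W) × (Y × W) =>
        (q.1.1, q.2.1.1, q.1.2, q.2.2.1.2)) νST =
      ρY.prod (ρY.prod (ρW.prod ρW)) := by
  have mσ : Measurable σ := σ.continuous.measurable
  have mτ : Measurable τ := τ.continuous.measurable
  have mσ' : Measurable σ.symm := σ.symm.continuous.measurable
  have mτ' : Measurable τ.symm := τ.symm.continuous.measurable
  have ergY := aux_zero_one ρY σ hρYinv hYuniq
  have ergW := aux_zero_one ρW τ hρWinv hWuniq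
  have hS := aux_nuS σ ρY ρW ergY _ (fun _ _ => rfl) νS hνS
  have hST := aux_nuST τ ρY ρW ergW _ (fun _ _ => rfl) νS hS νST hνST
  have hQ := aux_cube σ τ hYmin hWmin
  have hQc : IsClosed (cubeQ (σ.prodCongr (Homeomorph.refl W)) ((Homeomorph.refl Y).prodCongr τ)) :=
    isClosed_closure
  have hQm := hQc.measurableSet
  have hP : IsProbabilityMeasure νST := by
    rw [hST]; exact Measure.isProbabilityMeasure_map aux_meas_Phi.aemeasurable
  have i1 : MeasurePreserving (id : Y → Y) ρY ρY := MeasurePreserving.id _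
  have i2 : MeasurePreserving (id : W → W) ρW ρW := MeasurePreserving.id _
  refine ⟨hQ, hP, ?_, ?_, ?_, ?_⟩
  · rw [hST, Measure.map_apply aux_meas_Phi hQm.compl]
    convert measure_empty (μ := ρY.prod (ρY.prod (ρW.prod ρW)))
    ext q
    simp only [Set.mem_preimage, Set.mem_compl_iff, Set.mem_empty_iff_false, iff_false, not_not, hQ]
    exact ⟨_, _, _, _, rfl⟩
  · intro g hg s hs
    have hle : GST (σ.prodCongr (Homeomorph.refl W)).toEquiv
        ((Homeomorph.refl Y).prodCongr τ).toEquiv ≤ auxPres νST := by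
      rw [hST]
      apply aux_GST_le
      · refine aux_mem_pres _ _ aux_meas_Phi _ ?_ ?_ (Prod.map id (Prod.map σ (Prod.map id id)))
          (i1.prod (hρYinv.prod (i2.prod i2))) (fun _ => rfl)
        · change Measurable (Prod.map id (Prod.map (Prod.map σ id) (Prod.map id (Prod.map σ id))))
          fun_prop
        · change Measurable (Prod.map id (Prod.map (Prod.map σ.symm id)
            (Prod.map id (Prod.map σ.symm id))))
          fun_prop
      · refine aux_mem_pres _ _ aux_meas_Phi _ ?_ ?_ (Prod.map id (Prod.map id (Prod.map id τ)))
          (i1.prod (i1.prod (i2.prod hρWinv))) (fun _ => rfl)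
        · change Measurable (Prod.map id (Prod.map id (Prod.map (Prod.map id τ) (Prod.map id τ))))
          fun_prop
        · change Measurable (Prod.map id (Prod.map id
            (Prod.map (Prod.map id τ.symm) (Prod.map id τ.symm))))
          fun_prop
      · refine aux_mem_pres _ _ aux_meas_Phi _ ?_ ?_ (Prod.map σ (Prod.map σ (Prod.map id id)))
          (hρYinv.prod (hρYinv.prod (i2.prod i2))) (fun _ => rfl)
        · change Measurable (Prod.map (Prod.map σ id) (Prod.map (Prod.map σ id)
            (Prod.map (Prod.map σ id) (Prod.map σ id))))
          fun_prop
        · change Measurable (Prod.map (Prod.map σ.symm id) (Prod.map (Prod.map σ.symm id)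
            (Prod.map (Prod.map σ.symm id) (Prod.map σ.symm id))))
          fun_prop
      · refine aux_mem_pres _ _ aux_meas_Phi _ ?_ ?_ (Prod.map id (Prod.map id (Prod.map τ τ)))
          (i1.prod (i1.prod (hρWinv.prod hρWinv))) (fun _ => rfl)
        · change Measurable (Prod.map (Prod.map id τ) (Prod.map (Prod.map id τ)
            (Prod.map (Prod.map id τ) (Prod.map id τ))))
          fun_prop
        · change Measurable (Prod.map (Prod.map id τ.symm) (Prod.map (Prod.map id τ.symm)
            (Prod.map (Prod.map id τ.symm) (Prod.map id τ.symm))))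
          fun_prop
    exact (hle hg).1.measure_preimage hs.nullMeasurableSet
  · intro lam hlam hsupp hinv
    have hpr : IsProbabilityMeasure (lam.map auxPr) :=
      Measure.isProbabilityMeasure_map aux_meas_Pr.aemeasurable
    have hback : lam = (lam.map auxPr).map auxPhi := by
      rw [Measure.map_map aux_meas_Phi aux_meas_Pr]
      conv_lhs => rw [← Measure.map_id (μ := lam)]
      apply Measure.map_congr
      have : ∀ᵐ q ∂lam, q ∈ cubeQ (σ.prodCongr (Homeomorph.refl W))
        ((Homeomorph.refl Y).prodCongr τ) := hsupp
      filter_upwards [this] with q hq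
      rw [hQ] at hq
      obtain ⟨y, y', w, w', rfl⟩ := hq
      rfl
    have hmap : ∀ g ∈ GST (σ.prodCongr (Homeomorph.refl W)).toEquiv
          ((Homeomorph.refl Y).prodCongr τ).toEquiv, ∀ h : Y × Y × W × W → Y × Y × W × W,
          Measurable h → (∀ q, auxPr (g q) = h (auxPr q)) →
          (lam.map auxPr).map h = lam.map auxPr := by
      intro g hg h hh hc
      ext s hs
      rw [Measure.map_apply hh hs, Measure.map_apply aux_meas_Pr (hh hs),
        Measure.map_apply aux_meas_Pr hs, ← hinv g hg _ (aux_meas_Pr hs)]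
      congr 1
      ext q
      simp [hc]
    have g1 : sideS (σ.prodCongr (Homeomorph.refl W)).toEquiv ∈
        GST (σ.prodCongr (Homeomorph.refl W)).toEquiv ((Homeomorph.refl Y).prodCongr τ).toEquiv :=
      Subgroup.subset_closure (Or.inl (Or.inl rfl))
    have g2 : sideT ((Homeomorph.refl Y).prodCongr τ).toEquiv ∈
        GST (σ.prodCongr (Homeomorph.refl W)).toEquiv ((Homeomorph.refl Y).prodCongr τ).toEquiv :=
      Subgroup.subset_closure (Or.inl (Or.inr rfl))
    have g3 : diag4 (σ.prodCongr (Homeomorph.refl W)).toEquiv ∈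
        GST (σ.prodCongr (Homeomorph.refl W)).toEquiv ((Homeomorph.refl Y).prodCongr τ).toEquiv :=
      Subgroup.subset_closure (Or.inr ⟨_, Subgroup.subset_closure (Or.inl rfl), rfl⟩)
    have g4 : diag4 ((Homeomorph.refl Y).prodCongr τ).toEquiv ∈
        GST (σ.prodCongr (Homeomorph.refl W)).toEquiv ((Homeomorph.refl Y).prodCongr τ).toEquiv :=
      Subgroup.subset_closure (Or.inr ⟨_, Subgroup.subset_closure (Or.inr rfl), rfl⟩)
    have hκ := aux_unique4 σ τ ρY ρW mσ mτ hYuniq hWuniq (lam.map auxPr)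
      (hmap _ (mul_mem g3 (inv_mem g1)) _ (by fun_prop) (fun q =>
        Prod.ext rfl (Prod.ext (σ.apply_symm_apply _) rfl)))
      (hmap _ g1 _ (by fun_prop) (fun q => rfl))
      (hmap _ (mul_mem g4 (inv_mem g2)) _ (by fun_prop) (fun q =>
        Prod.ext rfl (Prod.ext rfl (Prod.ext rfl (τ.apply_symm_apply _)))))
      (hmap _ g2 _ (by fun_prop) (fun q => rfl))
    rw [hback, hκ, hST]
  · change Measure.map auxPr νST = _
    rw [hST, Measure.map_map aux_meas_Pr aux_meas_Phi]
    exact Measure.map_id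
end
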